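/- Let 1 < c < 37/18 with c ≠ 2. Then for all real x with |x| ≤ τ one has S(x) = I(x) + O(X·exp(−(log X)^{1/5})), where the implied constant depends only on c and η. -/

import Mathlib

open MeasureTheory

noncomputable def e (t : ℝ) : ℂ := Complex.exp (2 * Real.pi * Complex.I * t)

/-- The exponential sum `S(x) = Σ_{X/2 < p ≤ X} (log p) e(p^c x)` over primes. -/
noncomputable def S (X c : ℝ) (x : ℝ) : ℂ :=
  ∑ p ∈ (Finset.range (⌈X⌉₊ + 1)).filter
      (fun p : ℕ => p.Prime ∧ X / 2 < (p : ℝ) ∧ (p : ℝ) ≤ X),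
    (Real.log p : ℂ) * e ((p : ℝ) ^ c * x)

/-- The integral `I(x) = ∫_{X/2}^X e(t^c x) dt`. -/
noncomputable def I (X c : ℝ) (x : ℝ) : ℂ := ∫ t in (X / 2)..X, e (t ^ c * x)

/-!
Put `T = |x| X ^ c`. While `T` is at most `exp ((log X) ^ (1 / 4))`, partial summation compares `S`
with `I` at the cost of a factor `1 + T`, which the error term `X exp (-ν √(log X))` of the prime
number theorem absorbs. That error term comes from the classical zero-free region
`σ > 1 - κ / log (|t| + 2)`: the contour of the Perron integral for the Riesz mean of `Λ` is moved
into it, and the Riesz mean is then differenced.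

For larger `T` both `S` and `I` are small. Integration by parts gives `I ≪ X / T`, and
Vaughan's identity reduces `S` to sums of type I and type II, to which the Kusmin–Landau inequality
and van der Corput's second derivative bound apply; they save a fixed power of `T` as long as
`T ≤ X ^ (1 - η)`, which is what `|x| ≤ τ` says.
-/

/-! ## The Kusmin–Landau inequality -/

namespace PrimeExpSum

open Finset Real

lemma norm_e (t : ℝ) : ‖e t‖ = 1 := by
  have h : (2 * π * Complex.I * t : ℂ) = (2 * π * t : ℝ) * Complex.I := by push_cast; ring
  rw [e, h, Complex.norm_exp_ofReal_mul_I]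

lemma e_add (s t : ℝ) : e (s + t) = e s * e t := by
  rw [e, e, e, ← Complex.exp_add]
  congr 1
  push_cast
  ring

lemma e_intCast (j : ℤ) : e j = 1 := by
  rw [e, Complex.exp_eq_one_iff]
  exact ⟨j, by push_cast; ring⟩

lemma e_neg (t : ℝ) : e (-t) = (starRingEnd ℂ) (e t) := by
  rw [e, e, ← Complex.exp_conj]
  congr 1
  simp only [map_mul, map_ofNat, Complex.conj_I, Complex.conj_ofReal, Complex.ofReal_neg]
  ring

lemma norm_sum_e_le_card {ι : Type*} (s : Finset ι) (f : ι → ℝ) :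
    ‖∑ n ∈ s, e (f n)‖ ≤ #s :=
  (norm_sum_le _ _).trans (by simp only [norm_e, sum_const, nsmul_eq_mul, mul_one, le_refl])

lemma norm_e_sub_one (t : ℝ) : ‖e t - 1‖ = 2 * |sin (π * t)| := by
  have h : e t = Complex.exp (Complex.I * (2 * (π * t) : ℝ)) := by
    rw [e]; push_cast; ring_nf
  rw [h, Complex.norm_exp_I_mul_ofReal_sub_one, norm_mul, mul_div_cancel_left₀ _ two_ne_zero,
    Real.norm_two, Real.norm_eq_abs]

lemma e_ne_one {t : ℝ} (ht : sin (π * t) ≠ 0) : e t ≠ 1 := by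
  rw [← sub_ne_zero, ← norm_ne_zero_iff, norm_e_sub_one]
  positivity

lemma inv_e_sub_one {t : ℝ} (ht : sin (π * t) ≠ 0) :
    (e t - 1)⁻¹ = -1 / 2 - Complex.I / 2 * cot (π * t) := by
  have hexp : Complex.exp (2 * Complex.I * (π * t : ℝ)) = e t := by
    rw [e]; push_cast; ring_nf
  have h1 : e t - 1 ≠ 0 := sub_ne_zero.2 (e_ne_one ht)
  have h2 : 1 - e t ≠ 0 := sub_ne_zero.2 (e_ne_one ht).symm
  rw [Complex.ofReal_cot, Complex.cot_eq_exp_ratio, hexp]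
  field_simp
  ring

lemma two_mul_le_sin_pi_mul {t θ : ℝ} (hθ : 0 ≤ θ) (h₁ : θ ≤ t) (h₂ : t ≤ 1 - θ) :
    2 * θ ≤ sin (π * t) := by
  have key : ∀ u, θ ≤ u → u ≤ 1 / 2 → 2 * θ ≤ sin (π * u) := fun u hu hu' ↦ by
    have h := mul_le_sin (x := π * u) (mul_nonneg pi_pos.le (hθ.trans hu)) (by nlinarith [pi_pos])
    rw [← mul_assoc, div_mul_cancel₀ _ pi_ne_zero] at h
    linarith
  rcases le_total t (1 / 2) with ht | ht
  · exact key t h₁ ht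
  · rw [← sin_pi_sub, show π - π * t = π * (1 - t) by ring]
    exact key (1 - t) (by linarith) (by linarith)

lemma norm_inv_e_sub_one_le {t θ : ℝ} (hθ : 0 < θ) (h₁ : θ ≤ t) (h₂ : t ≤ 1 - θ) :
    ‖(e t - 1)⁻¹‖ ≤ 1 / (4 * θ) := by
  have hsin := two_mul_le_sin_pi_mul hθ.le h₁ h₂
  rw [norm_inv, norm_e_sub_one, abs_of_pos (by linarith), ← one_div]
  exact one_div_le_one_div_of_le (by positivity) (by linarith)

lemma antitoneOn_cot : AntitoneOn cot (Set.Ioo 0 π) := by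
  intro x hx y hy hxy
  have hsx := sin_pos_of_mem_Ioo hx
  have hsy := sin_pos_of_mem_Ioo hy
  have hsub : 0 ≤ sin (y - x) :=
    sin_nonneg_of_nonneg_of_le_pi (sub_nonneg.2 hxy) (by linarith [hx.1, hy.2])
  rw [sin_sub] at hsub
  rw [cot_eq_cos_div_sin, cot_eq_cos_div_sin, div_le_div_iff₀ hsy hsx]
  linarith

lemma abs_cot_pi_mul_le {t θ : ℝ} (hθ : 0 < θ) (h₁ : θ ≤ t) (h₂ : t ≤ 1 - θ) :
    |cot (π * t)| ≤ 1 / (2 * θ) := by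
  have hsin := two_mul_le_sin_pi_mul hθ.le h₁ h₂
  rw [cot_eq_cos_div_sin, abs_div, abs_of_pos (a := sin _) (by linarith)]
  exact div_le_div₀ zero_le_one (abs_cos_le_one _) (by positivity) hsin

lemma norm_inv_e_sub_one_sub {s t : ℝ} (hs : s ∈ Set.Ioo 0 1) (ht : t ∈ Set.Ioo 0 1)
    (hst : s ≤ t) :
    ‖(e t - 1)⁻¹ - (e s - 1)⁻¹‖ = (cot (π * s) - cot (π * t)) / 2 := by
  have hmem : ∀ u ∈ Set.Ioo (0 : ℝ) 1, π * u ∈ Set.Ioo 0 π := fun u hu ↦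
    ⟨mul_pos pi_pos hu.1, mul_lt_of_lt_one_right pi_pos hu.2⟩
  have hanti := antitoneOn_cot (hmem s hs) (hmem t ht) (by gcongr)
  have hsub : (e t - 1)⁻¹ - (e s - 1)⁻¹ =
      Complex.I * ((cot (π * s) - cot (π * t)) / 2 : ℝ) := by
    rw [inv_e_sub_one (sin_pos_of_mem_Ioo (hmem s hs)).ne',
      inv_e_sub_one (sin_pos_of_mem_Ioo (hmem t ht)).ne']
    push_cast
    ring
  rw [hsub, norm_mul, Complex.norm_I, one_mul, Complex.norm_real, norm_of_nonneg (by linarith)]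

lemma norm_sum_sub_mul_le {R : Type*} [SeminormedRing R] (u w : ℕ → R) (hu : ∀ n, ‖u n‖ ≤ 1)
    (k : ℕ) :
    ‖∑ n ∈ range (k + 1), (u (n + 1) - u n) * w n‖ ≤
      ‖w 0‖ + ‖w k‖ + ∑ n ∈ range k, ‖w (n + 1) - w n‖ := by
  have hmul : ∀ n v, ‖u n * v‖ ≤ ‖v‖ := fun n v ↦
    (norm_mul_le _ _).trans (mul_le_of_le_one_left (norm_nonneg _) (hu n))
  have hparts : ∑ n ∈ range (k + 1), (u (n + 1) - u n) * w n =
      u (k + 1) * w k - u 0 * w 0 - ∑ n ∈ range k, u (n + 1) * (w (n + 1) - w n) := by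
    induction k with
    | zero => simp only [zero_add, range_one, sum_singleton, range_zero, sum_empty, sub_mul,
        sub_zero]
    | succ k ih =>
      rw [sum_range_succ, ih, sum_range_succ _ k]
      simp only [sub_mul, mul_sub]
      abel
  rw [hparts]
  refine (norm_sub_le _ _).trans (add_le_add ?_ ?_)
  · rw [add_comm ‖w 0‖]
    exact (norm_sub_le _ _).trans (add_le_add (hmul _ _) (hmul _ _))
  · exact (norm_sum_le _ _).trans (sum_le_sum fun n _ ↦ hmul _ _)

lemma norm_sum_range_e_le_one_div (f : ℕ → ℝ) (k : ℕ) {θ : ℝ} (hθ : 0 < θ)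
    (hf : ∀ n ≤ k, f (n + 1) - f n ∈ Set.Icc θ (1 - θ))
    (hmono : ∀ n < k, f (n + 1) - f n ≤ f (n + 2) - f (n + 1)) :
    ‖∑ n ∈ range (k + 1), e (f n)‖ ≤ 1 / θ := by
  set g : ℕ → ℝ := fun n ↦ f (n + 1) - f n with hg
  have hg01 : ∀ n ≤ k, g n ∈ Set.Ioo 0 1 := fun n hn ↦
    ⟨hθ.trans_le (hf n hn).1, (hf n hn).2.trans_lt (by linarith)⟩
  have hsin : ∀ n ≤ k, sin (π * g n) ≠ 0 := fun n hn ↦ by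
    linarith [two_mul_le_sin_pi_mul hθ.le (hf n hn).1 (hf n hn).2] |> ne_of_gt
  have hterm : ∀ n ∈ range (k + 1), e (f n) = (e (f (n + 1)) - e (f n)) * (e (g n) - 1)⁻¹ := by
    intro n hn
    have hne : e (g n) - 1 ≠ 0 :=
      sub_ne_zero.2 (e_ne_one (hsin n (Nat.lt_succ_iff.1 (mem_range.1 hn))))
    rw [show f (n + 1) = f n + g n by rw [hg]; ring, e_add, ← mul_sub_one,
      mul_inv_cancel_right₀ hne]
  have hvar : ∑ n ∈ range k, ‖(e (g (n + 1)) - 1)⁻¹ - (e (g n) - 1)⁻¹‖ =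
      (cot (π * g 0) - cot (π * g k)) / 2 := by
    rw [sum_congr rfl fun n hn ↦ norm_inv_e_sub_one_sub (hg01 n (mem_range.1 hn).le)
      (hg01 (n + 1) (mem_range.1 hn)) (hmono n (mem_range.1 hn)), ← sum_div,
      sum_range_sub' (fun n ↦ cot (π * g n))]
  rw [sum_congr rfl hterm]
  refine (norm_sum_sub_mul_le _ _ (fun n ↦ (norm_e _).le) k).trans ?_
  have h0 := hf 0 (Nat.zero_le k)
  have hk := hf k le_rfl
  have hcot0 := (abs_le.1 (abs_cot_pi_mul_le hθ h0.1 h0.2)).2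
  have hcotk := (abs_le.1 (abs_cot_pi_mul_le hθ hk.1 hk.2)).1
  calc _ ≤ 1 / (4 * θ) + 1 / (4 * θ) + (1 / (2 * θ) - -(1 / (2 * θ))) / 2 := by
        rw [hvar]
        gcongr
        exacts [norm_inv_e_sub_one_le hθ h0.1 h0.2, norm_inv_e_sub_one_le hθ hk.1 hk.2]
    _ = 1 / θ := by field_simp; norm_num

theorem kusmin_landau (f : ℕ → ℝ) (a b : ℕ) {θ : ℝ} (hθ : 0 < θ) (j : ℤ)
    (hf : ∀ n, a ≤ n → n < b → f (n + 1) - f n ∈ Set.Icc (j + θ) (j + 1 - θ))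
    (hmono : ∀ n, a ≤ n → n + 1 < b → f (n + 1) - f n ≤ f (n + 2) - f (n + 1)) :
    ‖∑ n ∈ Ico a b, e (f n)‖ ≤ 1 / θ := by
  rcases le_or_gt b a with hab | hab
  · rw [Ico_eq_empty_of_le hab, sum_empty, norm_zero]
    positivity
  obtain ⟨k, rfl⟩ : ∃ k, b = a + (k + 1) := ⟨b - a - 1, by omega⟩
  have htwist : ∀ n, e (f (a + n)) = e (f (a + n) - j * n) := fun n ↦ by
    conv_lhs => rw [← sub_add_cancel (f (a + n)) (j * n), e_add]
    rw [show (j * n : ℝ) = ((j * n : ℤ) : ℝ) by push_cast; rfl, e_intCast, mul_one]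
  rw [sum_Ico_eq_sum_range, Nat.add_sub_cancel_left, sum_congr rfl fun n _ ↦ htwist n]
  refine norm_sum_range_e_le_one_div (fun n ↦ f (a + n) - j * n) k hθ (fun n hn ↦ ?_)
    fun n hn ↦ ?_
  · have h := hf (a + n) (by omega) (by omega)
    rw [Set.mem_Icc] at h ⊢
    push_cast
    constructor <;> grind
  · have h := hmono (a + n) (by omega) (by omega)
    push_cast
    grind

end PrimeExpSum

/-! ## Van der Corput's second derivative test -/

namespace PrimeExpSum

open Finset Real

section VanDerCorput

variable {f g : ℕ → ℝ} {a b : ℕ} {l : ℝ}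

lemma mul_le_sub_of_le_step {m n : ℕ} (hmn : m ≤ n)
    (h : ∀ k, m ≤ k → k < n → l ≤ g (k + 1) - g k) : l * (n - m : ℝ) ≤ g n - g m := by
  induction n, hmn using Nat.le_induction with
  | base => simp only [sub_self, mul_zero, le_refl]
  | succ n hmn ih =>
    have hn := h n hmn n.lt_succ_self
    have ih := ih fun k hk hk' ↦ h k hk (hk'.trans n.lt_succ_self)
    push_cast
    linarith

lemma sub_le_mul_of_step_le {m n : ℕ} (hmn : m ≤ n)
    (h : ∀ k, m ≤ k → k < n → g (k + 1) - g k ≤ l) : g n - g m ≤ l * (n - m : ℝ) := by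
  have := mul_le_sub_of_le_step (g := -g) (l := -l) hmn fun k hk hk' ↦ by
    have := h k hk hk'
    simp only [Pi.neg_apply]
    linarith
  simp only [Pi.neg_apply] at this
  linarith

lemma monotoneOn_of_nonneg_step (h : ∀ n, a ≤ n → n + 1 < b → 0 ≤ g (n + 1) - g n) :
    MonotoneOn g (Set.Ico a b) := fun m hm n hn hmn ↦ by
  have := mul_le_sub_of_le_step hmn fun k hk hk' ↦
    h k (hm.1.trans hk) (lt_of_le_of_lt (Nat.succ_le_of_lt hk') hn.2)
  linarith

lemma card_le_of_le_step (hl : 0 < l) (hg : ∀ n, a ≤ n → n + 1 < b → l ≤ g (n + 1) - g n)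
    {u w : ℝ} (hw : 0 ≤ w) {s : Finset ℕ} (hs : s ⊆ Ico a b)
    (hgs : ∀ n ∈ s, g n ∈ Set.Icc u (u + w)) : (#s : ℝ) ≤ w / l + 1 := by
  rcases s.eq_empty_or_nonempty with rfl | hne
  · rw [card_empty, Nat.cast_zero]
    positivity
  set m := s.min' hne
  set M := s.max' hne
  have hmM : m ≤ M := s.min'_le_max' hne
  have hma := mem_Ico.1 (hs (s.min'_mem hne))
  have hMb := mem_Ico.1 (hs (s.max'_mem hne))
  have hgap := mul_le_sub_of_le_step hmM fun k hk hk' ↦ hg k (by omega) (by omega)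
  have hlen : (M - m : ℝ) ≤ w / l := by
    rw [le_div_iff₀ hl]
    linarith [(hgs m (s.min'_mem hne)).1, (hgs M (s.max'_mem hne)).2]
  have hcard : (#s : ℝ) ≤ (M + 1 - m : ℕ) := by
    rw [← Nat.card_Icc]
    exact_mod_cast card_le_card fun n hn ↦ mem_Icc.2 ⟨s.min'_le n hn, s.le_max' n hn⟩
  rw [Nat.cast_sub (by omega)] at hcard
  push_cast at hcard
  linarith

lemma exists_filter_mem_Icc_eq_Ico (hg : MonotoneOn g (Set.Ico a b)) (u v : ℝ) :
    ∃ a' b', a ≤ a' ∧ b' ≤ b ∧ {n ∈ Ico a b | g n ∈ Set.Icc u v} = Ico a' b' := by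
  set s := {n ∈ Ico a b | g n ∈ Set.Icc u v}
  rcases s.eq_empty_or_nonempty with h | hne
  · exact ⟨a, 0, le_rfl, b.zero_le, by rw [h, Ico_eq_empty_of_le a.zero_le]⟩
  obtain ⟨hma, hmg⟩ := mem_filter.1 (s.min'_mem hne)
  obtain ⟨hMb, hMg⟩ := mem_filter.1 (s.max'_mem hne)
  rw [mem_Ico] at hma hMb
  refine ⟨s.min' hne, s.max' hne + 1, hma.1, hMb.2, ext fun n ↦ ⟨fun hn ↦ ?_, fun hn ↦ ?_⟩⟩
  · exact mem_Ico.2 ⟨s.min'_le n hn, Nat.lt_succ_of_le (s.le_max' n hn)⟩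
  · obtain ⟨hn₁, hn₂⟩ := mem_Ico.1 hn
    have hn : n ∈ Set.Ico a b := ⟨by omega, by omega⟩
    refine mem_filter.2 ⟨mem_Ico.2 hn, hmg.1.trans (hg hma hn hn₁), ?_⟩
    exact (hg hn hMb (Nat.lt_succ_iff.1 hn₂)).trans hMg.2

lemma norm_sum_e_filter_Icc_le
    (hf : ∀ n, a ≤ n → n + 1 < b → 0 ≤ (f (n + 2) - f (n + 1)) - (f (n + 1) - f n))
    {θ : ℝ} (hθ : 0 < θ) (j : ℤ) :
    ‖∑ n ∈ Ico a b with f (n + 1) - f n ∈ Set.Icc (j + θ) (j + 1 - θ), e (f n)‖ ≤ 1 / θ := by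
  obtain ⟨a', b', ha, hb, heq⟩ := exists_filter_mem_Icc_eq_Ico
    (monotoneOn_of_nonneg_step (g := fun n ↦ f (n + 1) - f n) hf) (j + θ) (j + 1 - θ)
  rw [heq]
  refine kusmin_landau f a' b' hθ j (fun n hn hn' ↦ ?_) fun n hn hn' ↦ ?_
  · have hmem : n ∈ Ico a' b' := mem_Ico.2 ⟨hn, hn'⟩
    rw [← heq] at hmem
    exact (mem_filter.1 hmem).2
  · exact sub_nonneg.1 (hf n (by omega) (by omega))

lemma norm_sum_e_floor_fiber_le (hl : 0 < l)
    (hf : ∀ n, a ≤ n → n + 1 < b → l ≤ (f (n + 2) - f (n + 1)) - (f (n + 1) - f n)) (j : ℤ) :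
    ‖∑ n ∈ Ico a b with ⌊f (n + 1) - f n⌋ = j, e (f n)‖ ≤ 3 / √l + 2 := by
  classical
  set μ := √l
  have hμ : 0 < μ := sqrt_pos.2 hl
  have hμl : μ / l = 1 / μ := by rw [sqrt_div_self, one_div]
  set g : ℕ → ℝ := fun n ↦ f (n + 1) - f n
  set s := {n ∈ Ico a b | ⌊g n⌋ = j}
  have hs : s ⊆ Ico a b := filter_subset _ _
  have hgs : ∀ n ∈ s, (j : ℝ) ≤ g n ∧ g n < j + 1 := fun n hn ↦
    Int.floor_eq_iff.1 (mem_filter.1 hn).2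
  set p : ℕ → Prop := fun n ↦ g n ∈ Set.Icc (j + μ) (j + 1 - μ)
  have hmid : ‖∑ n ∈ s with p n, e (f n)‖ ≤ 1 / μ := by
    have heq : s.filter p = {n ∈ Ico a b | p n} := by
      ext n
      simp only [s, p, mem_filter, Set.mem_Icc, Int.floor_eq_iff]
      exact ⟨fun h ↦ ⟨h.1.1, h.2⟩, fun h ↦ ⟨⟨h.1, by linarith [h.2.1], by linarith [h.2.2]⟩, h.2⟩⟩
    rw [heq]
    exact norm_sum_e_filter_Icc_le (fun n hn hn' ↦ hl.le.trans (hf n hn hn')) hμ j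
  have hlow : (#{n ∈ s | g n < j + μ} : ℝ) ≤ 1 / μ + 1 := by
    rw [← hμl]
    refine card_le_of_le_step (g := g) (u := j) hl hf hμ.le ((filter_subset _ _).trans hs)
      fun n hn ↦ ?_
    obtain ⟨hn, hlt⟩ := mem_filter.1 hn
    exact ⟨(hgs n hn).1, hlt.le⟩
  have hhigh : (#{n ∈ s | j + 1 - μ < g n} : ℝ) ≤ 1 / μ + 1 := by
    rw [← hμl]
    refine card_le_of_le_step (g := g) (u := j + 1 - μ) hl hf hμ.le
      ((filter_subset _ _).trans hs) fun n hn ↦ ?_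
    obtain ⟨hn, hlt⟩ := mem_filter.1 hn
    exact ⟨hlt.le, by linarith [(hgs n hn).2]⟩
  have hedge : (#{n ∈ s | ¬ p n} : ℝ) ≤ #{n ∈ s | g n < j + μ} + #{n ∈ s | j + 1 - μ < g n} := by
    have hsub : {n ∈ s | ¬ p n} ⊆ {n ∈ s | g n < j + μ} ∪ {n ∈ s | j + 1 - μ < g n} :=
      fun n hn ↦ by
        simp only [p, mem_union, mem_filter, Set.mem_Icc, not_and_or, not_le] at hn ⊢
        tauto
    exact_mod_cast (card_le_card hsub).trans (card_union_le _ _)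
  calc ‖∑ n ∈ s, e (f n)‖ = ‖∑ n ∈ s with p n, e (f n) + ∑ n ∈ s with ¬ p n, e (f n)‖ := by
        rw [sum_filter_add_sum_filter_not]
    _ ≤ 1 / μ + #{n ∈ s | ¬ p n} :=
        (norm_add_le _ _).trans (add_le_add hmid (norm_sum_e_le_card _ _))
    _ ≤ 1 / μ + (1 / μ + 1 + (1 / μ + 1)) := by linarith
    _ = 3 / μ + 2 := by ring

lemma card_Icc_floor_le (x y : ℝ) (hxy : x ≤ y) : (#(Icc ⌊x⌋ ⌊y⌋) : ℝ) ≤ y - x + 2 := by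
  have hcast : ((#(Icc ⌊x⌋ ⌊y⌋) : ℤ) : ℝ) = ⌊y⌋ + 1 - ⌊x⌋ := by
    have := Int.floor_le_floor hxy
    rw [Int.card_Icc, Int.toNat_of_nonneg (by linarith)]
    push_cast
    rfl
  rw [Int.cast_natCast] at hcast
  linarith [Int.floor_le y, Int.lt_floor_add_one x]

lemma norm_sum_e_le_of_second_diff_le_one {h : ℝ} (hl : 0 < l) (hl1 : l ≤ 1) (hh : 0 ≤ h)
    (hab : a ≤ b)
    (hlow : ∀ n, a ≤ n → n + 1 < b → l ≤ (f (n + 2) - f (n + 1)) - (f (n + 1) - f n))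
    (hhigh : ∀ n, a ≤ n → n + 1 < b → (f (n + 2) - f (n + 1)) - (f (n + 1) - f n) ≤ h * l) :
    ‖∑ n ∈ Ico a b, e (f n)‖ ≤ (h * l * (b - a) + 2) * (5 / √l) := by
  rcases hab.eq_or_lt with rfl | hab
  · rw [Ico_self, sum_empty, norm_zero, sub_self]
    positivity
  obtain ⟨k, rfl⟩ : ∃ k, b = k + 1 := ⟨b - 1, by omega⟩
  set g : ℕ → ℝ := fun n ↦ f (n + 1) - f n
  have hmono : MonotoneOn g (Set.Ico a (k + 1)) :=
    monotoneOn_of_nonneg_step fun n hn hn' ↦ hl.le.trans (hlow n hn hn')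
  have hak : a ≤ k := Nat.lt_succ_iff.1 hab
  have ha : a ∈ Set.Ico a (k + 1) := ⟨le_rfl, hab⟩
  have hk : k ∈ Set.Ico a (k + 1) := ⟨hak, k.lt_succ_self⟩
  have hmaps : ∀ n ∈ Ico a (k + 1), ⌊g n⌋ ∈ Icc ⌊g a⌋ ⌊g k⌋ := fun n hn ↦ by
    rw [mem_Ico] at hn
    exact mem_Icc.2 ⟨Int.floor_le_floor (hmono ha hn hn.1),
      Int.floor_le_floor (hmono hn hk (Nat.lt_succ_iff.1 hn.2))⟩
  have hcard : (#(Icc ⌊g a⌋ ⌊g k⌋) : ℝ) ≤ h * l * ((k + 1 : ℕ) - a) + 2 := by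
    have hstep : g k - g a ≤ h * l * (k - a) := sub_le_mul_of_step_le hak fun n hn hn' ↦
      hhigh n hn (by omega)
    have hhl : 0 ≤ h * l := by positivity
    push_cast
    linarith [card_Icc_floor_le _ _ (hmono ha hk hak)]
  have hfib : 3 / √l + 2 ≤ 5 / √l := by
    have : 1 ≤ 1 / √l := one_le_one_div (sqrt_pos.2 hl) (sqrt_le_one.2 hl1)
    calc 3 / √l + 2 ≤ 3 / √l + 2 * (1 / √l) := by linarith
      _ = 5 / √l := by ring
  calc ‖∑ n ∈ Ico a (k + 1), e (f n)‖
      = ‖∑ j ∈ Icc ⌊g a⌋ ⌊g k⌋, ∑ n ∈ Ico a (k + 1) with ⌊g n⌋ = j, e (f n)‖ := by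
        rw [sum_fiberwise_of_maps_to hmaps]
    _ ≤ ∑ _j ∈ Icc ⌊g a⌋ ⌊g k⌋, 5 / √l := (norm_sum_le _ _).trans
        (sum_le_sum fun j _ ↦ (norm_sum_e_floor_fiber_le hl hlow j).trans hfib)
    _ ≤ (h * l * ((k + 1 : ℕ) - a) + 2) * (5 / √l) := by
        rw [sum_const, nsmul_eq_mul]
        gcongr

theorem van_der_corput {h : ℝ} (hl : 0 < l) (hh : 0 ≤ h) (hab : a ≤ b)
    (hlow : ∀ n, a ≤ n → n + 1 < b → l ≤ (f (n + 2) - f (n + 1)) - (f (n + 1) - f n))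
    (hhigh : ∀ n, a ≤ n → n + 1 < b → (f (n + 2) - f (n + 1)) - (f (n + 1) - f n) ≤ h * l) :
    ‖∑ n ∈ Ico a b, e (f n)‖ ≤ (5 * h + 1) * (b - a) * √l + 10 / √l := by
  have hlen : (0 : ℝ) ≤ b - a := sub_nonneg.2 (by exact_mod_cast hab)
  rcases le_or_gt l 1 with hl1 | hl1
  · calc _ ≤ (h * l * (b - a) + 2) * (5 / √l) :=
          norm_sum_e_le_of_second_diff_le_one hl hl1 hh hab hlow hhigh
      _ = 5 * h * (b - a) * (l / √l) + 10 / √l := by ring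
      _ = 5 * h * (b - a) * √l + 10 / √l := by rw [div_sqrt]
      _ ≤ _ := by gcongr; linarith
  · calc _ ≤ (#(Ico a b) : ℝ) := norm_sum_e_le_card _ _
      _ = 1 * (b - a) * 1 := by rw [Nat.card_Ico, Nat.cast_sub hab, one_mul, mul_one]
      _ ≤ (5 * h + 1) * (b - a) * √l := by
        gcongr
        exacts [by linarith, one_le_sqrt.2 hl1.le]
      _ ≤ _ := le_add_of_nonneg_right (by positivity)

end VanDerCorput

section Monomial

variable {c : ℝ}

lemma exists_second_diff_rpow_eq (c : ℝ) {t : ℝ} (ht : 0 < t) :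
    ∃ z ∈ Set.Icc t (t + 2), ((t + 2) ^ c - (t + 1) ^ c) - ((t + 1) ^ c - t ^ c) =
      c * (c - 1) * z ^ (c - 2) := by
  have hd : ∀ p : ℝ, ∀ u > 0, HasDerivAt (fun u : ℝ ↦ u ^ p) (p * u ^ (p - 1)) u := fun p u hu ↦
    hasDerivAt_rpow_const (Or.inl hu.ne')
  have hdiff : ∀ u > 0, HasDerivAt (fun u : ℝ ↦ (u + 1) ^ c - u ^ c)
      (c * (u + 1) ^ (c - 1) - c * u ^ (c - 1)) u := fun u hu ↦
    ((hd c (u + 1) (by linarith)).comp_add_const u 1).sub (hd c u hu)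
  obtain ⟨x, hx, hx'⟩ := exists_hasDerivAt_eq_slope _ _ (lt_add_one t)
    (fun u hu ↦ (hdiff u (ht.trans_le hu.1)).continuousAt.continuousWithinAt)
    fun u hu ↦ hdiff u (ht.trans hu.1)
  have hx0 : 0 < x := ht.trans hx.1
  obtain ⟨z, hz, hz'⟩ := exists_hasDerivAt_eq_slope _ _ (lt_add_one x)
    (fun u hu ↦ (hd (c - 1) u (hx0.trans_le hu.1)).continuousAt.continuousWithinAt)
    fun u hu ↦ hd (c - 1) u (hx0.trans hu.1)
  refine ⟨z, ⟨(hx.1.trans hz.1).le, by linarith [hz.2, hx.2]⟩, ?_⟩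
  rw [add_sub_cancel_left, div_one] at hx' hz'
  rw [show t + 2 = t + 1 + 1 by ring, ← hx', ← mul_sub, ← hz', mul_assoc,
    show c - 1 - 1 = c - 2 by ring]

lemma rpow_mem_Icc_rpow_abs {r B : ℝ} (a : ℝ) (h₁ : 1 ≤ r) (h₂ : r ≤ B) :
    r ^ a ∈ Set.Icc (B ^ (-|a|)) (B ^ |a|) := by
  have hr : 0 < r := by linarith
  constructor
  · calc B ^ (-|a|) ≤ r ^ (-|a|) := rpow_le_rpow_of_nonpos hr h₂ (neg_nonpos.2 (abs_nonneg a))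
      _ ≤ r ^ a := rpow_le_rpow_of_exponent_le h₁ (neg_abs_le a)
  · calc r ^ a ≤ r ^ |a| := rpow_le_rpow_of_exponent_le h₁ (le_abs_self a)
      _ ≤ B ^ |a| := rpow_le_rpow hr.le h₂ (abs_nonneg a)

lemma exists_second_diff_rpow_mem_Icc (hc : 1 < c) : ∃ k > (0 : ℝ), ∃ h ≥ (0 : ℝ), ∀ A > 0, ∀ t ≥ A,
    t + 2 ≤ 8 * A → ((t + 2) ^ c - (t + 1) ^ c) - ((t + 1) ^ c - t ^ c) ∈
      Set.Icc (k * A ^ (c - 2)) (h * (k * A ^ (c - 2))) := by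
  have : 0 < c * (c - 1) := mul_pos (by linarith) (by linarith)
  refine ⟨c * (c - 1) * 8 ^ (-|c - 2|), by positivity, 8 ^ |c - 2| * 8 ^ |c - 2|, by positivity,
    fun A hA t ht ht' ↦ ?_⟩
  obtain ⟨z, ⟨hz₁, hz₂⟩, hz⟩ := exists_second_diff_rpow_eq c (hA.trans_le ht)
  have hratio := rpow_mem_Icc_rpow_abs (c - 2) (r := z / A) (B := 8)
    (by rw [le_div_iff₀ hA]; linarith) (by rw [div_le_iff₀ hA]; linarith)
  rw [Set.mem_Icc, div_rpow (by linarith) hA.le, le_div_iff₀ (by positivity),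
    div_le_iff₀ (by positivity)] at hratio
  rw [hz]
  constructor
  · rw [mul_assoc]
    gcongr
    exact hratio.1
  · have hcancel : (8 : ℝ) ^ |c - 2| * 8 ^ (-|c - 2|) = 1 := by
      rw [← rpow_add (by norm_num), add_neg_cancel, rpow_zero]
    calc c * (c - 1) * z ^ (c - 2) ≤ c * (c - 1) * (8 ^ |c - 2| * A ^ (c - 2)) := by
          gcongr
          exact hratio.2
      _ = 8 ^ |c - 2| * 8 ^ |c - 2| * (c * (c - 1) * 8 ^ (-|c - 2|) * A ^ (c - 2)) := by
          linear_combination -(c * (c - 1) * 8 ^ |c - 2| * A ^ (c - 2)) * hcancel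

lemma exists_norm_sum_e_mul_rpow_le_of_pos (hc : 1 < c) : ∃ C > 0, ∀ (A y : ℝ) (a b : ℕ),
    0 < A → 0 < y → A ≤ a → b ≤ 8 * A →
    ‖∑ n ∈ Ico a b, e (y * (n : ℝ) ^ c)‖ ≤ C * (√(y * A ^ c) + A / √(y * A ^ c)) := by
  obtain ⟨k, hk, h, hh, hdiff⟩ := exists_second_diff_rpow_mem_Icc hc
  refine ⟨(5 * h + 1) * 8 * √k + 10 / √k, by positivity, fun A y a b hA hy haA hbA ↦ ?_⟩
  set F := √(y * A ^ c)
  have hF : 0 < F := sqrt_pos.2 (by positivity)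
  rcases le_or_gt b a with hab | hab
  · rw [Ico_eq_empty_of_le hab, sum_empty, norm_zero]
    positivity
  set l := y * (k * A ^ (c - 2)) with hl
  have hl0 : 0 < l := by positivity
  have hsqrt : √l = √k * F / A := by
    have hA2 : A ^ (c - 2) = A ^ c / A ^ 2 := by
      rw [rpow_sub hA, rpow_ofNat]
    rw [hl, hA2, show y * (k * (A ^ c / A ^ 2)) = k * (y * A ^ c) / A ^ 2 by ring,
      sqrt_div (by positivity), sqrt_mul hk.le, sqrt_sq hA.le]
  have hbounds : ∀ n : ℕ, a ≤ n → n + 1 < b →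
      (y * ((n + 2 : ℕ) : ℝ) ^ c - y * ((n + 1 : ℕ) : ℝ) ^ c) -
        (y * ((n + 1 : ℕ) : ℝ) ^ c - y * (n : ℝ) ^ c) ∈ Set.Icc l (h * l) := by
    intro n hn hn'
    have hn2 : (n : ℝ) + 2 ≤ b := by exact_mod_cast hn'
    obtain ⟨hlow, hhigh⟩ := hdiff A hA n (haA.trans (by exact_mod_cast hn)) (hn2.trans hbA)
    push_cast
    rw [← mul_sub, ← mul_sub, ← mul_sub, hl]
    exact ⟨by gcongr, by rw [mul_left_comm h]; gcongr⟩
  calc _ ≤ (5 * h + 1) * (b - a) * √l + 10 / √l := van_der_corput hl0 hh hab.le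
        (fun n hn hn' ↦ (hbounds n hn hn').1) fun n hn hn' ↦ (hbounds n hn hn').2
    _ ≤ (5 * h + 1) * (8 * A) * √l + 10 / √l := by gcongr; linarith
    _ = (5 * h + 1) * 8 * √k * F + 10 / √k * (A / F) := by rw [hsqrt]; field_simp
    _ ≤ ((5 * h + 1) * 8 * √k + 10 / √k) * F + ((5 * h + 1) * 8 * √k + 10 / √k) * (A / F) := by
        gcongr
        exacts [le_add_of_nonneg_right (by positivity), le_add_of_nonneg_left (by positivity)]
    _ = _ := (mul_add _ _ _).symm

theorem exists_norm_sum_e_mul_rpow_le (hc : 1 < c) : ∃ C > 0, ∀ (A y : ℝ) (a b : ℕ),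
    0 < A → y ≠ 0 → A ≤ a → b ≤ 8 * A →
    ‖∑ n ∈ Ico a b, e (y * (n : ℝ) ^ c)‖ ≤ C * (√(|y| * A ^ c) + A / √(|y| * A ^ c)) := by
  obtain ⟨C, hC, hpos⟩ := exists_norm_sum_e_mul_rpow_le_of_pos hc
  refine ⟨C, hC, fun A y a b hA hy haA hbA ↦ ?_⟩
  rcases lt_or_gt_of_ne hy with hy | hy
  · have hconj : ‖∑ n ∈ Ico a b, e (y * (n : ℝ) ^ c)‖ =
        ‖∑ n ∈ Ico a b, e (-y * (n : ℝ) ^ c)‖ := by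
      simp_rw [neg_mul, e_neg, ← map_sum, Complex.norm_conj]
    rw [hconj, abs_of_neg hy]
    exact hpos A (-y) a b hA (neg_pos.2 hy) haA hbA
  · rw [abs_of_pos hy]
    exact hpos A y a b hA hy haA hbA

end Monomial

end PrimeExpSum

/-! ## Bilinear sums over `X / 2 < d * m ≤ X` -/

namespace PrimeExpSum

open Finset Real
open scoped ComplexConjugate

lemma sum_range_one_div_sqrt_le (n : ℕ) : ∑ k ∈ range (n + 1), 1 / √(k : ℝ) ≤ 2 * √n := by
  induction n with
  | zero => simp
  | succ n ih =>
    have hpos : 0 < √((n + 1 : ℕ) : ℝ) := sqrt_pos.2 (by positivity)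
    have hsq : √((n + 1 : ℕ) : ℝ) * √((n + 1 : ℕ) : ℝ) = n + 1 := by
      rw [mul_self_sqrt (by positivity), Nat.cast_succ]
    have hsq' : √(n : ℝ) * √n = n := mul_self_sqrt n.cast_nonneg
    have hstep : 1 / √((n + 1 : ℕ) : ℝ) ≤ 2 * √((n + 1 : ℕ) : ℝ) - 2 * √n := by
      rw [div_le_iff₀ hpos]
      nlinarith [sq_nonneg (√((n + 1 : ℕ) : ℝ) - √n)]
    rw [sum_range_succ]
    linarith

lemma sum_one_div_sqrt_le_of_injOn {s : Finset ℕ} {g : ℕ → ℕ} {n : ℕ} (hg : Set.InjOn g s)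
    (hn : ∀ j ∈ s, g j ≤ n) : ∑ j ∈ s, 1 / √(g j : ℝ) ≤ 2 * √n := by
  rw [← sum_image (f := fun k : ℕ ↦ 1 / √(k : ℝ)) hg]
  refine (sum_le_sum_of_subset_of_nonneg (fun k hk ↦ ?_) fun _ _ _ ↦ by positivity).trans
    (sum_range_one_div_sqrt_le n)
  obtain ⟨j, hj, rfl⟩ := mem_image.1 hk
  exact mem_range_succ_iff.2 (hn j hj)

lemma sum_Ioc_one_div_sqrt_abs_sub_le {p q d n : ℕ} (hp : p ≤ d) (hq : d ≤ q) (hn : q ≤ p + n) :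
    ∑ j ∈ Ioc p q, 1 / √|(d : ℝ) - j| ≤ 4 * √n := by
  have hleft : ∑ j ∈ Ioc p d, 1 / √|(d : ℝ) - j| ≤ 2 * √n := by
    refine (sum_congr rfl fun j hj ↦ ?_).trans_le
      (sum_one_div_sqrt_le_of_injOn (g := fun j ↦ d - j) (fun i hi j hj hij ↦ ?_) fun j hj ↦ ?_)
    · rw [Nat.cast_sub (mem_Ioc.1 hj).2,
        abs_of_nonneg (sub_nonneg.2 (Nat.cast_le.2 (mem_Ioc.1 hj).2))]
    all_goals simp only [coe_Ioc, Set.mem_Ioc, mem_Ioc] at *; omega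
  have hright : ∑ j ∈ Ioc d q, 1 / √|(d : ℝ) - j| ≤ 2 * √n := by
    refine (sum_congr rfl fun j hj ↦ ?_).trans_le
      (sum_one_div_sqrt_le_of_injOn (g := fun j ↦ j - d) (fun i hi j hj hij ↦ ?_) fun j hj ↦ ?_)
    · rw [Nat.cast_sub (mem_Ioc.1 hj).1.le, abs_sub_comm,
        abs_of_nonneg (sub_nonneg.2 (Nat.cast_le.2 (mem_Ioc.1 hj).1.le))]
    all_goals simp only [coe_Ioc, Set.mem_Ioc, mem_Ioc] at *; omega
  rw [← sum_Ioc_consecutive _ hp hq]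
  linarith

lemma norm_sum_mul_sub_le_of_monotone {f : ℕ → ℝ} (hf : Monotone f) {z : ℕ → ℂ} {M : ℝ}
    {a b : ℕ} (hab : a ≤ b) (hM : ∀ a' ≥ a, ‖∑ n ∈ Ico a' b, z n‖ ≤ M) :
    ‖∑ n ∈ Ico a b, (f n : ℂ) * z n - f a * ∑ n ∈ Ico a b, z n‖ ≤ (f b - f a) * M := by
  induction hab using Nat.decreasingInduction with
  | self => simp
  | of_succ k hk ih =>
    have hstep : 0 ≤ f (k + 1) - f k := sub_nonneg.2 (hf k.le_succ)
    rw [sum_eq_sum_Ico_succ_bot hk, sum_eq_sum_Ico_succ_bot hk]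
    set Z := ∑ n ∈ Ico (k + 1) b, z n
    set W := ∑ n ∈ Ico (k + 1) b, (f n : ℂ) * z n
    have hWZ : ‖W - f (k + 1) * Z‖ ≤ (f b - f (k + 1)) * M :=
      ih fun a' ha' ↦ hM a' (k.le_succ.trans ha')
    calc ‖f k * z k + W - f k * (z k + Z)‖
        = ‖(W - f (k + 1) * Z) + ((f (k + 1) - f k : ℝ) : ℂ) * Z‖ := by
          push_cast
          ring_nf
      _ ≤ ‖W - f (k + 1) * Z‖ + (f (k + 1) - f k) * ‖Z‖ := by
          refine (norm_add_le _ _).trans_eq ?_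
          rw [norm_mul, Complex.norm_of_nonneg hstep]
      _ ≤ (f b - f (k + 1)) * M + (f (k + 1) - f k) * M := by
          gcongr
          exact hM _ k.le_succ
      _ = (f b - f k) * M := by ring

lemma norm_sum_mul_le_of_monotone {f : ℕ → ℝ} (hf : Monotone f) {z : ℕ → ℂ} {M : ℝ} {a b : ℕ}
    (hf0 : 0 ≤ f) (hM : ∀ a' ≥ a, ‖∑ n ∈ Ico a' b, z n‖ ≤ M) :
    ‖∑ n ∈ Ico a b, (f n : ℂ) * z n‖ ≤ f b * M := by
  have hMa := hM a le_rfl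
  rcases le_or_gt b a with hab | hab
  · rw [Ico_eq_empty_of_le hab, sum_empty, norm_zero] at hMa ⊢
    exact mul_nonneg (hf0 b) hMa
  · have hdiff := norm_sum_mul_sub_le_of_monotone hf hab.le hM
    calc _ ≤ ‖∑ n ∈ Ico a b, (f n : ℂ) * z n - f a * ∑ n ∈ Ico a b, z n‖
          + ‖f a * ∑ n ∈ Ico a b, z n‖ := by
          refine (norm_add_le _ _).trans' (le_of_eq ?_)
          rw [sub_add_cancel]
      _ ≤ (f b - f a) * M + f a * M := by
          rw [norm_mul, Complex.norm_of_nonneg (hf0 a)]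
          gcongr
          exact hf0 a
      _ = f b * M := by ring

/-- The integers `m` with `X / 2 < d * m ≤ X`, when `0 ≤ X` and `0 < d`. Bilinear sums over
`X / 2 < n ≤ X` are organised by fixing one divisor `d` of `n = d * m`. -/
noncomputable def cofactors (X : ℝ) (d : ℕ) : Finset ℕ := Ico (⌊X / 2 / d⌋₊ + 1) (⌊X / d⌋₊ + 1)

lemma mem_cofactors {X : ℝ} (hX : 0 ≤ X) {d m : ℕ} (hd : 0 < d) :
    m ∈ cofactors X d ↔ X / 2 < d * m ∧ (d * m : ℝ) ≤ X := by
  have hd' : (0 : ℝ) < d := Nat.cast_pos.2 hd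
  rw [cofactors, mem_Ico, Nat.succ_le_iff, Nat.lt_succ_iff, Nat.floor_lt (by positivity),
    Nat.le_floor_iff (by positivity), div_lt_iff₀ hd', le_div_iff₀ hd', mul_comm (m : ℝ)]

lemma sum_cofactors_one_mul {X : ℝ} (hX : 0 ≤ X) (α β : ArithmeticFunction ℝ) (φ : ℕ → ℂ) :
    ∑ n ∈ cofactors X 1, (((α * β) n : ℝ) : ℂ) * φ n =
      ∑ d ∈ Ioc 0 ⌊X⌋₊, (α d : ℂ) * ∑ m ∈ cofactors X d, (β m : ℂ) * φ (d * m) := by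
  simp_rw [ArithmeticFunction.mul_apply, Complex.ofReal_sum, sum_mul, mul_sum]
  rw [sum_sigma', sum_sigma']
  refine sum_bij' (fun p _ ↦ ⟨p.2.1, p.2.2⟩) (fun q _ ↦ ⟨q.1 * q.2, (q.1, q.2)⟩) ?_ ?_ ?_ ?_ ?_
  · rintro ⟨n, d, m⟩ h
    simp only [mem_sigma, Nat.mem_divisorsAntidiagonal, mem_Ioc, mem_cofactors hX one_pos] at h ⊢
    obtain ⟨hn, rfl, hdm⟩ := h
    have hd : 0 < d := Nat.pos_of_ne_zero (left_ne_zero_of_mul hdm)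
    have hm : (1 : ℝ) ≤ m := Nat.one_le_cast.2 (Nat.pos_of_ne_zero (right_ne_zero_of_mul hdm))
    push_cast at hn
    rw [one_mul] at hn
    exact ⟨⟨hd, Nat.le_floor ((le_mul_of_one_le_right d.cast_nonneg hm).trans hn.2)⟩,
      (mem_cofactors hX hd).2 hn⟩
  · rintro ⟨d, m⟩ h
    simp only [mem_sigma, Nat.mem_divisorsAntidiagonal, mem_Ioc] at h ⊢
    have hdm := (mem_cofactors hX h.1.1).1 h.2
    refine ⟨(mem_cofactors hX one_pos).2 (by push_cast; rwa [one_mul]), trivial, fun h0 ↦ ?_⟩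
    have h0' : (d : ℝ) * m = 0 := by exact_mod_cast h0
    linarith [hdm.1]
  · rintro ⟨n, d, m⟩ h
    simp only [mem_sigma, Nat.mem_divisorsAntidiagonal] at h
    simp [h.2.1]
  · rintro ⟨d, m⟩ -
    rfl
  · rintro ⟨n, d, m⟩ h
    simp only [mem_sigma, Nat.mem_divisorsAntidiagonal] at h
    simp only [Complex.ofReal_mul, ← h.2.1]
    ring

/-- The oscillating factor `e (x * n ^ c)` of the exponential sums `∑ a n * e (x * n ^ c)`. -/
noncomputable def phase (c x : ℝ) (n : ℕ) : ℂ := e (x * (n : ℝ) ^ c)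

lemma norm_phase (c x : ℝ) (n : ℕ) : ‖phase c x n‖ = 1 := norm_e _

lemma phase_mul_conj_phase (c x : ℝ) (d d' m : ℕ) :
    phase c x (d * m) * conj (phase c x (d' * m)) =
      e (x * ((d : ℝ) ^ c - (d' : ℝ) ^ c) * (m : ℝ) ^ c) := by
  unfold phase
  rw [← e_neg, ← e_add]
  congr 1
  push_cast
  rw [mul_rpow (by positivity) (by positivity), mul_rpow (by positivity) (by positivity)]
  ring

lemma rpow_sub_rpow_bounds {c D a b : ℝ} (hc : 1 ≤ c) (hD : 0 < D) (ha : D ≤ a)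
    (hb : b ≤ 2 * D) (hab : a ≤ b) :
    c * D ^ (c - 1) * (b - a) ≤ b ^ c - a ^ c ∧
      b ^ c - a ^ c ≤ c * (2 * D) ^ (c - 1) * (b - a) := by
  have hderiv (t : ℝ) : HasDerivAt (fun t : ℝ ↦ t ^ c) (c * t ^ (c - 1)) t :=
    hasDerivAt_rpow_const (Or.inr hc)
  have hdiff : Differentiable ℝ fun t : ℝ ↦ t ^ c := fun t ↦ (hderiv t).differentiableAt
  have hmono {s t : ℝ} (hs : 0 ≤ s) (hst : s ≤ t) : c * s ^ (c - 1) ≤ c * t ^ (c - 1) := by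
    gcongr
  have haI : a ∈ Set.Icc D (2 * D) := ⟨ha, hab.trans hb⟩
  have hbI : b ∈ Set.Icc D (2 * D) := ⟨ha.trans hab, hb⟩
  constructor
  · refine (convex_Icc D (2 * D)).mul_sub_le_image_sub_of_le_deriv hdiff.continuous.continuousOn
      hdiff.differentiableOn (fun t ht ↦ ?_) a haI b hbI hab
    rw [(hderiv t).deriv]
    exact hmono hD.le (interior_subset ht).1
  · refine (convex_Icc D (2 * D)).image_sub_le_mul_sub_of_deriv_le hdiff.continuous.continuousOn
      hdiff.differentiableOn (fun t ht ↦ ?_) a haI b hbI hab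
    rw [(hderiv t).deriv]
    exact hmono (hD.le.trans (interior_subset ht).1) (interior_subset ht).2

lemma abs_rpow_sub_rpow_bounds {c D a b : ℝ} (hc : 1 ≤ c) (hD : 0 < D) (ha : a ∈ Set.Icc D (2 * D))
    (hb : b ∈ Set.Icc D (2 * D)) :
    c * D ^ (c - 1) * |a - b| ≤ |a ^ c - b ^ c| ∧
      |a ^ c - b ^ c| ≤ c * (2 * D) ^ (c - 1) * |a - b| := by
  wlog hab : a ≤ b generalizing a b
  · rw [abs_sub_comm a, abs_sub_comm (a ^ c)]
    exact this hb ha (le_of_not_ge hab)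
  have hpow : a ^ c ≤ b ^ c := rpow_le_rpow (hD.le.trans ha.1) hab (zero_le_one.trans hc)
  rw [abs_sub_comm a, abs_sub_comm (a ^ c), abs_of_nonneg (sub_nonneg.2 hab),
    abs_of_nonneg (sub_nonneg.2 hpow)]
  exact rpow_sub_rpow_bounds hc hD ha.1 hb.2 hab

lemma abs_mul_rpow_cofactor_bounds {c X D x d d' : ℝ} (hc : 1 ≤ c) (hX : 0 < X) (hD : 0 < D)
    (hd : d ∈ Set.Icc D (2 * D)) (hd' : d' ∈ Set.Icc D (2 * D)) :
    c / 4 ^ c * (|x| * X ^ c * |d - d'| / D) ≤ |x * (d ^ c - d' ^ c)| * (X / (4 * D)) ^ c ∧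
      |x * (d ^ c - d' ^ c)| * (X / (4 * D)) ^ c ≤ c * (|x| * X ^ c) := by
  have hc0 : 0 < c := by linarith
  obtain ⟨hlow, hupp⟩ := abs_rpow_sub_rpow_bounds hc hD hd hd'
  have hDc : D ^ c = D ^ (c - 1) * D := by rw [← rpow_add_one hD.ne', sub_add_cancel]
  have hquot : (X / (4 * D)) ^ c = X ^ c / (4 ^ c * (D ^ (c - 1) * D)) := by
    rw [div_rpow hX.le (by positivity), mul_rpow (by norm_num) hD.le, hDc]
  rw [abs_mul, hquot]
  constructor
  · calc c / 4 ^ c * (|x| * X ^ c * |d - d'| / D)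
        = |x| * (c * D ^ (c - 1) * |d - d'|) * (X ^ c / (4 ^ c * (D ^ (c - 1) * D))) := by
          field_simp
      _ ≤ _ := by gcongr
  · have hdd : |d - d'| ≤ D := abs_le.2 ⟨by linarith [hd.1, hd'.2], by linarith [hd.2, hd'.1]⟩
    have htwo : (2 : ℝ) ^ (c - 1) ≤ 4 ^ c :=
      (rpow_le_rpow_of_exponent_le one_le_two (by linarith)).trans
        (rpow_le_rpow zero_le_two (by norm_num) hc0.le)
    calc |x| * |d ^ c - d' ^ c| * (X ^ c / (4 ^ c * (D ^ (c - 1) * D)))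
        ≤ |x| * (c * (2 * D) ^ (c - 1) * D) * (X ^ c / (4 ^ c * (D ^ (c - 1) * D))) := by
          gcongr
          exact hupp.trans (by gcongr)
      _ = c * (|x| * X ^ c) * (2 ^ (c - 1) / 4 ^ c) := by
          rw [mul_rpow zero_le_two hD.le]
          field_simp
      _ ≤ c * (|x| * X ^ c) :=
          mul_le_of_le_one_right (by positivity) ((div_le_one (by positivity)).2 htwo)

lemma cofactors_endpoints_bounds {X D : ℝ} {d : ℕ} (hX : 0 < X) (hD : 0 < D)
    (hd : (d : ℝ) ∈ Set.Ioc D (2 * D)) (hDX : 4 * D ≤ X) :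
    X / (4 * D) ≤ ((⌊X / 2 / d⌋₊ + 1 : ℕ) : ℝ) ∧ ((⌊X / d⌋₊ + 1 : ℕ) : ℝ) ≤ 8 * (X / (4 * D)) := by
  have hd0 : (0 : ℝ) < d := hD.trans hd.1
  have hK : 1 ≤ X / (4 * D) := by rwa [one_le_div (by positivity)]
  push_cast
  constructor
  · refine le_trans ?_ (Nat.lt_floor_add_one (X / 2 / d)).le
    rw [div_div]
    exact div_le_div_of_nonneg_left hX.le (by positivity) (by linarith [hd.2])
  · have hfloor : (⌊X / d⌋₊ : ℝ) ≤ X / d := Nat.floor_le (by positivity)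
    have hXd : X / d ≤ X / D := div_le_div_of_nonneg_left hX.le hD hd.1.le
    have h4 : X / D = 4 * (X / (4 * D)) := by field_simp
    linarith

lemma exists_norm_sum_phase_mul_conj_le {c : ℝ} (hc : 1 < c) : ∃ C > 0, ∀ (X x D : ℝ) (d d' : ℕ),
    0 < X → x ≠ 0 → 0 < D → 4 * D ≤ X → (d : ℝ) ∈ Set.Ioc D (2 * D) →
    (d' : ℝ) ∈ Set.Ioc D (2 * D) → d ≠ d' →
    ‖∑ m ∈ cofactors X d ∩ cofactors X d', phase c x (d * m) * conj (phase c x (d' * m))‖ ≤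
      C * (√(|x| * X ^ c) + X / √D / √(|x| * X ^ c) * (1 / √|(d : ℝ) - d'|)) := by
  obtain ⟨C, hC, hsum⟩ := exists_norm_sum_e_mul_rpow_le hc
  have hc0 : 0 < c := by linarith
  refine ⟨C * (√c + √(4 ^ c) / √c), by positivity, fun X x D d d' hX hx hD hDX hd hd' hne ↦ ?_⟩
  obtain ⟨hlow, hupp⟩ := abs_mul_rpow_cofactor_bounds (x := x) hc.le hX hD
    (Set.Ioc_subset_Icc_self hd) (Set.Ioc_subset_Icc_self hd')
  set Δ := |(d : ℝ) - d'|
  set y := x * ((d : ℝ) ^ c - (d' : ℝ) ^ c)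
  set T := |x| * X ^ c
  set K := X / (4 * D) with hK
  have hΔ : 0 < Δ := abs_pos.2 (sub_ne_zero.2 (Nat.cast_injective.ne hne))
  have hT : 0 < T := by positivity
  have hyK : 0 < |y| * K ^ c := lt_of_lt_of_le (by positivity) hlow
  have hy : y ≠ 0 := fun h ↦ by simp [h] at hyK
  simp_rw [phase_mul_conj_phase, cofactors, Ico_inter_Ico]
  refine (hsum K y _ _ (by positivity) hy ?_ ?_).trans ?_
  · exact (cofactors_endpoints_bounds hX hD hd hDX).1.trans (Nat.cast_le.2 (le_max_left _ _))
  · exact (Nat.cast_le.2 (min_le_left _ _)).trans (cofactors_endpoints_bounds hX hD hd hDX).2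
  have hfirst : √(|y| * K ^ c) ≤ √c * √T := by
    rw [← sqrt_mul hc0.le]
    exact sqrt_le_sqrt hupp
  have hsecond : K / √(|y| * K ^ c) ≤ √(4 ^ c) / √c * (X / √D / √T * (1 / √Δ)) := by
    calc K / √(|y| * K ^ c) ≤ K / √(c / 4 ^ c * (T * Δ / D)) := by gcongr
      _ = 1 / 4 * (√(4 ^ c) / √c * (X / √D / √T * (1 / √Δ))) := by
          rw [hK, sqrt_mul (by positivity), sqrt_div hc0.le, sqrt_div (by positivity),
            sqrt_mul hT.le]
          field_simp
          rw [sq_sqrt hD.le]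
      _ ≤ _ := mul_le_of_le_one_left (by positivity) (by norm_num)
  calc _ ≤ C * (√c * √T + √(4 ^ c) / √c * (X / √D / √T * (1 / √Δ))) := by gcongr
    _ ≤ C * ((√c + √(4 ^ c) / √c) * (√T + X / √D / √T * (1 / √Δ))) := by
        gcongr
        rw [add_mul]
        gcongr
        · exact le_add_of_nonneg_right (by positivity)
        · exact le_add_of_nonneg_left (by positivity)
    _ = _ := by ring

lemma sum_mul_sum_eq_sum_indicator {ι κ : Type*} [DecidableEq κ] {B : Finset ι} {M : Finset κ}
    {J : ι → Finset κ} (hJ : ∀ d ∈ B, J d ⊆ M) (a : ι → ℂ) (β : κ → ℂ) (φ : ι → κ → ℂ) :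
    ∑ d ∈ B, a d * ∑ m ∈ J d, β m * φ d m =
      ∑ m ∈ M, β m * ∑ d ∈ B, if m ∈ J d then a d * φ d m else 0 := by
  simp_rw [mul_sum]
  rw [sum_comm]
  refine sum_congr rfl fun d hd ↦ ?_
  simp_rw [mul_ite, mul_zero]
  rw [← sum_filter, filter_mem_eq_inter, inter_eq_right.2 (hJ d hd)]
  exact sum_congr rfl fun m _ ↦ mul_left_comm _ _ _

lemma sum_sq_norm_sum_indicator_le {ι κ : Type*} [DecidableEq κ] {B : Finset ι} {M : Finset κ}
    {J : ι → Finset κ} (hJ : ∀ d ∈ B, J d ⊆ M) {a : ι → ℂ} (ha : ∀ d ∈ B, ‖a d‖ ≤ 1)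
    (φ : ι → κ → ℂ) :
    ∑ m ∈ M, ‖∑ d ∈ B, if m ∈ J d then a d * φ d m else 0‖ ^ 2 ≤
      ∑ d ∈ B, ∑ d' ∈ B, ‖∑ m ∈ J d ∩ J d', φ d m * conj (φ d' m)‖ := by
  set G : κ → ℂ := fun m ↦ ∑ d ∈ B, if m ∈ J d then a d * φ d m else 0
  have hexpand : ((∑ m ∈ M, ‖G m‖ ^ 2 : ℝ) : ℂ) = ∑ d ∈ B, ∑ d' ∈ B, a d * conj (a d') *
      ∑ m ∈ J d ∩ J d', φ d m * conj (φ d' m) := by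
    simp_rw [Complex.ofReal_sum, Complex.ofReal_pow, ← Complex.mul_conj', G, map_sum,
      sum_mul_sum, mul_sum]
    rw [sum_comm]
    refine sum_congr rfl fun d hd ↦ ?_
    rw [sum_comm]
    refine sum_congr rfl fun d' _ ↦ ?_
    rw [← inter_eq_right.2 (inter_subset_left.trans (hJ d hd) : J d ∩ J d' ⊆ M),
      ← filter_mem_eq_inter, sum_filter]
    refine sum_congr rfl fun m _ ↦ ?_
    by_cases hm : m ∈ J d <;> by_cases hm' : m ∈ J d' <;> simp [hm, hm', mul_mul_mul_comm]
  rw [← Complex.norm_of_nonneg (by positivity : 0 ≤ ∑ m ∈ M, ‖G m‖ ^ 2), hexpand]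
  refine norm_sum_le_of_le _ fun d hd ↦ norm_sum_le_of_le _ fun d' hd' ↦ ?_
  rw [norm_mul, norm_mul, RCLike.norm_conj]
  exact mul_le_of_le_one_left (norm_nonneg _) (mul_le_one₀ (ha d hd) (norm_nonneg _) (ha d' hd'))

lemma sq_norm_sum_mul_sum_le {ι κ : Type*} [DecidableEq κ] {B : Finset ι} {M : Finset κ}
    {J : ι → Finset κ} (hJ : ∀ d ∈ B, J d ⊆ M) {a : ι → ℂ} (ha : ∀ d ∈ B, ‖a d‖ ≤ 1)
    {β : κ → ℂ} {L : ℝ} (hβ : ∀ m ∈ M, ‖β m‖ ≤ L) (φ : ι → κ → ℂ) :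
    ‖∑ d ∈ B, a d * ∑ m ∈ J d, β m * φ d m‖ ^ 2 ≤
      #M * L ^ 2 * ∑ d ∈ B, ∑ d' ∈ B, ‖∑ m ∈ J d ∩ J d', φ d m * conj (φ d' m)‖ := by
  rw [sum_mul_sum_eq_sum_indicator hJ]
  set G : κ → ℂ := fun m ↦ ∑ d ∈ B, if m ∈ J d then a d * φ d m else 0
  have hL : ∑ m ∈ M, ‖β m‖ ^ 2 ≤ #M * L ^ 2 := by
    refine (sum_le_card_nsmul _ _ (L ^ 2) fun m hm ↦ ?_).trans_eq (nsmul_eq_mul _ _)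
    exact pow_le_pow_left₀ (norm_nonneg _) (hβ m hm) 2
  calc ‖∑ m ∈ M, β m * G m‖ ^ 2 ≤ (∑ m ∈ M, ‖β m‖ * ‖G m‖) ^ 2 := by
        gcongr
        exact norm_sum_le_of_le _ fun m _ ↦ norm_mul_le _ _
    _ ≤ (∑ m ∈ M, ‖β m‖ ^ 2) * ∑ m ∈ M, ‖G m‖ ^ 2 := sum_mul_sq_le_sq_mul_sq _ _ _
    _ ≤ _ := by
        gcongr
        exact sum_sq_norm_sum_indicator_le hJ ha φ

lemma mem_Ioc_floor_iff {D : ℝ} (hD : 0 ≤ D) {d : ℕ} :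
    d ∈ Ioc ⌊D⌋₊ ⌊2 * D⌋₊ ↔ (d : ℝ) ∈ Set.Ioc D (2 * D) := by
  rw [mem_Ioc, Nat.floor_lt hD, Nat.le_floor_iff (by positivity), Set.mem_Ioc]

lemma cofactors_subset_Ioc {X D : ℝ} {d : ℕ} (hX : 0 ≤ X) (hD : 0 < D) (hd : D < d) :
    cofactors X d ⊆ Ioc 0 ⌊X / D⌋₊ := by
  intro m hm
  have hdm := (mem_cofactors hX (Nat.cast_pos.1 (hD.trans hd))).1 hm
  have hm0 : m ≠ 0 := by
    rintro rfl
    simp only [Nat.cast_zero, mul_zero] at hdm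
    linarith [hdm.1]
  rw [mem_Ioc, Nat.le_floor_iff (by positivity), le_div_iff₀ hD, mul_comm]
  exact ⟨Nat.pos_of_ne_zero hm0, (mul_le_mul_of_nonneg_right hd.le m.cast_nonneg).trans hdm.2⟩

lemma card_Ioc_zero_floor_le {K : ℝ} (hK : 0 ≤ K) : (#(Ioc 0 ⌊K⌋₊) : ℝ) ≤ K := by
  rw [Nat.card_Ioc, tsub_zero]
  exact Nat.floor_le hK

lemma exists_sum_norm_sum_phase_mul_conj_le {c : ℝ} (hc : 1 < c) :
    ∃ C > 0, ∀ (X x D : ℝ) (d : ℕ), 0 < X → x ≠ 0 → 0 < D → 4 * D ≤ X →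
    d ∈ Ioc ⌊D⌋₊ ⌊2 * D⌋₊ →
    ∑ d' ∈ Ioc ⌊D⌋₊ ⌊2 * D⌋₊,
        ‖∑ m ∈ cofactors X d ∩ cofactors X d', phase c x (d * m) * conj (phase c x (d' * m))‖ ≤
      X / D + C * (D * √(|x| * X ^ c) + X / √(|x| * X ^ c)) := by
  obtain ⟨C, hC, hpair⟩ := exists_norm_sum_phase_mul_conj_le hc
  refine ⟨8 * C, by positivity, fun X x D d hX hx hD hDX hd ↦ ?_⟩
  set B := Ioc ⌊D⌋₊ ⌊2 * D⌋₊ with hB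
  set T := |x| * X ^ c
  have hdD := (mem_Ioc_floor_iff hD.le).1 hd
  have hcard : (#B : ℝ) ≤ 2 * D :=
    (Nat.cast_le.2 (card_le_card (Ioc_subset_Ioc_left (Nat.zero_le _)))).trans
      (card_Ioc_zero_floor_le (by positivity))
  have hcorr : ∀ d' ∈ B, ‖∑ m ∈ cofactors X d ∩ cofactors X d',
      phase c x (d * m) * conj (phase c x (d' * m))‖ ≤ (if d = d' then X / D else 0) +
        C * (√T + X / √D / √T * (1 / √|(d : ℝ) - d'|)) := by
    intro d' hd'
    split_ifs with hdd
    · refine le_add_of_le_of_nonneg ?_ (by positivity)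
      simp_rw [phase_mul_conj_phase]
      exact (norm_sum_e_le_card _ _).trans ((Nat.cast_le.2 (card_le_card (inter_subset_left.trans
        (cofactors_subset_Ioc hX.le hD hdD.1)))).trans (card_Ioc_zero_floor_le (by positivity)))
    · rw [zero_add]
      exact hpair X x D d d' hX hx hD hDX hdD ((mem_Ioc_floor_iff hD.le).1 hd') hdd
  have hsqrt : ∑ d' ∈ B, 1 / √|(d : ℝ) - d'| ≤ 8 * √D := by
    have hmem := mem_Ioc.1 hd
    have hroot : √(#B : ℝ) ≤ 2 * √D := by
      rw [sqrt_le_left (by positivity), mul_pow, sq_sqrt hD.le]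
      linarith
    refine (sum_Ioc_one_div_sqrt_abs_sub_le hmem.1.le hmem.2 (n := #B) ?_).trans (by linarith)
    rw [hB, Nat.card_Ioc]
    omega
  calc _ ≤ ∑ d' ∈ B, ((if d = d' then X / D else 0) +
        C * (√T + X / √D / √T * (1 / √|(d : ℝ) - d'|))) := sum_le_sum hcorr
    _ = X / D + C * (#B * √T + X / √D / √T * ∑ d' ∈ B, 1 / √|(d : ℝ) - d'|) := by
        rw [sum_add_distrib, sum_ite_eq, if_pos hd, ← mul_sum, sum_add_distrib, ← mul_sum,
          sum_const, nsmul_eq_mul]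
    _ ≤ X / D + C * (2 * D * √T + X / √D / √T * (8 * √D)) := by gcongr
    _ = X / D + C * (2 * (D * √T) + 8 * (X / √T)) := by field_simp
    _ ≤ X / D + C * (8 * (D * √T) + 8 * (X / √T)) := by gcongr; norm_num
    _ = _ := by ring

lemma sum_mul_sum_cofactors_eq_zero {X D v : ℝ} (hX : 0 ≤ X) (hD : 0 < D) (hv : 0 < v)
    (hXDv : X ≤ D * v) {β : ℕ → ℂ} (hβ : ∀ m : ℕ, (m : ℝ) ≤ v → β m = 0) (a : ℕ → ℂ)
    (φ : ℕ → ℂ) :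
    ∑ d ∈ Ioc ⌊D⌋₊ ⌊2 * D⌋₊, a d * ∑ m ∈ cofactors X d, β m * φ (d * m) = 0 := by
  refine sum_eq_zero fun d hd ↦ ?_
  have hdD := ((mem_Ioc_floor_iff hD.le).1 hd).1
  rw [sum_eq_zero fun m hm ↦ ?_, mul_zero]
  have hdm := (mem_cofactors hX (Nat.cast_pos.1 (hD.trans hdD))).1 hm
  rw [hβ m (not_lt.1 fun hvm ↦ ?_), zero_mul]
  have : D * v < d * m := mul_lt_mul'' hdD hvm hD.le hv.le
  linarith [hdm.2]

lemma exists_sq_norm_typeII_le {c : ℝ} (hc : 1 < c) :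
    ∃ C > 0, ∀ (X x D v L : ℝ) (a β : ℕ → ℂ), 0 < X → x ≠ 0 → 1 ≤ D → 4 ≤ v →
    (∀ d, ‖a d‖ ≤ 1) → (∀ m : ℕ, (m : ℝ) ≤ X → ‖β m‖ ≤ L) →
    (∀ m : ℕ, (m : ℝ) ≤ v → β m = 0) →
    ‖∑ d ∈ Ioc ⌊D⌋₊ ⌊2 * D⌋₊, a d * ∑ m ∈ cofactors X d, β m * phase c x (d * m)‖ ^ 2 ≤
      C * (X * L) ^ 2 * (1 / D + √(|x| * X ^ c) / v + 1 / √(|x| * X ^ c)) := by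
  obtain ⟨C, hC, hcorr⟩ := exists_sum_norm_sum_phase_mul_conj_le hc
  refine ⟨2 + 2 * C, by positivity, fun X x D v L a β hX hx hD hv ha hβ hβ0 ↦ ?_⟩
  have hD0 : 0 < D := by linarith
  have hv0 : 0 < v := by linarith
  set T := |x| * X ^ c
  have hT : 0 < T := by positivity
  set B := Ioc ⌊D⌋₊ ⌊2 * D⌋₊
  rcases le_or_gt X (D * v) with hXDv | hXDv
  · rw [sum_mul_sum_cofactors_eq_zero hX.le hD0 hv0 hXDv hβ0, norm_zero, sq, zero_mul]
    positivity
  have hDX : 4 * D ≤ X := by nlinarith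
  have hcard : (#B : ℝ) ≤ 2 * D :=
    (Nat.cast_le.2 (card_le_card (Ioc_subset_Ioc_left (Nat.zero_le _)))).trans
      (card_Ioc_zero_floor_le (by positivity))
  have hβM : ∀ m ∈ Ioc 0 ⌊X / D⌋₊, ‖β m‖ ≤ L := fun m hm ↦
    hβ m (((Nat.le_floor_iff (by positivity)).1 (mem_Ioc.1 hm).2).trans (div_le_self hX.le hD))
  have hCS := sq_norm_sum_mul_sum_le (B := B) (fun d hd ↦ cofactors_subset_Ioc hX.le hD0
    ((mem_Ioc_floor_iff hD0.le).1 hd).1) (fun d _ ↦ ha d) hβM fun d m ↦ phase c x (d * m)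
  have hDX' : D / X ≤ 1 / v := by
    rw [div_le_div_iff₀ hX hv0, one_mul]
    exact hXDv.le
  calc _ ≤ X / D * L ^ 2 * ∑ _d ∈ B, (X / D + C * (D * √T + X / √T)) := by
        refine hCS.trans ?_
        gcongr with _ hd
        · exact card_Ioc_zero_floor_le (by positivity)
        · exact hcorr X x D _ hX hx hD0 hDX hd
    _ ≤ X / D * L ^ 2 * (2 * D * (X / D + C * (D * √T + X / √T))) := by
        rw [sum_const, nsmul_eq_mul]
        gcongr
    _ = (X * L) ^ 2 * (2 * (1 / D) + 2 * C * (√T * (D / X) + 1 / √T)) := by field_simp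
    _ ≤ (X * L) ^ 2 * (2 * (1 / D) + 2 * C * (√T * (1 / v) + 1 / √T)) := by gcongr
    _ = (X * L) ^ 2 * (2 * (1 / D) + 2 * C * (√T / v + 1 / √T)) := by
        rw [mul_one_div (√T)]
    _ ≤ (X * L) ^ 2 * ((2 + 2 * C) * (1 / D + √T / v + 1 / √T)) := by
        have : 0 ≤ C * (1 / D) := by positivity
        have : 0 ≤ √T / v + 1 / √T := by positivity
        gcongr
        linarith
    _ = _ := by ring

end PrimeExpSum

/-! ## Vaughan's identity -/

namespace PrimeExpSum

open Finset Real
open scoped ArithmeticFunction.vonMangoldt ArithmeticFunction.Moebius ArithmeticFunction.zeta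

/-- The truncation `f_{≤ u}` of an arithmetic function: `f n` for `n ≤ u` and `0` for `n > u`.
Vaughan's identity is expressed through truncations of `μ` and `Λ`. -/
noncomputable def truncate (f : ArithmeticFunction ℝ) (u : ℝ) : ArithmeticFunction ℝ :=
  ⟨fun n ↦ if (n : ℝ) ≤ u then f n else 0, by simp⟩

lemma truncate_apply (f : ArithmeticFunction ℝ) (u : ℝ) (n : ℕ) :
    truncate f u n = if (n : ℝ) ≤ u then f n else 0 := rfl

lemma sub_truncate_apply (f : ArithmeticFunction ℝ) (u : ℝ) (n : ℕ) :
    (f - truncate f u) n = if (n : ℝ) ≤ u then 0 else f n := by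
  rw [sub_eq_add_neg, ArithmeticFunction.add_apply, ArithmeticFunction.neg_apply, truncate_apply]
  split_ifs <;> ring

lemma abs_truncate_le (f : ArithmeticFunction ℝ) (u : ℝ) (n : ℕ) : |truncate f u n| ≤ |f n| := by
  rw [truncate_apply]
  split_ifs <;> simp

lemma abs_sub_truncate_le (f : ArithmeticFunction ℝ) (u : ℝ) (n : ℕ) :
    |(f - truncate f u) n| ≤ |f n| := by
  rw [sub_truncate_apply]
  split_ifs <;> simp

lemma abs_realMoebius_le_one (n : ℕ) : |(μ : ArithmeticFunction ℝ) n| ≤ 1 := by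
  rw [ArithmeticFunction.intCoe_apply]
  exact_mod_cast ArithmeticFunction.abs_moebius_le_one

lemma vonMangoldt_eq_vaughan (u v : ℝ) :
    Λ = truncate Λ v + truncate μ u * ArithmeticFunction.log
      - (truncate μ u * truncate Λ v) * (ζ : ArithmeticFunction ℝ)
      + (μ - truncate μ u) * ((Λ - truncate Λ v) * (ζ : ArithmeticFunction ℝ)) := by
  have hμζ : (μ : ArithmeticFunction ℝ) * (ζ : ArithmeticFunction ℝ) = 1 :=
    ArithmeticFunction.coe_moebius_mul_coe_zeta
  rw [← ArithmeticFunction.vonMangoldt_mul_zeta]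
  linear_combination (-(Λ - truncate Λ v)) * hμζ

lemma abs_truncate_vonMangoldt_le (v : ℝ) (n : ℕ) : |truncate Λ v n| ≤ Λ n :=
  (abs_truncate_le Λ v n).trans_eq (abs_of_nonneg ArithmeticFunction.vonMangoldt_nonneg)

lemma abs_truncate_moebius_mul_truncate_vonMangoldt_le (u v : ℝ) (d : ℕ) :
    |(truncate μ u * truncate Λ v) d| ≤ log d := by
  rw [ArithmeticFunction.mul_apply, ← ArithmeticFunction.vonMangoldt_sum,
    ← Nat.sum_divisorsAntidiagonal' (fun _ m ↦ Λ m)]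
  refine (abs_sum_le_sum_abs _ _).trans (sum_le_sum fun p _ ↦ ?_)
  rw [abs_mul, ← one_mul (Λ p.2)]
  exact mul_le_mul ((abs_truncate_le _ u _).trans (abs_realMoebius_le_one _))
    (abs_truncate_vonMangoldt_le v _) (abs_nonneg _) zero_le_one

lemma truncate_mul_truncate_eq_zero (f g : ArithmeticFunction ℝ) {u v : ℝ} (hu : 0 ≤ u) {d : ℕ}
    (hd : u * v < d) : (truncate f u * truncate g v) d = 0 := by
  rw [ArithmeticFunction.mul_apply]
  refine sum_eq_zero fun p hp ↦ ?_
  rw [← (Nat.mem_divisorsAntidiagonal.1 hp).1, Nat.cast_mul] at hd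
  rw [truncate_apply, truncate_apply]
  split_ifs with hp₁ hp₂
  · exact absurd hd (not_lt.2 (mul_le_mul hp₁ hp₂ (Nat.cast_nonneg _) hu))
  all_goals simp

lemma abs_sub_truncate_vonMangoldt_mul_zeta_le (v : ℝ) (m : ℕ) :
    |((Λ - truncate Λ v) * (ζ : ArithmeticFunction ℝ)) m| ≤ log m := by
  rw [ArithmeticFunction.coe_mul_zeta_apply, ← ArithmeticFunction.vonMangoldt_sum]
  refine (abs_sum_le_sum_abs _ _).trans (sum_le_sum fun i _ ↦ ?_)
  exact (abs_sub_truncate_le Λ v i).trans_eq (abs_of_nonneg ArithmeticFunction.vonMangoldt_nonneg)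

lemma sub_truncate_mul_zeta_eq_zero (f : ArithmeticFunction ℝ) {v : ℝ} {m : ℕ} (hm : (m : ℝ) ≤ v) :
    ((f - truncate f v) * (ζ : ArithmeticFunction ℝ)) m = 0 := by
  rw [ArithmeticFunction.coe_mul_zeta_apply]
  refine sum_eq_zero fun i hi ↦ ?_
  rw [sub_truncate_apply, if_pos ((Nat.cast_le.2 (Nat.divisor_le hi)).trans hm)]

lemma exists_norm_sum_Ico_phase_le {c : ℝ} (hc : 1 < c) : ∃ C > 0, ∀ (X x : ℝ) (d a : ℕ),
    0 < X → x ≠ 0 → 1 ≤ d → 2 * (d : ℝ) ≤ X → ⌊X / 2 / d⌋₊ + 1 ≤ a →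
    ‖∑ m ∈ Ico a (⌊X / d⌋₊ + 1), phase c x (d * m)‖ ≤
      C * (√(|x| * X ^ c) + X / √(|x| * X ^ c) * (1 / d)) := by
  obtain ⟨C, hC, hsum⟩ := exists_norm_sum_e_mul_rpow_le hc
  refine ⟨C * √(2 ^ c), by positivity, fun X x d a hX hx hd hdX ha ↦ ?_⟩
  have hd0 : (0 : ℝ) < d := Nat.cast_pos.2 hd
  set A := X / 2 / d with hA
  have hA1 : 1 ≤ A := by
    rw [hA, div_div, le_div_iff₀ (by positivity)]
    linarith
  set T := |x| * X ^ c with hT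
  have hT0 : 0 < T := by positivity
  have hphase (m : ℕ) : phase c x (d * m) = e (x * (d : ℝ) ^ c * (m : ℝ) ^ c) := by
    rw [phase, Nat.cast_mul, mul_rpow hd0.le m.cast_nonneg, mul_assoc]
  have hyA : |x * (d : ℝ) ^ c| * A ^ c = T / 2 ^ c := by
    rw [abs_mul, abs_of_pos (by positivity : 0 < (d : ℝ) ^ c), hA,
      div_rpow (by positivity) hd0.le, div_rpow hX.le (by norm_num), hT]
    field_simp
  simp_rw [hphase]
  refine (hsum A _ a _ (by linarith) (mul_ne_zero hx (by positivity)) ?_ ?_).trans ?_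
  · exact (Nat.lt_floor_add_one A).le.trans (by exact_mod_cast ha)
  · have hfloor : (⌊X / d⌋₊ : ℝ) ≤ X / d := Nat.floor_le (by positivity)
    have hXd : X / d = 2 * A := by
      rw [hA]
      field_simp
    push_cast
    linarith
  · have hr : 1 ≤ √((2 : ℝ) ^ c) := one_le_sqrt.2 (one_le_rpow one_le_two (by linarith))
    rw [hyA, sqrt_div hT0.le, mul_assoc]
    gcongr C * ?_
    calc √T / √(2 ^ c) + A / (√T / √(2 ^ c))
        = √T / √(2 ^ c) + √(2 ^ c) * (X / √T * (1 / d)) / 2 := by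
          rw [hA]
          field_simp
      _ ≤ √(2 ^ c) * √T + √(2 ^ c) * (X / √T * (1 / d)) := by
          refine add_le_add ((div_le_self (sqrt_nonneg T) hr).trans
            (le_mul_of_one_le_left (sqrt_nonneg T) hr)) (half_le_self (by positivity))
      _ = _ := by ring

lemma sum_Ioc_one_div_le (N : ℕ) : ∑ d ∈ Ioc 0 N, (1 : ℝ) / d ≤ 1 + log N := by
  refine le_of_eq_of_le ?_ (harmonic_le_one_add_log N)
  rw [harmonic_eq_sum_Icc, ← Icc_add_one_left_eq_Ioc]
  push_cast
  simp only [one_div]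

lemma norm_sum_mul_le_of_support {α : ℕ → ℝ} {g : ℕ → ℂ} {X w L P Q : ℝ} (hw : 1 ≤ w)
    (hwX : w ≤ X) (hL : 0 ≤ L) (hP : 0 ≤ P) (hQ : 0 ≤ Q) (hα : ∀ d : ℕ, (d : ℝ) ≤ w → |α d| ≤ L)
    (hα0 : ∀ d : ℕ, w < d → α d = 0)
    (hg : ∀ d : ℕ, 1 ≤ d → (d : ℝ) ≤ w → ‖g d‖ ≤ P + Q * (1 / d)) :
    ‖∑ d ∈ Ioc 0 ⌊X⌋₊, (α d : ℂ) * g d‖ ≤ L * (w * P + Q * (1 + log X)) := by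
  have hw0 : 0 ≤ w := by linarith
  have hterm : ∀ d ∈ Ioc 0 ⌊w⌋₊, ‖(α d : ℂ) * g d‖ ≤ L * (P + Q * (1 / d)) := by
    intro d hd
    rw [mem_Ioc, Nat.le_floor_iff hw0] at hd
    rw [norm_mul, Complex.norm_real, norm_eq_abs]
    exact mul_le_mul (hα d hd.2) (hg d hd.1 hd.2) (norm_nonneg _) hL
  have hlog : log ⌊w⌋₊ ≤ log X :=
    log_le_log (Nat.cast_pos.2 (Nat.floor_pos.2 hw)) ((Nat.floor_le hw0).trans hwX)
  calc ‖∑ d ∈ Ioc 0 ⌊X⌋₊, (α d : ℂ) * g d‖ = ‖∑ d ∈ Ioc 0 ⌊w⌋₊, (α d : ℂ) * g d‖ := by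
        rw [sum_subset (Ioc_subset_Ioc_right (Nat.floor_mono hwX)) fun d hd hd' ↦ ?_]
        rw [mem_Ioc] at hd hd'
        rw [hα0 d (by rw [← Nat.floor_lt hw0]; omega), Complex.ofReal_zero, zero_mul]
    _ ≤ ∑ d ∈ Ioc 0 ⌊w⌋₊, L * (P + Q * (1 / d)) := norm_sum_le_of_le _ hterm
    _ = L * (#(Ioc 0 ⌊w⌋₊) * P + Q * ∑ d ∈ Ioc 0 ⌊w⌋₊, (1 : ℝ) / d) := by
        rw [← mul_sum, sum_add_distrib, ← mul_sum, sum_const, nsmul_eq_mul]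
    _ ≤ L * (w * P + Q * (1 + log X)) := by
        gcongr
        · exact card_Ioc_zero_floor_le hw0
        · linarith [sum_Ioc_one_div_le ⌊w⌋₊]

lemma sum_Ioc_floor_two_pow_mul (f : ℕ → ℂ) {u : ℝ} (hu : 0 ≤ u) (N : ℕ) :
    ∑ d ∈ Ioc ⌊u⌋₊ ⌊2 ^ N * u⌋₊, f d =
      ∑ k ∈ range N, ∑ d ∈ Ioc ⌊2 ^ k * u⌋₊ ⌊2 * (2 ^ k * u)⌋₊, f d := by
  induction N with
  | zero => simp
  | succ n ih =>
    have hpow : (1 : ℝ) ≤ 2 ^ n := one_le_pow₀ one_le_two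
    rw [sum_range_succ, ← ih, sum_Ioc_consecutive _ (Nat.floor_mono (le_mul_of_one_le_left hu hpow))
      (Nat.floor_mono (by linarith [mul_nonneg (zero_le_one.trans hpow) hu])), pow_succ', mul_assoc]

lemma sum_Ioc_floor_eq_sum_dyadic {f : ℕ → ℂ} {u X : ℝ} {N : ℕ} (hu : 0 ≤ u) (hX : 0 ≤ X)
    (hN : X ≤ 2 ^ N * u) (hfu : ∀ d : ℕ, (d : ℝ) ≤ u → f d = 0)
    (hfX : ∀ d : ℕ, X < d → f d = 0) :
    ∑ d ∈ Ioc 0 ⌊X⌋₊, f d =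
      ∑ k ∈ range N, ∑ d ∈ Ioc ⌊2 ^ k * u⌋₊ ⌊2 * (2 ^ k * u)⌋₊, f d := by
  rw [← sum_Ioc_floor_two_pow_mul f hu,
    sum_subset (Ioc_subset_Ioc_right (Nat.floor_mono hN)) fun d hd hd' ↦ ?_]
  · refine (sum_subset (Ioc_subset_Ioc_left (Nat.zero_le _)) fun d hd hd' ↦ hfu d ?_).symm
    rw [mem_Ioc] at hd hd'
    rw [← Nat.le_floor_iff' (by omega)]
    omega
  · rw [mem_Ioc] at hd hd'
    exact hfX d (by rw [← Nat.floor_lt hX]; omega)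

lemma cofactors_eq_empty {X : ℝ} (hX : 0 ≤ X) {d : ℕ} (hd : X < d) : cofactors X d = ∅ := by
  rw [cofactors, Nat.floor_eq_zero.2 ((div_lt_one (hX.trans_lt hd)).2 hd), zero_add,
    Ico_eq_empty_of_le (Nat.le_add_left 1 _)]

lemma exists_nat_le_two_pow_mul {X u : ℝ} (hX : 1 ≤ X) (hu : 1 ≤ u) :
    ∃ N : ℕ, X ≤ 2 ^ N * u ∧ (N : ℝ) ≤ 2 * log X + 1 := by
  have hlog2 : 0 < log 2 := log_pos one_lt_two
  have hlogX : 0 ≤ log X := log_nonneg hX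
  refine ⟨⌈log X / log 2⌉₊, ?_, ?_⟩
  · have hceil : log X / log 2 ≤ ⌈log X / log 2⌉₊ := Nat.le_ceil _
    rw [div_le_iff₀ hlog2, ← log_pow, log_le_log_iff (by linarith) (by positivity)] at hceil
    exact hceil.trans (le_mul_of_one_le_right (by positivity) hu)
  · have hratio : log X / log 2 ≤ 2 * log X := by
      rw [div_le_iff₀ hlog2]
      nlinarith [log_two_gt_d9]
    linarith [Nat.ceil_lt_add_one (div_nonneg hlogX hlog2.le)]

lemma exists_norm_sum_typeII_le {c : ℝ} (hc : 1 < c) :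
    ∃ C > 0, ∀ (X x u v L : ℝ) (a β : ℕ → ℂ), 1 ≤ X → x ≠ 0 → 1 ≤ u → 4 ≤ v → 0 ≤ L →
    (∀ d, ‖a d‖ ≤ 1) → (∀ d : ℕ, (d : ℝ) ≤ u → a d = 0) →
    (∀ m : ℕ, (m : ℝ) ≤ X → ‖β m‖ ≤ L) → (∀ m : ℕ, (m : ℝ) ≤ v → β m = 0) →
    ‖∑ d ∈ Ioc 0 ⌊X⌋₊, a d * ∑ m ∈ cofactors X d, β m * phase c x (d * m)‖ ≤
      C * (2 * log X + 1) * (X * L) *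
        √(1 / u + √(|x| * X ^ c) / v + 1 / √(|x| * X ^ c)) := by
  obtain ⟨C, hC, hII⟩ := exists_sq_norm_typeII_le hc
  refine ⟨√C, by positivity, fun X x u v L a β hX hx hu hv hL ha ha0 hβ hβ0 ↦ ?_⟩
  have hX0 : 0 < X := by linarith
  have hu0 : 0 < u := by linarith
  set T := |x| * X ^ c
  set R := √(1 / u + √T / v + 1 / √T) with hR
  set f : ℕ → ℂ := fun d ↦ a d * ∑ m ∈ cofactors X d, β m * phase c x (d * m)
  obtain ⟨N, hXN, hN⟩ := exists_nat_le_two_pow_mul hX hu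
  have hblock (k : ℕ) : ‖∑ d ∈ Ioc ⌊2 ^ k * u⌋₊ ⌊2 * (2 ^ k * u)⌋₊, f d‖ ≤ √C * (X * L) * R := by
    have huk : u ≤ 2 ^ k * u := le_mul_of_one_le_left hu0.le (one_le_pow₀ one_le_two)
    refine le_of_sq_le_sq
      ((hII X x (2 ^ k * u) v L a β hX0 hx (hu.trans huk) hv ha hβ hβ0).trans ?_) (by positivity)
    rw [mul_pow _ R, mul_pow (√C), sq_sqrt hC.le, hR, sq_sqrt (by positivity)]
    gcongr
  rw [sum_Ioc_floor_eq_sum_dyadic hu0.le hX0.le hXN (fun d hd ↦ by rw [ha0 d hd, zero_mul])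
    fun d hd ↦ by rw [cofactors_eq_empty hX0.le hd, sum_empty, mul_zero]]
  calc _ ≤ ∑ _k ∈ range N, √C * (X * L) * R := norm_sum_le_of_le _ fun k _ ↦ hblock k
    _ = N * (√C * (X * L) * R) := by rw [sum_const, nsmul_eq_mul, card_range]
    _ ≤ (2 * log X + 1) * (√C * (X * L) * R) := by gcongr
    _ = _ := by ring

lemma one_le_log_of_three_le {X : ℝ} (hX : 3 ≤ X) : 1 ≤ log X := by
  rw [le_log_iff_exp_le (by linarith)]
  linarith [exp_one_lt_d9]

lemma log_natCast_le_log {X : ℝ} (hX : 1 ≤ X) {n : ℕ} (hn : (n : ℝ) ≤ X) : log n ≤ log X := by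
  rcases n.eq_zero_or_pos with rfl | hn0
  · rw [Nat.cast_zero, log_zero]
    exact log_nonneg hX
  · exact log_le_log (Nat.cast_pos.2 hn0) hn

lemma monotone_log_natCast : Monotone fun n : ℕ ↦ log n := by
  intro m n hmn
  rcases n.eq_zero_or_pos with rfl | hn
  · rw [Nat.le_zero.1 hmn]
  · exact log_natCast_le_log (Nat.one_le_cast.2 hn) (Nat.cast_le.2 hmn)

lemma add_mul_one_add_le {a b l : ℝ} (ha : 0 ≤ a) (hb : 0 ≤ b) (hl : 1 ≤ l) :
    a + b * (1 + l) ≤ 2 * l * (a + b) := by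
  nlinarith

lemma sum_vonMangoldt_mul_eq_vaughan {X : ℝ} (hX : 0 < X) (u : ℝ) {v : ℝ} (hv : 2 * v ≤ X)
    (φ : ℕ → ℂ) :
    ∑ n ∈ cofactors X 1, (Λ n : ℂ) * φ n =
      ∑ n ∈ cofactors X 1, ((truncate μ u * ArithmeticFunction.log) n : ℂ) * φ n
      - ∑ n ∈ cofactors X 1,
        ((truncate μ u * truncate Λ v * (ζ : ArithmeticFunction ℝ)) n : ℂ) * φ n
      + ∑ n ∈ cofactors X 1, (((μ - truncate μ u) *
        ((Λ - truncate Λ v) * (ζ : ArithmeticFunction ℝ))) n : ℂ) * φ n := by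
  rw [← sum_sub_distrib, ← sum_add_distrib]
  refine sum_congr rfl fun n hn ↦ ?_
  have hn2 := ((mem_cofactors hX.le one_pos).1 hn).1
  rw [Nat.cast_one, one_mul] at hn2
  have hsmall : truncate Λ v n = 0 := by rw [truncate_apply, if_neg (by linarith)]
  rw [← sub_mul, ← add_mul]
  congr 1
  conv_lhs => rw [vonMangoldt_eq_vaughan u v, sub_eq_add_neg]
  simp only [ArithmeticFunction.add_apply, ArithmeticFunction.neg_apply, hsmall]
  push_cast
  ring

section Vaughan

variable {c : ℝ}

lemma exists_norm_sum_moebius_log_le (hc : 1 < c) : ∃ C > 0, ∀ X x u : ℝ, 3 ≤ X → x ≠ 0 → 1 ≤ u →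
    2 * u ≤ X →
    ‖∑ n ∈ cofactors X 1, ((truncate μ u * ArithmeticFunction.log) n : ℂ) * phase c x n‖ ≤
      C * log X ^ 2 * (u * √(|x| * X ^ c) + X / √(|x| * X ^ c)) := by
  obtain ⟨C, hC, hI⟩ := exists_norm_sum_Ico_phase_le hc
  refine ⟨4 * C, by positivity, fun X x u hX hx hu huX ↦ ?_⟩
  have hX0 : 0 < X := by linarith
  have hlog := one_le_log_of_three_le hX
  set T := |x| * X ^ c
  set l := log X
  have hinner : ∀ d : ℕ, 1 ≤ d → (d : ℝ) ≤ u →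
      ‖∑ m ∈ cofactors X d, (ArithmeticFunction.log m : ℂ) * phase c x (d * m)‖ ≤
        2 * l * C * √T + 2 * l * C * (X / √T) * (1 / d) := by
    intro d hd hdu
    have hfloor : ((⌊X / d⌋₊ + 1 : ℕ) : ℝ) ≤ X ^ 2 := by
      have hXd : (⌊X / d⌋₊ : ℝ) ≤ X := (Nat.floor_le (by positivity)).trans
        (div_le_self hX0.le (Nat.one_le_cast.2 hd))
      push_cast
      nlinarith
    have hweight : log ((⌊X / d⌋₊ + 1 : ℕ) : ℝ) ≤ 2 * l := by
      refine (log_le_log (by positivity) hfloor).trans_eq ?_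
      rw [log_pow, Nat.cast_two]
    calc _ ≤ log ((⌊X / d⌋₊ + 1 : ℕ) : ℝ) * (C * (√T + X / √T * (1 / d))) :=
          norm_sum_mul_le_of_monotone monotone_log_natCast (fun n ↦ log_natCast_nonneg n)
            fun a ha ↦ hI X x d a hX0 hx hd (by linarith) ha
      _ ≤ 2 * l * (C * (√T + X / √T * (1 / d))) := by gcongr
      _ = _ := by ring
  rw [sum_cofactors_one_mul hX0.le]
  refine (norm_sum_mul_le_of_support hu (by linarith) zero_le_one (by positivity) (by positivity)
    (fun d _ ↦ (abs_truncate_le _ u d).trans (abs_realMoebius_le_one d))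
    (fun d hd ↦ by rw [truncate_apply, if_neg hd.not_ge]) hinner).trans ?_
  calc 1 * (u * (2 * l * C * √T) + 2 * l * C * (X / √T) * (1 + l))
      ≤ 1 * (2 * l * (u * (2 * l * C * √T) + 2 * l * C * (X / √T))) := by
        gcongr
        exact add_mul_one_add_le (by positivity) (by positivity) hlog
    _ = _ := by ring

lemma exists_norm_sum_moebius_vonMangoldt_zeta_le (hc : 1 < c) :
    ∃ C > 0, ∀ X x u v : ℝ, 3 ≤ X → x ≠ 0 → 0 ≤ u → 1 ≤ u * v → 2 * (u * v) ≤ X →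
    ‖∑ n ∈ cofactors X 1,
        ((truncate μ u * truncate Λ v * (ζ : ArithmeticFunction ℝ)) n : ℂ) * phase c x n‖ ≤
      C * log X ^ 2 * (u * v * √(|x| * X ^ c) + X / √(|x| * X ^ c)) := by
  obtain ⟨C, hC, hI⟩ := exists_norm_sum_Ico_phase_le hc
  refine ⟨2 * C, by positivity, fun X x u v hX hx hu huv huvX ↦ ?_⟩
  have hX0 : 0 < X := by linarith
  have hlog := one_le_log_of_three_le hX
  set T := |x| * X ^ c
  set l := log X
  have hinner : ∀ d : ℕ, 1 ≤ d → (d : ℝ) ≤ u * v →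
      ‖∑ m ∈ cofactors X d, (((ζ : ArithmeticFunction ℝ) m : ℝ) : ℂ) * phase c x (d * m)‖ ≤
        C * √T + C * (X / √T) * (1 / d) := by
    intro d hd hdu
    rw [sum_congr rfl fun m hm ↦ ?_]
    · exact (hI X x d _ hX0 hx hd (by linarith) le_rfl).trans_eq (by ring)
    · have hm0 : m ≠ 0 := by
        rw [cofactors, mem_Ico] at hm
        omega
      rw [ArithmeticFunction.natCoe_apply, ArithmeticFunction.zeta_apply, if_neg hm0,
        Nat.cast_one, Complex.ofReal_one, one_mul]
  rw [sum_cofactors_one_mul hX0.le]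
  refine (norm_sum_mul_le_of_support huv (by linarith) (zero_le_one.trans hlog) (by positivity)
    (by positivity) (fun d hd ↦ (abs_truncate_moebius_mul_truncate_vonMangoldt_le u v d).trans
      (log_natCast_le_log (by linarith) (by linarith)))
    (fun d hd ↦ truncate_mul_truncate_eq_zero _ _ hu hd) hinner).trans ?_
  calc l * (u * v * (C * √T) + C * (X / √T) * (1 + l))
      ≤ l * (2 * l * (u * v * (C * √T) + C * (X / √T))) := by
        gcongr
        exact add_mul_one_add_le (by positivity) (by positivity) hlog
    _ = _ := by ring

lemma exists_norm_sum_vaughan_typeII_le (hc : 1 < c) :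
    ∃ C > 0, ∀ X x u v : ℝ, 3 ≤ X → x ≠ 0 → 1 ≤ u → 4 ≤ v →
    ‖∑ n ∈ cofactors X 1, (((μ - truncate μ u) *
        ((Λ - truncate Λ v) * (ζ : ArithmeticFunction ℝ))) n : ℂ) * phase c x n‖ ≤
      C * log X ^ 2 * (X * √(1 / u + √(|x| * X ^ c) / v + 1 / √(|x| * X ^ c))) := by
  obtain ⟨C, hC, hII⟩ := exists_norm_sum_typeII_le hc
  refine ⟨3 * C, by positivity, fun X x u v hX hx hu hv ↦ ?_⟩
  have hlog := one_le_log_of_three_le hX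
  rw [sum_cofactors_one_mul (by linarith)]
  refine (hII X x u v (log X) (fun d ↦ ((μ - truncate μ u) d : ℝ))
    (fun m ↦ (((Λ - truncate Λ v) * (ζ : ArithmeticFunction ℝ)) m : ℝ)) (by linarith) hx hu hv
    (by linarith) (fun d ↦ ?_) (fun d hd ↦ ?_) (fun m hm ↦ ?_) fun m hm ↦ ?_).trans ?_
  · rw [Complex.norm_real]
    exact (abs_sub_truncate_le _ u d).trans (abs_realMoebius_le_one d)
  · rw [sub_truncate_apply, if_pos hd, Complex.ofReal_zero]
  · rw [Complex.norm_real]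
    exact (abs_sub_truncate_vonMangoldt_mul_zeta_le v m).trans
      (log_natCast_le_log (by linarith) hm)
  · rw [sub_truncate_mul_zeta_eq_zero _ hm, Complex.ofReal_zero]
  · set R := √(1 / u + √(|x| * X ^ c) / v + 1 / √(|x| * X ^ c))
    calc C * (2 * log X + 1) * (X * log X) * R ≤ C * (3 * log X) * (X * log X) * R := by
          gcongr
          linarith
      _ = _ := by ring

lemma exists_norm_sum_vonMangoldt_phase_le (hc : 1 < c) :
    ∃ C > 0, ∀ X x u v : ℝ, 3 ≤ X → x ≠ 0 → 1 ≤ u → 4 ≤ v → 2 * (u * v) ≤ X →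
    ‖∑ n ∈ cofactors X 1, (Λ n : ℂ) * phase c x n‖ ≤
      C * log X ^ 2 * (u * v * √(|x| * X ^ c) + X / √(|x| * X ^ c) +
        X * √(1 / u + √(|x| * X ^ c) / v + 1 / √(|x| * X ^ c))) := by
  obtain ⟨C₁, hC₁, h₁⟩ := exists_norm_sum_moebius_log_le hc
  obtain ⟨C₂, hC₂, h₂⟩ := exists_norm_sum_moebius_vonMangoldt_zeta_le hc
  obtain ⟨C₃, hC₃, h₃⟩ := exists_norm_sum_vaughan_typeII_le hc
  refine ⟨C₁ + C₂ + C₃, by positivity, fun X x u v hX hx hu hv huv ↦ ?_⟩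
  have hX0 : 0 < X := by linarith
  have huuv : u ≤ u * v := le_mul_of_one_le_right (by linarith) (by linarith)
  have hvuv : v ≤ u * v := le_mul_of_one_le_left (by linarith) hu
  set T := |x| * X ^ c
  set R := √(1 / u + √T / v + 1 / √T)
  rw [sum_vonMangoldt_mul_eq_vaughan hX0 u (by linarith)]
  calc _ ≤ C₁ * log X ^ 2 * (u * √T + X / √T) + C₂ * log X ^ 2 * (u * v * √T + X / √T)
        + C₃ * log X ^ 2 * (X * R) :=
        (norm_add_le _ _).trans (add_le_add ((norm_sub_le _ _).trans (add_le_add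
          (h₁ X x u hX hx hu (by linarith)) (h₂ X x u v hX hx (by linarith) (by linarith) huv)))
          (h₃ X x u v hX hx hu hv))
    _ ≤ C₁ * log X ^ 2 * (u * v * √T + X / √T + X * R)
        + C₂ * log X ^ 2 * (u * v * √T + X / √T + X * R)
        + C₃ * log X ^ 2 * (u * v * √T + X / √T + X * R) := by
        gcongr ?_ * ?_ + ?_ * ?_ + ?_ * ?_
        · exact le_add_of_le_of_nonneg (by gcongr) (by positivity)
        · exact le_add_of_nonneg_right (by positivity)
        · exact le_add_of_nonneg_left (by positivity)
    _ = _ := by ring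

end Vaughan

end PrimeExpSum

/-! ## Real parts of logarithmic derivatives -/

namespace PrimeExpSum

open Metric Set

section LogDeriv

variable {f g : ℂ → ℂ} {M : ℝ}

lemma logDeriv_comp_add_mul {a r z : ℂ} (hf : DifferentiableAt ℂ f (a + r * z)) :
    logDeriv (fun w ↦ f (a + r * w)) z = r * logDeriv f (a + r * z) := by
  have haff : HasDerivAt (fun w : ℂ ↦ a + r * w) r z := by
    simpa only [id, mul_one] using ((hasDerivAt_id z).const_mul r).const_add a
  have hd : deriv (fun w ↦ f (a + r * w)) z = deriv f (a + r * z) * r :=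
    (hf.hasDerivAt.comp z haff).deriv
  rw [logDeriv_apply, logDeriv_apply, hd]
  ring

lemma exists_eqOn_mul_exp (hg : DifferentiableOn ℂ g (ball 0 1)) (hg0 : ∀ z ∈ ball 0 1, g z ≠ 0) :
    ∃ h : ℂ → ℂ, h 0 = 0 ∧ (∀ z ∈ ball 0 1, HasDerivAt h (logDeriv g z) z) ∧
      EqOn g (fun z ↦ g 0 * Complex.exp (h z)) (ball 0 1) := by
  obtain ⟨h, h0, hh⟩ := ((hg.deriv isOpen_ball).div hg hg0).isExactOn_ball.with_val_at 0 (0 : ℂ)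
  have hder : ∀ z ∈ ball (0 : ℂ) 1, HasDerivAt (fun z ↦ g z * Complex.exp (-h z)) 0 z := by
    intro z hz
    have hmul : HasDerivAt (fun z ↦ g z * Complex.exp (-h z))
        (deriv g z * Complex.exp (-h z) + g z * (Complex.exp (-h z) * -logDeriv g z)) z :=
      (hg.differentiableAt (isOpen_ball.mem_nhds hz)).hasDerivAt.mul (hh z hz).neg.cexp
    have hcancel : g z * logDeriv g z = deriv g z := mul_div_cancel₀ _ (hg0 z hz)
    convert hmul using 1
    linear_combination Complex.exp (-h z) * hcancel
  have hconst : EqOn (fun z ↦ g z * Complex.exp (-h z)) (fun _ ↦ g 0) (ball 0 1) := by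
    refine isOpen_ball.eqOn_of_deriv_eq (convex_ball (0 : ℂ) 1).isPreconnected
      (fun z hz ↦ (hder z hz).differentiableAt.differentiableWithinAt)
      (differentiableOn_const _) (fun z hz ↦ ?_) (mem_ball_self one_pos) ?_
    · rw [(hder z hz).deriv, deriv_const]
    · rw [h0, neg_zero, Complex.exp_zero, mul_one]
  refine ⟨h, h0, hh, fun z hz ↦ ?_⟩
  have hgz : g z * Complex.exp (-h z) = g 0 := hconst hz
  dsimp only
  rw [← hgz, mul_assoc, ← Complex.exp_add, neg_add_cancel, Complex.exp_zero, mul_one]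

lemma norm_logDeriv_le_of_unitBall (hg : DifferentiableOn ℂ g (ball 0 1))
    (hg0 : ∀ z ∈ ball 0 1, g z ≠ 0) (hM : 0 < M)
    (hgM : ∀ z ∈ ball 0 1, ‖g z‖ ≤ Real.exp M * ‖g 0‖) {z : ℂ} (hz : ‖z‖ ≤ 1 / 2) :
    ‖logDeriv g z‖ ≤ 24 * M := by
  obtain ⟨h, h0, hh, hexp⟩ := exists_eqOn_mul_exp hg hg0
  have hre : MapsTo h (ball 0 1) {z | z.re ≤ M} := by
    intro w hw
    have hpos : 0 < ‖g 0‖ := norm_pos_iff.2 (hg0 0 (mem_ball_self one_pos))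
    have hle := hgM w hw
    rwa [hexp hw, norm_mul, Complex.norm_exp, mul_comm, mul_le_mul_iff_left₀ hpos,
      Real.exp_le_exp] at hle
  have hhd : DifferentiableOn ℂ h (ball 0 1) := fun w hw ↦
    (hh w hw).differentiableAt.differentiableWithinAt
  have hzw : ∀ w ∈ closedBall z (1 / 4), ‖w‖ ≤ 3 / 4 := by
    intro w hw
    rw [mem_closedBall, dist_eq_norm] at hw
    linarith [norm_le_norm_sub_add w z]
  have hbc : ∀ w ∈ sphere z (1 / 4), ‖h w‖ ≤ 6 * M := by
    intro w hw
    have hw' := hzw w (sphere_subset_closedBall hw)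
    refine (Complex.borelCaratheodory_zero hM hhd hre one_pos
      (mem_ball_zero_iff.2 (by linarith)) h0).trans ?_
    rw [div_le_iff₀ (by linarith)]
    nlinarith
  have hcauchy := Complex.norm_deriv_le_of_forall_mem_sphere_norm_le (by norm_num)
    (hhd.diffContOnCl_ball fun w hw ↦ mem_ball_zero_iff.2 (by linarith [hzw w hw])) hbc
  rw [(hh z (mem_ball_zero_iff.2 (by linarith))).deriv] at hcauchy
  linarith

lemma norm_mul_logDeriv_le_of_ball {a : ℂ} {R : ℝ} (hR : 0 < R)
    (hf : DifferentiableOn ℂ f (ball a R)) (hf0 : ∀ z ∈ ball a R, f z ≠ 0) (hM : 0 < M)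
    (hfM : ∀ z ∈ ball a R, ‖f z‖ ≤ Real.exp M * ‖f a‖) {z : ℂ} (hz : ‖z - a‖ ≤ R / 2) :
    R * ‖logDeriv f z‖ ≤ 24 * M := by
  have hmaps : MapsTo (fun w : ℂ ↦ a + R * w) (ball 0 1) (ball a R) := by
    intro w hw
    rw [mem_ball_zero_iff] at hw
    rw [mem_ball_iff_norm, add_sub_cancel_left, norm_mul, Complex.norm_real,
      Real.norm_of_nonneg hR.le]
    exact mul_lt_of_lt_one_right hR hw
  have hRC : (R : ℂ) ≠ 0 := Complex.ofReal_ne_zero.2 hR.ne'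
  have hzR : a + R * ((z - a) / R) = z := by
    rw [mul_div_cancel₀ _ hRC, add_sub_cancel]
  have hbound := norm_logDeriv_le_of_unitBall (g := fun w ↦ f (a + R * w)) (z := (z - a) / R)
    (hf.comp (by fun_prop) hmaps) (fun w hw ↦ hf0 _ (hmaps hw)) hM
    (fun w hw ↦ by simpa only [mul_zero, add_zero] using hfM _ (hmaps hw))
    (by
      rw [norm_div, Complex.norm_real, Real.norm_of_nonneg hR.le, div_le_iff₀ hR]
      linarith)
  have hzmem : z ∈ ball a R := mem_ball_iff_norm.2 (by linarith)
  rwa [logDeriv_comp_add_mul (by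
    rw [hzR]
    exact hf.differentiableAt (isOpen_ball.mem_nhds hzmem)), hzR, norm_mul, Complex.norm_real,
    Real.norm_of_nonneg hR.le] at hbound

end LogDeriv

section Blaschke

variable {g : ℂ → ℂ} {ρ z : ℂ} {K M : ℝ}

/-- The quotient of `g` by the Blaschke factor `(z - ρ) / (1 - conj ρ * z)`. It is used to remove a
zero `ρ` of `g` from the unit disc without changing the size of `g` on the unit circle. -/
noncomputable def blaschkeQuotient (g : ℂ → ℂ) (ρ z : ℂ) : ℂ :=
  (1 - (starRingEnd ℂ) ρ * z) * dslope g ρ z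

lemma eq_sub_mul_dslope (hρ : g ρ = 0) (z : ℂ) : g z = (z - ρ) * dslope g ρ z := by
  rw [← smul_eq_mul, sub_smul_dslope, hρ, sub_zero]

lemma differentiable_dslope (hg : Differentiable ℂ g) (ρ : ℂ) : Differentiable ℂ (dslope g ρ) := by
  rw [← differentiableOn_univ] at hg ⊢
  exact (Complex.differentiableOn_dslope Filter.univ_mem).2 hg

lemma differentiable_blaschkeQuotient (hg : Differentiable ℂ g) (ρ : ℂ) :
    Differentiable ℂ (blaschkeQuotient g ρ) :=
  ((differentiable_id.const_mul _).const_sub 1).mul (differentiable_dslope hg ρ)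

lemma norm_blaschkeQuotient_of_norm_eq_one (hρ : g ρ = 0) (hz : ‖z‖ = 1) :
    ‖blaschkeQuotient g ρ z‖ = ‖g z‖ := by
  have hfactor : 1 - (starRingEnd ℂ) ρ * z = z * (starRingEnd ℂ) (z - ρ) := by
    rw [map_sub, mul_sub, Complex.mul_conj', hz]
    push_cast
    ring
  rw [eq_sub_mul_dslope hρ, blaschkeQuotient, hfactor, norm_mul, norm_mul, norm_mul, hz, one_mul,
    RCLike.norm_conj]

lemma norm_blaschkeQuotient_zero (hρ : g ρ = 0) (hρ0 : ρ ≠ 0) :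
    ‖blaschkeQuotient g ρ 0‖ = ‖g 0‖ / ‖ρ‖ := by
  rw [eq_sub_mul_dslope hρ 0, blaschkeQuotient, mul_zero, sub_zero, one_mul, zero_sub, norm_mul,
    norm_neg, mul_div_cancel_left₀ _ (norm_ne_zero_iff.2 hρ0)]

lemma norm_le_norm_blaschkeQuotient_zero (hρ : g ρ = 0) (hρ0 : ρ ≠ 0) (hρ1 : ‖ρ‖ < 1) :
    ‖g 0‖ ≤ ‖blaschkeQuotient g ρ 0‖ := by
  rw [norm_blaschkeQuotient_zero hρ hρ0, le_div_iff₀ (norm_pos_iff.2 hρ0)]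
  exact mul_le_of_le_one_right (norm_nonneg _) hρ1.le

lemma eq_zero_of_blaschkeQuotient_eq_zero (hρ : g ρ = 0) (hρ1 : ‖ρ‖ < 1) (hz : ‖z‖ < 1)
    (h : blaschkeQuotient g ρ z = 0) : g z = 0 := by
  have hfactor : 1 - (starRingEnd ℂ) ρ * z ≠ 0 := by
    intro h1
    have hnorm : ‖(starRingEnd ℂ) ρ * z‖ = 1 := by rw [← sub_eq_zero.1 h1, norm_one]
    rw [norm_mul, RCLike.norm_conj] at hnorm
    exact (mul_lt_one_of_nonneg_of_lt_one_left (norm_nonneg _) hρ1 hz.le).ne hnorm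
  rw [eq_sub_mul_dslope hρ, (mul_eq_zero.1 h).resolve_left hfactor, mul_zero]

lemma re_logDeriv_eq_add_blaschkeQuotient (hg : Differentiable ℂ g) (hρ : g ρ = 0)
    (hg0 : g 0 ≠ 0) :
    (logDeriv g 0).re =
      (logDeriv (blaschkeQuotient g ρ) 0).re + -ρ.re * (1 / ‖ρ‖ ^ 2 - 1) := by
  have hq0 : dslope g ρ 0 ≠ 0 := by
    intro h
    exact hg0 (by rw [eq_sub_mul_dslope hρ, h, mul_zero])
  have hρ0 : 0 - ρ ≠ 0 := by
    rw [zero_sub, neg_ne_zero]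
    rintro rfl
    exact hg0 hρ
  have hq := differentiable_dslope hg ρ 0
  set b := (starRingEnd ℂ) ρ with hb
  have hlg : logDeriv g 0 = 1 / (0 - ρ) + logDeriv (dslope g ρ) 0 := by
    conv_lhs => rw [funext (eq_sub_mul_dslope hρ)]
    rw [logDeriv_mul 0 hρ0 hq0 (by fun_prop) hq, logDeriv_apply, deriv_sub_const_fun, deriv_id'']
  have hlb : logDeriv (blaschkeQuotient g ρ) 0 = -b + logDeriv (dslope g ρ) 0 := by
    have hd : deriv (fun z ↦ 1 - b * z) 0 = -b := by
      simpa only [id, mul_one] using (((hasDerivAt_id (0 : ℂ)).const_mul b).const_sub 1).deriv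
    change logDeriv (fun z ↦ (1 - b * z) * dslope g ρ z) 0 = _
    rw [logDeriv_mul 0 (by rw [mul_zero, sub_zero]; exact one_ne_zero) hq0 (by fun_prop) hq,
      logDeriv_apply, hd, mul_zero, sub_zero, div_one]
  rw [hlg, hlb, Complex.add_re, Complex.add_re, Complex.neg_re, hb, Complex.conj_re, one_div,
    Complex.inv_re, Complex.normSq_eq_norm_sq, zero_sub, norm_neg, Complex.neg_re]
  ring

lemma re_logDeriv_blaschkeQuotient_le (hg : Differentiable ℂ g) (hρ : g ρ = 0) (hg0 : g 0 ≠ 0)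
    (hρ1 : ‖ρ‖ < 1) (hρre : ρ.re < 0) :
    (logDeriv (blaschkeQuotient g ρ) 0).re ≤ (logDeriv g 0).re := by
  have hρ0 : 0 < ‖ρ‖ := norm_pos_iff.2 fun h ↦ hg0 (h ▸ hρ)
  rw [re_logDeriv_eq_add_blaschkeQuotient hg hρ hg0, le_add_iff_nonneg_right]
  refine mul_nonneg (neg_nonneg.2 hρre.le) (sub_nonneg.2 ?_)
  rw [le_div_iff₀ (pow_pos hρ0 2), one_mul]
  exact pow_le_one₀ hρ0.le hρ1.le

lemma norm_le_of_forall_norm_eq_one (hg : Differentiable ℂ g) (hK : ∀ z : ℂ, ‖z‖ = 1 → ‖g z‖ ≤ K)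
    (hz : ‖z‖ ≤ 1) : ‖g z‖ ≤ K := by
  refine Complex.norm_le_of_forall_mem_frontier_norm_le (U := ball (0 : ℂ) 1) isBounded_ball
    hg.diffContOnCl (fun w hw ↦ ?_) ?_
  · rw [frontier_ball _ one_ne_zero] at hw
    exact hK w (mem_sphere_zero_iff_norm.1 hw)
  · rw [closure_ball _ one_ne_zero]
    exact mem_closedBall_zero_iff.2 hz

lemma neg_le_re_logDeriv_of_forall_ne_zero (hg : Differentiable ℂ g)
    (hK : ∀ z : ℂ, ‖z‖ = 1 → ‖g z‖ ≤ K) (hg0 : ∀ z : ℂ, ‖z‖ < 1 / 2 → g z ≠ 0) (hM : 0 < M)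
    (hKM : K ≤ Real.exp M * ‖g 0‖) : -(48 * M) ≤ (logDeriv g 0).re := by
  have hbound := norm_mul_logDeriv_le_of_ball (a := 0) (z := 0) one_half_pos hg.differentiableOn
    (fun z hz ↦ hg0 z (mem_ball_zero_iff.1 hz)) hM
    (fun z hz ↦ (norm_le_of_forall_norm_eq_one hg hK
      (by linarith [mem_ball_zero_iff.1 hz])).trans hKM) (by norm_num)
  linarith [neg_abs_le (logDeriv g 0).re, Complex.abs_re_le_norm (logDeriv g 0)]

-- Each zero of norm less than `1 / 2` that is divided out doubles the value at `0`, while the bound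
-- on the unit circle is preserved, so this can happen at most `n` times.
lemma neg_le_re_logDeriv_of_le_two_pow_mul (n : ℕ) (hg : Differentiable ℂ g) (hg0 : g 0 ≠ 0)
    (hK : ∀ z : ℂ, ‖z‖ = 1 → ‖g z‖ ≤ K) (hzeros : ∀ z : ℂ, ‖z‖ < 1 → g z = 0 → z.re < 0)
    (hKn : K < 2 ^ n * ‖g 0‖) (hM : 0 < M) (hKM : K ≤ Real.exp M * ‖g 0‖) :
    -(48 * M) ≤ (logDeriv g 0).re := by
  induction n generalizing g with
  | zero =>
    rw [pow_zero, one_mul] at hKn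
    exact absurd (norm_le_of_forall_norm_eq_one hg hK (by rw [norm_zero]; exact zero_le_one))
      hKn.not_ge
  | succ n ih =>
    by_cases hcase : ∀ ρ : ℂ, ‖ρ‖ < 1 / 2 → g ρ ≠ 0
    · exact neg_le_re_logDeriv_of_forall_ne_zero hg hK hcase hM hKM
    push Not at hcase
    obtain ⟨ρ, hρ2, hρ⟩ := hcase
    have hρ1 : ‖ρ‖ < 1 := by linarith
    have hρ0 : ρ ≠ 0 := fun h ↦ hg0 (h ▸ hρ)
    have hdouble : 2 * ‖g 0‖ ≤ ‖blaschkeQuotient g ρ 0‖ := by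
      rw [norm_blaschkeQuotient_zero hρ hρ0, le_div_iff₀ (norm_pos_iff.2 hρ0)]
      nlinarith [norm_nonneg (g 0)]
    have hle := norm_le_norm_blaschkeQuotient_zero hρ hρ0 hρ1
    refine (ih (differentiable_blaschkeQuotient hg ρ)
      (norm_pos_iff.1 ((norm_pos_iff.2 hg0).trans_le hle))
      (fun z hz ↦ (norm_blaschkeQuotient_of_norm_eq_one hρ hz).trans_le (hK z hz))
      (fun z hz h ↦ hzeros z hz (eq_zero_of_blaschkeQuotient_eq_zero hρ hρ1 hz h)) ?_ ?_).trans
      (re_logDeriv_blaschkeQuotient_le hg hρ hg0 hρ1 (hzeros ρ hρ1 hρ))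
    · calc K < 2 ^ n * (2 * ‖g 0‖) := hKn.trans_eq (by ring)
        _ ≤ 2 ^ n * ‖blaschkeQuotient g ρ 0‖ := by gcongr
    · exact hKM.trans (by gcongr)

lemma neg_le_re_logDeriv_of_unitBall (hg : Differentiable ℂ g) (hg0 : g 0 ≠ 0)
    (hK : ∀ z : ℂ, ‖z‖ = 1 → ‖g z‖ ≤ K) (hzeros : ∀ z : ℂ, ‖z‖ < 1 → g z = 0 → z.re < 0)
    (hM : 0 < M) (hKM : K ≤ Real.exp M * ‖g 0‖) : -(48 * M) ≤ (logDeriv g 0).re := by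
  obtain ⟨n, hn⟩ := pow_unbounded_of_one_lt (K / ‖g 0‖) one_lt_two
  exact neg_le_re_logDeriv_of_le_two_pow_mul n hg hg0 hK hzeros
    ((div_lt_iff₀ (norm_pos_iff.2 hg0)).1 hn) hM hKM

lemma le_re_logDeriv_of_unitBall {d : ℝ} (hg : Differentiable ℂ g) (hg0 : g 0 ≠ 0)
    (hK : ∀ z : ℂ, ‖z‖ = 1 → ‖g z‖ ≤ K) (hzeros : ∀ z : ℂ, ‖z‖ < 1 → g z = 0 → z.re < 0)
    (hM : 0 < M) (hKM : K ≤ Real.exp M * ‖g 0‖) (hd0 : 0 < d) (hd1 : d < 1)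
    (hd : g (-d : ℂ) = 0) : 1 / d - d - 48 * M ≤ (logDeriv g 0).re := by
  have hnorm : ‖(-d : ℂ)‖ = d := by rw [norm_neg, Complex.norm_real, Real.norm_of_nonneg hd0.le]
  have hdn : ‖(-d : ℂ)‖ < 1 := hnorm.trans_lt hd1
  have hdz : (-d : ℂ) ≠ 0 := norm_pos_iff.1 (hnorm.symm ▸ hd0)
  have hle := norm_le_norm_blaschkeQuotient_zero hd hdz hdn
  have hbase := neg_le_re_logDeriv_of_unitBall (differentiable_blaschkeQuotient hg _)
    (norm_pos_iff.1 ((norm_pos_iff.2 hg0).trans_le hle))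
    (fun z hz ↦ (norm_blaschkeQuotient_of_norm_eq_one hd hz).trans_le (hK z hz))
    (fun z hz h ↦ hzeros z hz (eq_zero_of_blaschkeQuotient_eq_zero hd hdn hz h)) hM
    (hKM.trans (by gcongr))
  rw [re_logDeriv_eq_add_blaschkeQuotient hg hd hg0, hnorm, Complex.neg_re, Complex.ofReal_re,
    neg_neg]
  have hd2 : d * (1 / d ^ 2 - 1) = 1 / d - d := by field_simp
  linarith

end Blaschke

section LeftZeros

variable {f : ℂ → ℂ} {a : ℂ} {R M : ℝ}

lemma norm_comp_add_mul_le (hR : 0 < R) (hfM : ∀ z, ‖z - a‖ = R → ‖f z‖ ≤ Real.exp M * ‖f a‖)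
    (z : ℂ) (hz : ‖z‖ = 1) : ‖f (a + R * z)‖ ≤ Real.exp M * ‖f a‖ :=
  hfM _ (by
    rw [add_sub_cancel_left, norm_mul, hz, mul_one, Complex.norm_real, Real.norm_of_nonneg hR.le])

lemma re_neg_of_comp_add_mul_eq_zero (hR : 0 < R) (hzeros : ∀ z, f z = 0 → z.re < a.re)
    (z : ℂ) (hz : f (a + R * z) = 0) : z.re < 0 := by
  have hre := hzeros _ hz
  rw [Complex.add_re, Complex.re_ofReal_mul, add_lt_iff_neg_left] at hre
  exact (pos_iff_neg_of_mul_neg hre).1 hR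

lemma re_logDeriv_comp_add_mul (hf : Differentiable ℂ f) :
    (logDeriv (fun w ↦ f (a + R * w)) 0).re = R * (logDeriv f a).re := by
  rw [logDeriv_comp_add_mul (hf _), mul_zero, add_zero, Complex.re_ofReal_mul]

lemma neg_le_mul_re_logDeriv (hR : 0 < R) (hf : Differentiable ℂ f)
    (hfM : ∀ z, ‖z - a‖ = R → ‖f z‖ ≤ Real.exp M * ‖f a‖) (hzeros : ∀ z, f z = 0 → z.re < a.re)
    (hM : 0 < M) : -(48 * M) ≤ R * (logDeriv f a).re := by
  have ha : f (a + R * 0) = f a := by rw [mul_zero, add_zero]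
  rw [← re_logDeriv_comp_add_mul hf]
  exact neg_le_re_logDeriv_of_unitBall (hf.comp (by fun_prop))
    (ha.symm ▸ fun h ↦ lt_irrefl _ (hzeros a h)) (norm_comp_add_mul_le hR hfM)
    (fun z _ hz ↦ re_neg_of_comp_add_mul_eq_zero hR hzeros z hz) hM (ha.symm ▸ le_rfl)

lemma le_mul_re_logDeriv_of_eq_zero {d : ℝ} (hR : 0 < R) (hf : Differentiable ℂ f)
    (hfM : ∀ z, ‖z - a‖ = R → ‖f z‖ ≤ Real.exp M * ‖f a‖) (hzeros : ∀ z, f z = 0 → z.re < a.re)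
    (hM : 0 < M) (hd0 : 0 < d) (hdR : d < R) (hd : f (a - d) = 0) :
    R / d - d / R - 48 * M ≤ R * (logDeriv f a).re := by
  have ha : f (a + R * 0) = f a := by rw [mul_zero, add_zero]
  have hRC : (R : ℂ) ≠ 0 := Complex.ofReal_ne_zero.2 hR.ne'
  rw [← re_logDeriv_comp_add_mul hf, ← one_div_div d R]
  refine le_re_logDeriv_of_unitBall (hf.comp (by fun_prop))
    (ha.symm ▸ fun h ↦ lt_irrefl _ (hzeros a h)) (norm_comp_add_mul_le hR hfM)
    (fun z _ hz ↦ re_neg_of_comp_add_mul_eq_zero hR hzeros z hz) hM (ha.symm ▸ le_rfl)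
    (by positivity) ((div_lt_one hR).2 hdR) ?_
  rw [Complex.ofReal_div, mul_neg, mul_div_cancel₀ _ hRC, ← sub_eq_add_neg, hd]

end LeftZeros

end PrimeExpSum

/-! ## Growth of `(s - 1) ζ(s)` -/

namespace PrimeExpSum

open Filter Topology

section ZetaTerm

variable {s : ℂ}

lemma norm_cpow_neg_sub_cpow_neg_le (hs : 0 < s.re) {a y : ℝ} (ha : 0 < a) (hay : a ≤ y)
    (hya : y ≤ a + 1) : ‖(y : ℂ) ^ (-s) - (a : ℂ) ^ (-s)‖ ≤ ‖s‖ * a ^ (-s.re - 1) := by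
  have hs0 : -s ≠ 0 := neg_ne_zero.2 fun h ↦ hs.ne' (h ▸ Complex.zero_re)
  have hmvt := norm_image_sub_le_of_norm_deriv_le_segment' (f := fun y : ℝ ↦ (y : ℂ) ^ (-s))
    (f' := fun y : ℝ ↦ -s * (y : ℂ) ^ (-s - 1)) (a := a) (b := a + 1) (C := ‖s‖ * a ^ (-s.re - 1))
    (fun y hy ↦ (hasDerivAt_ofReal_cpow_const (ha.trans_le hy.1).ne' hs0).hasDerivWithinAt)
    (fun y hy ↦ by
      rw [norm_mul, norm_neg, Complex.norm_cpow_eq_rpow_re_of_pos (ha.trans_le hy.1)]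
      gcongr
      exact Real.rpow_le_rpow_of_nonpos ha hy.1 (by
        rw [Complex.sub_re, Complex.neg_re, Complex.one_re]
        linarith)) y ⟨hay, hya⟩
  exact hmvt.trans (mul_le_of_le_one_right (by positivity) (by linarith))

/-- The `n`-th term of a series that converges to `(s - 1) ζ(s) - 1` throughout `0 < s.re`. -/
noncomputable def zetaTerm (n : ℕ) (s : ℂ) : ℂ :=
  (s - 1) * ((n + 1 : ℝ) : ℂ) ^ (-s) + ((n + 1 + 1 : ℝ) : ℂ) ^ (1 - s) -
    ((n + 1 : ℝ) : ℂ) ^ (1 - s)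

lemma norm_zetaTerm_le (n : ℕ) (hs : 0 < s.re) :
    ‖zetaTerm n s‖ ≤ ‖s - 1‖ * ‖s‖ * (n + 1 : ℝ) ^ (-s.re - 1) := by
  set a : ℝ := n + 1 with ha
  have ha0 : 0 < a := by positivity
  obtain rfl | h1 := eq_or_ne s 1
  · simp [zetaTerm]
  have h1' : 1 - s ≠ 0 := sub_ne_zero.2 h1.symm
  have hmvt := norm_image_sub_le_of_norm_deriv_le_segment'
    (f := fun y : ℝ ↦ (s - 1) * (a : ℂ) ^ (-s) * (y : ℂ) + (y : ℂ) ^ (1 - s))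
    (f' := fun y : ℝ ↦ (s - 1) * (a : ℂ) ^ (-s) * 1 + (1 - s) * (y : ℂ) ^ (1 - s - 1)) (a := a)
    (b := a + 1) (C := ‖s - 1‖ * ‖s‖ * a ^ (-s.re - 1))
    (fun y hy ↦ ((Complex.ofRealCLM.hasDerivAt.const_mul _).add
      (hasDerivAt_ofReal_cpow_const (ha0.trans_le hy.1).ne' h1')).hasDerivWithinAt)
    (fun y hy ↦ by
      have hfactor : (s - 1) * (a : ℂ) ^ (-s) * 1 + (1 - s) * (y : ℂ) ^ (1 - s - 1) =
          -(s - 1) * ((y : ℂ) ^ (-s) - (a : ℂ) ^ (-s)) := by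
        rw [sub_sub_cancel_left]
        ring
      rw [hfactor, norm_mul, norm_neg, mul_assoc]
      gcongr
      exact norm_cpow_neg_sub_cpow_neg_le hs ha0 hy.1 hy.2.le) (a + 1) ⟨by linarith, le_rfl⟩
  rw [add_sub_cancel_left, mul_one] at hmvt
  refine (congrArg norm ?_).trans_le hmvt
  rw [zetaTerm, ← ha]
  push_cast
  ring

lemma differentiable_zetaTerm (n : ℕ) : Differentiable ℂ (zetaTerm n) := by
  have h1 : ((n + 1 : ℝ) : ℂ) ≠ 0 := Complex.ofReal_ne_zero.2 (by positivity)
  have h2 : ((n + 1 + 1 : ℝ) : ℂ) ≠ 0 := Complex.ofReal_ne_zero.2 (by positivity)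
  intro s
  exact ((by fun_prop : DifferentiableAt ℂ (fun s : ℂ ↦ s - 1) s).mul
    (DifferentiableAt.const_cpow (by fun_prop) (Or.inl h1))).add
    (DifferentiableAt.const_cpow (by fun_prop) (Or.inl h2)) |>.sub
    (DifferentiableAt.const_cpow (by fun_prop) (Or.inl h1))

lemma summable_natCast_add_one_rpow : Summable fun n : ℕ ↦ (n + 1 : ℝ) ^ (-(5 / 4) : ℝ) := by
  simpa only [Nat.cast_add, Nat.cast_one] using
    (summable_nat_add_iff 1).2 (Real.summable_nat_rpow.2 (by norm_num : (-(5 / 4) : ℝ) < -1))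

lemma norm_zetaTerm_le_of_norm_le {R : ℝ} (n : ℕ) (hs : 1 / 4 < s.re) (hR : ‖s‖ ≤ R) :
    ‖zetaTerm n s‖ ≤ (R + 1) ^ 2 * (n + 1 : ℝ) ^ (-(5 / 4) : ℝ) := by
  refine (norm_zetaTerm_le n (by linarith)).trans ?_
  have hs1 : ‖s - 1‖ ≤ R + 1 := (norm_sub_le _ _).trans (by rw [norm_one]; linarith)
  have hprod : ‖s - 1‖ * ‖s‖ ≤ (R + 1) ^ 2 := by
    rw [sq]
    exact mul_le_mul hs1 (by linarith) (norm_nonneg _) ((norm_nonneg _).trans hs1)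
  have hexp : (n + 1 : ℝ) ^ (-s.re - 1) ≤ (n + 1 : ℝ) ^ (-(5 / 4) : ℝ) :=
    Real.rpow_le_rpow_of_exponent_le (by linarith [n.cast_nonneg (α := ℝ)]) (by linarith)
  gcongr

lemma sum_range_zetaTerm (s : ℂ) (N : ℕ) : ∑ n ∈ Finset.range N, zetaTerm n s =
    (s - 1) * ∑ n ∈ Finset.range N, 1 / (n + 1 : ℂ) ^ s + -1 + ((N + 1 : ℝ) : ℂ) ^ (1 - s) := by
  induction N with
  | zero => simp
  | succ N ih =>
    rw [Finset.sum_range_succ, Finset.sum_range_succ, ih, zetaTerm, Complex.cpow_neg]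
    push_cast
    ring

lemma one_add_tsum_zetaTerm_of_one_lt (hs : 1 < s.re) :
    1 + ∑' n, zetaTerm n s = riemannZeta₁ s := by
  have hs1 : s ≠ 1 := fun h ↦ hs.ne' (h ▸ Complex.one_re)
  have hsum : Summable fun n ↦ zetaTerm n s :=
    .of_norm_bounded (summable_natCast_add_one_rpow.mul_left _)
      fun n ↦ norm_zetaTerm_le_of_norm_le n (by linarith) le_rfl
  have hzeta : Summable fun n : ℕ ↦ 1 / (n + 1 : ℂ) ^ s := by
    simpa only [Nat.cast_add, Nat.cast_one] using
      (summable_nat_add_iff 1).2 (Complex.summable_one_div_nat_cpow.2 hs)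
  have hpow : Tendsto (fun N : ℕ ↦ ((N + 1 : ℝ) : ℂ) ^ (1 - s)) atTop (𝓝 0) := by
    have hnorm (N : ℕ) : ‖((N + 1 : ℝ) : ℂ) ^ (1 - s)‖ = (N + 1 : ℝ) ^ (-(s.re - 1)) := by
      rw [Complex.norm_cpow_eq_rpow_re_of_pos (by positivity), Complex.sub_re, Complex.one_re,
        neg_sub]
    rw [tendsto_zero_iff_norm_tendsto_zero]
    simp_rw [hnorm]
    exact (tendsto_rpow_neg_atTop (sub_pos.2 hs)).comp
      (tendsto_atTop_add_const_right _ _ tendsto_natCast_atTop_atTop)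
  have hlim := ((hzeta.hasSum.tendsto_sum_nat.const_mul (s - 1)).add_const (-1)).add hpow
  simp_rw [← sum_range_zetaTerm, ← zeta_eq_tsum_one_div_nat_add_one_cpow hs] at hlim
  rw [tendsto_nhds_unique hsum.hasSum.tendsto_sum_nat hlim, riemannZeta_eq_inv_sub_mul hs1,
    mul_inv_cancel_left₀ (sub_ne_zero.2 hs1)]
  ring

lemma one_add_tsum_zetaTerm (hs : 1 / 4 < s.re) : 1 + ∑' n, zetaTerm n s = riemannZeta₁ s := by
  set R := ‖s‖ + 4 with hR
  set U : Set ℂ := {z | 1 / 4 < z.re} ∩ Metric.ball 0 R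
  have hUo : IsOpen U :=
    (isOpen_lt continuous_const Complex.continuous_re).inter Metric.isOpen_ball
  have hUc : Convex ℝ U := (convex_halfSpace_re_gt _).inter (convex_ball _ _)
  have hd : DifferentiableOn ℂ (fun s ↦ ∑' n, zetaTerm n s) U :=
    Complex.differentiableOn_tsum_of_summable_norm
      (summable_natCast_add_one_rpow.mul_left ((R + 1) ^ 2))
      (fun n ↦ (differentiable_zetaTerm n).differentiableOn) hUo
      (fun n z hz ↦ norm_zetaTerm_le_of_norm_le n hz.1 (mem_ball_zero_iff.1 hz.2).le)
  have h3 : (3 : ℂ) ∈ U := by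
    refine ⟨by norm_num, mem_ball_zero_iff.2 ?_⟩
    rw [Complex.norm_ofNat, hR]
    linarith [norm_nonneg s]
  have heq := AnalyticOnNhd.eqOn_of_preconnected_of_eventuallyEq
    ((hd.const_add 1).analyticOnNhd hUo)
    (differentiable_riemannZeta₁.differentiableOn.analyticOnNhd hUo) hUc.isPreconnected h3 (by
      filter_upwards [(isOpen_lt continuous_const Complex.continuous_re).mem_nhds
        (by norm_num : (3 : ℂ) ∈ {z : ℂ | 1 < z.re})] with z hz
      exact one_add_tsum_zetaTerm_of_one_lt hz)
  exact heq ⟨hs, mem_ball_zero_iff.2 (by linarith)⟩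

lemma exists_norm_riemannZeta₁_le :
    ∃ C ≥ 1, ∀ s : ℂ, 1 / 4 < s.re → ‖riemannZeta₁ s‖ ≤ C * (‖s‖ + 1) ^ 2 := by
  set A := ∑' n : ℕ, (n + 1 : ℝ) ^ (-(5 / 4) : ℝ) with hA
  have hA0 : 0 ≤ A := tsum_nonneg fun n ↦ by positivity
  refine ⟨1 + A, by linarith, fun s hs ↦ ?_⟩
  have htsum : ‖∑' n, zetaTerm n s‖ ≤ (‖s‖ + 1) ^ 2 * A := by
    rw [hA, ← tsum_mul_left]
    exact tsum_of_norm_bounded (summable_natCast_add_one_rpow.mul_left _).hasSum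
      fun n ↦ norm_zetaTerm_le_of_norm_le n hs le_rfl
  have hone : (1 : ℝ) ≤ (‖s‖ + 1) ^ 2 := one_le_pow₀ (by linarith [norm_nonneg s])
  calc ‖riemannZeta₁ s‖ = ‖1 + ∑' n, zetaTerm n s‖ := by rw [one_add_tsum_zetaTerm hs]
    _ ≤ 1 + (‖s‖ + 1) ^ 2 * A := (norm_add_le _ _).trans (by rw [norm_one]; gcongr)
    _ ≤ (1 + A) * (‖s‖ + 1) ^ 2 := by linarith

end ZetaTerm

lemma riemannZeta₁_ne_zero_of_one_le_re {s : ℂ} (hs : 1 ≤ s.re) : riemannZeta₁ s ≠ 0 := by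
  obtain rfl | h := eq_or_ne s 1
  · rw [riemannZeta₁_one]
    exact one_ne_zero
  · have hzeta := riemannZeta_ne_zero_of_one_le_re hs
    rw [riemannZeta_eq_inv_sub_mul h] at hzeta
    exact right_ne_zero_of_mul hzeta

lemma norm_LSeries_moebius_le {s : ℂ} (hs : 1 < s.re) :
    ‖LSeries (fun n ↦ (ArithmeticFunction.moebius n : ℂ)) s‖ ≤ ‖riemannZeta (s.re : ℂ)‖ := by
  have hzeta : riemannZeta (s.re : ℂ) = ((∑' n : ℕ, 1 / (n : ℝ) ^ s.re : ℝ) : ℂ) := by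
    rw [zeta_eq_tsum_one_div_nat_cpow (s := (s.re : ℂ)) hs, Complex.ofReal_tsum]
    refine tsum_congr fun n ↦ ?_
    rw [Complex.ofReal_div, Complex.ofReal_one, Complex.ofReal_cpow n.cast_nonneg,
      Complex.ofReal_natCast]
  rw [hzeta, Complex.norm_real, Real.norm_of_nonneg (tsum_nonneg fun n ↦ by positivity)]
  refine tsum_of_norm_bounded (Real.summable_one_div_nat_rpow.2 hs).hasSum fun n ↦ ?_
  rw [LSeries.norm_term_eq]
  split_ifs with hn
  · positivity
  · gcongr
    rw [Complex.norm_intCast]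
    exact_mod_cast ArithmeticFunction.abs_moebius_le_one (n := n)

lemma one_le_norm_riemannZeta_mul {s : ℂ} (hs : 1 < s.re) :
    1 ≤ ‖riemannZeta s‖ * ‖riemannZeta (s.re : ℂ)‖ := by
  have hinv := ArithmeticFunction.LSeries_zeta_mul_Lseries_moebius hs
  rw [ArithmeticFunction.LSeries_zeta_eq_riemannZeta hs] at hinv
  calc 1 = ‖riemannZeta s‖ * ‖LSeries (fun n ↦ (ArithmeticFunction.moebius n : ℂ)) s‖ := by
        rw [← norm_mul, hinv, norm_one]
    _ ≤ _ := by
        gcongr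
        exact norm_LSeries_moebius_le hs

lemma exists_sq_div_le_norm_riemannZeta₁ :
    ∃ C ≥ 1, ∀ s : ℂ, 1 < s.re → s.re ≤ 2 → (s.re - 1) ^ 2 / C ≤ ‖riemannZeta₁ s‖ := by
  obtain ⟨C, hC, hgrowth⟩ := exists_norm_riemannZeta₁_le
  refine ⟨9 * C, by linarith, fun s hs hs2 ↦ ?_⟩
  have hd : 0 < s.re - 1 := sub_pos.2 hs
  have hne : s ≠ 1 := fun h ↦ hs.ne' (h ▸ Complex.one_re)
  have hne' : (s.re : ℂ) ≠ 1 := fun h ↦ hs.ne' (Complex.ofReal_eq_one.1 h)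
  have hdist : s.re - 1 ≤ ‖s - 1‖ := by
    simpa only [Complex.sub_re, Complex.one_re] using Complex.re_le_norm (s - 1)
  have hnorm : ‖(s.re : ℂ) - 1‖ = s.re - 1 := by
    rw [← Complex.ofReal_one, ← Complex.ofReal_sub, Complex.norm_real, Real.norm_of_nonneg hd.le]
  have hre : ‖riemannZeta₁ (s.re : ℂ)‖ ≤ 9 * C := by
    refine (hgrowth _ (by rw [Complex.ofReal_re]; linarith)).trans ?_
    rw [Complex.norm_real, Real.norm_of_nonneg (by linarith), mul_comm]
    gcongr
    nlinarith
  have hone := one_le_norm_riemannZeta_mul hs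
  rw [riemannZeta_eq_inv_sub_mul hne, riemannZeta_eq_inv_sub_mul hne', norm_mul, norm_mul,
    norm_inv, norm_inv, hnorm] at hone
  rw [div_le_iff₀ (by linarith)]
  calc (s.re - 1) ^ 2 = (s.re - 1) ^ 2 * 1 := (mul_one _).symm
    _ ≤ (s.re - 1) ^ 2 * ((s.re - 1)⁻¹ * ‖riemannZeta₁ s‖ * ((s.re - 1)⁻¹ * (9 * C))) := by
        gcongr
        exact hone.trans (by gcongr)
    _ = ‖riemannZeta₁ s‖ * (9 * C) := by field_simp

end PrimeExpSum

/-! ## The zero-free region -/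

namespace PrimeExpSum

open Filter Real
open scoped ArithmeticFunction.vonMangoldt

/-- The Dirichlet series `∑ Λ(n) n⁻ˢ`, that is `-ζ'(s) / ζ(s)` for `1 < s.re`. -/
noncomputable def vonMangoldtLSeries (s : ℂ) : ℂ := LSeries (fun n ↦ (Λ n : ℂ)) s

lemma vonMangoldtLSeries_eq_sub_logDeriv {s : ℂ} (hs : 1 < s.re) :
    vonMangoldtLSeries s = 1 / (s - 1) - logDeriv riemannZeta₁ s := by
  have hs1 : s ≠ 1 := fun h ↦ hs.ne' (h ▸ Complex.one_re)
  have h0 : s - 1 ≠ 0 := sub_ne_zero.2 hs1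
  have hne := riemannZeta₁_ne_zero_of_one_le_re hs.le
  rw [vonMangoldtLSeries, ArithmeticFunction.LSeries_vonMangoldt_eq_deriv_riemannZeta_div hs,
    deriv_riemannZeta_eq_neg_inv_sub_sq_mul_add hs1, riemannZeta_eq_inv_sub_mul hs1, logDeriv_apply]
  field_simp
  ring

lemma term_vonMangoldt_of_ne_zero {n : ℕ} (hn : n ≠ 0) (σ t : ℝ) :
    LSeries.term (fun n ↦ (Λ n : ℂ)) (σ + t * Complex.I) n =
      ((Λ n * (n : ℝ) ^ (-σ) : ℝ) : ℂ) * (n : ℂ) ^ (-(t * Complex.I)) := by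
  rw [LSeries.term_of_ne_zero hn, Complex.ofReal_mul, Complex.ofReal_cpow n.cast_nonneg,
    Complex.ofReal_natCast, Complex.ofReal_neg, mul_assoc,
    ← Complex.cpow_add _ _ (Nat.cast_ne_zero.2 hn), ← neg_add, Complex.cpow_neg, div_eq_mul_inv]

lemma three_add_four_mul_re_add_re_sq_nonneg {w : ℂ} (hw : ‖w‖ = 1) :
    0 ≤ 3 + 4 * w.re + (w ^ 2).re := by
  have hsq : w.re ^ 2 + w.im ^ 2 = 1 := by
    rw [← Complex.normSq_add_mul_I, Complex.re_add_im, Complex.normSq_eq_norm_sq, hw, one_pow]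
  calc 0 ≤ 2 * (1 + w.re) ^ 2 := by positivity
    _ = 3 + 4 * w.re + (w ^ 2).re := by
        rw [sq w, Complex.mul_re]
        linear_combination hsq

lemma re_vonMangoldtLSeries_nonneg {σ : ℝ} (hσ : 1 < σ) (t : ℝ) :
    0 ≤ 3 * (vonMangoldtLSeries σ).re + 4 * (vonMangoldtLSeries (σ + t * Complex.I)).re +
      (vonMangoldtLSeries (σ + (2 * t : ℝ) * Complex.I)).re := by
  have hsum (u : ℝ) := Complex.hasSum_re (ArithmeticFunction.LSeriesSummable_vonMangoldt
    (s := σ + u * Complex.I) (by simpa using hσ)).LSeriesHasSum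
  have hsum₀ := hsum 0
  rw [Complex.ofReal_zero, zero_mul, add_zero] at hsum₀
  refine (((hsum₀.mul_left 3).add ((hsum t).mul_left 4)).add (hsum (2 * t))).nonneg fun n ↦ ?_
  obtain rfl | hn := eq_or_ne n 0
  · simp
  have hw : ‖(n : ℂ) ^ (-(t * Complex.I))‖ = 1 := by
    rw [Complex.norm_natCast_cpow_of_pos (Nat.pos_of_ne_zero hn)]
    simp
  have hw2 : (n : ℂ) ^ (-((2 * t : ℝ) * Complex.I)) = ((n : ℂ) ^ (-(t * Complex.I))) ^ 2 := by
    rw [← Complex.cpow_nat_mul]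
    push_cast
    ring_nf
  have hq : 0 ≤ Λ n * (n : ℝ) ^ (-σ) :=
    mul_nonneg ArithmeticFunction.vonMangoldt_nonneg (by positivity)
  have hterm₀ := term_vonMangoldt_of_ne_zero hn σ 0
  rw [Complex.ofReal_zero, zero_mul, neg_zero, Complex.cpow_zero, mul_one, add_zero] at hterm₀
  rw [hterm₀, term_vonMangoldt_of_ne_zero hn, term_vonMangoldt_of_ne_zero hn, hw2,
    Complex.re_ofReal_mul, Complex.re_ofReal_mul, Complex.ofReal_re]
  linarith [mul_nonneg hq (three_add_four_mul_re_add_re_sq_nonneg hw)]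

lemma re_one_div_le_one {z : ℂ} (hz : 1 ≤ |z.im|) : (1 / z).re ≤ 1 := by
  refine (Complex.re_le_norm _).trans ?_
  have hnorm := hz.trans (Complex.abs_im_le_norm z)
  rw [norm_div, norm_one]
  exact (div_le_one (by linarith)).2 hnorm

lemma re_logDeriv_riemannZeta₁_le {σ t : ℝ} (hσ : 1 < σ) (ht : 1 ≤ |t|) :
    3 * (logDeriv riemannZeta₁ σ).re + 4 * (logDeriv riemannZeta₁ (σ + t * Complex.I)).re +
      (logDeriv riemannZeta₁ (σ + (2 * t : ℝ) * Complex.I)).re ≤ 3 / (σ - 1) + 5 := by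
  have hpole (u : ℝ) (hu : 1 ≤ |u|) : (1 / (σ + u * Complex.I - 1)).re ≤ 1 :=
    re_one_div_le_one (by simpa using hu)
  have hreal : (1 / (σ - 1 : ℂ)).re = 1 / (σ - 1) := by norm_cast
  have hnonneg := re_vonMangoldtLSeries_nonneg hσ t
  have hre (u : ℝ) : 1 < (σ + u * Complex.I).re := by simpa using hσ
  rw [vonMangoldtLSeries_eq_sub_logDeriv hσ, vonMangoldtLSeries_eq_sub_logDeriv (hre t),
    vonMangoldtLSeries_eq_sub_logDeriv (hre (2 * t)), Complex.sub_re, Complex.sub_re,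
    Complex.sub_re, hreal] at hnonneg
  have h2t : 1 ≤ |2 * t| := by
    rw [abs_mul, abs_two]
    linarith
  rw [← mul_one_div 3]
  linarith [hpole t ht, hpole (2 * t) h2t]

lemma exists_norm_riemannZeta₁_add_le :
    ∃ B ≥ 1, ∀ s w : ℂ, 1 + 1 / (|s.im| + 4) ≤ s.re → s.re ≤ 3 / 2 → ‖w‖ ≤ 1 / 2 →
      ‖riemannZeta₁ (s + w)‖ ≤ exp (B * log (|s.im| + 4)) * ‖riemannZeta₁ s‖ := by
  obtain ⟨C₁, hC₁, hupper⟩ := exists_norm_riemannZeta₁_le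
  obtain ⟨C₂, hC₂, hlower⟩ := exists_sq_div_le_norm_riemannZeta₁
  have hC : 1 ≤ C₁ * C₂ := one_le_mul_of_one_le_of_one_le hC₁ hC₂
  have hlogC : 0 ≤ log (C₁ * C₂) := log_nonneg hC
  refine ⟨4 + log (C₁ * C₂), by linarith, fun s w hs hs2 hw ↦ ?_⟩
  set y := |s.im| + 4
  have hy4 : 4 ≤ y := by linarith [abs_nonneg s.im]
  have hlog := one_le_log_of_three_le (by linarith : 3 ≤ y)
  have hyinv : 0 < 1 / y := by positivity
  have hre : 1 / 4 < (s + w).re := by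
    rw [Complex.add_re]
    linarith [(abs_le.1 ((Complex.abs_re_le_norm w).trans hw)).1]
  have hnorm : ‖s + w‖ + 1 ≤ y := by
    have habs := Complex.norm_le_abs_re_add_abs_im s
    rw [abs_of_pos (by linarith : 0 < s.re)] at habs
    linarith [norm_add_le s w]
  have hexp : C₁ * C₂ * y ^ 4 ≤ exp ((4 + log (C₁ * C₂)) * log y) := by
    calc C₁ * C₂ * y ^ 4 = exp (log (C₁ * C₂) + 4 * log y) := by
          rw [exp_add, exp_log (by linarith), mul_comm 4, exp_mul, exp_log (by linarith)]
          norm_cast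
      _ ≤ _ := exp_le_exp.2 (by nlinarith)
  calc ‖riemannZeta₁ (s + w)‖ ≤ C₁ * (‖s + w‖ + 1) ^ 2 := hupper _ hre
    _ ≤ C₁ * y ^ 2 := by gcongr
    _ = C₁ * C₂ * y ^ 4 * ((1 / y) ^ 2 / C₂) := by field_simp
    _ ≤ C₁ * C₂ * y ^ 4 * ((s.re - 1) ^ 2 / C₂) := by gcongr; linarith
    _ ≤ _ := mul_le_mul hexp (hlower s (by linarith) (by linarith)) (by positivity) (by positivity)

lemma exists_le_re_logDeriv_riemannZeta₁ :
    ∃ B ≥ 1, ∀ s : ℂ, 1 + 1 / (|s.im| + 4) ≤ s.re → s.re ≤ 3 / 2 →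
      -(B * log (|s.im| + 4)) ≤ (logDeriv riemannZeta₁ s).re ∧
      ∀ d : ℝ, 0 < d → d < 1 / 2 → riemannZeta₁ (s - d) = 0 →
        1 / d - 2 - B * log (|s.im| + 4) ≤ (logDeriv riemannZeta₁ s).re := by
  obtain ⟨B, hB, hgrowth⟩ := exists_norm_riemannZeta₁_add_le
  refine ⟨96 * B, by linarith, fun s hs hs2 ↦ ?_⟩
  have hlog := one_le_log_of_three_le (by linarith [abs_nonneg s.im] : 3 ≤ |s.im| + 4)
  have hM : 0 < B * log (|s.im| + 4) := by positivity
  have hbound (z : ℂ) (hz : ‖z - s‖ = 1 / 2) :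
      ‖riemannZeta₁ z‖ ≤ exp (B * log (|s.im| + 4)) * ‖riemannZeta₁ s‖ := by
    simpa only [add_sub_cancel] using hgrowth s (z - s) hs hs2 hz.le
  have hzeros (z : ℂ) (hz : riemannZeta₁ z = 0) : z.re < s.re := by
    have hyinv : 0 < 1 / (|s.im| + 4) := by positivity
    by_contra! hle
    exact riemannZeta₁_ne_zero_of_one_le_re (by linarith) hz
  refine ⟨?_, fun d hd0 hd2 hd ↦ ?_⟩
  · linarith [neg_le_mul_re_logDeriv one_half_pos differentiable_riemannZeta₁ hbound hzeros hM]
  · have hle := le_mul_re_logDeriv_of_eq_zero one_half_pos differentiable_riemannZeta₁ hbound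
      hzeros hM hd0 hd2 hd
    rw [div_right_comm, div_eq_mul_inv d, one_div 2, inv_inv] at hle
    linarith

lemma continuousOn_logDeriv_riemannZeta₁ :
    ContinuousOn (logDeriv riemannZeta₁) {s | 1 ≤ s.re} :=
  (differentiable_riemannZeta₁.deriv.continuous.continuousOn).div
    differentiable_riemannZeta₁.continuous.continuousOn
    fun _ hs ↦ riemannZeta₁_ne_zero_of_one_le_re hs

lemma exists_norm_logDeriv_riemannZeta₁_le_of_mem_Icc :
    ∃ C ≥ 0, ∀ σ ∈ Set.Icc (1 : ℝ) 2, ‖logDeriv riemannZeta₁ σ‖ ≤ C := by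
  obtain ⟨C, hC⟩ := isCompact_Icc.exists_bound_of_continuousOn
    (continuousOn_logDeriv_riemannZeta₁.comp Complex.continuous_ofReal.continuousOn
      fun σ (hσ : σ ∈ Set.Icc (1 : ℝ) 2) ↦ hσ.1)
  exact ⟨C, (norm_nonneg _).trans (hC 1 (by norm_num)), hC⟩

lemma log_abs_two_mul_add_four_le (t : ℝ) : log (|2 * t| + 4) ≤ 2 * log (|t| + 4) := by
  rw [← log_rpow (by positivity), abs_mul, abs_two]
  refine log_le_log (by positivity) ?_
  norm_cast
  nlinarith [abs_nonneg t]

lemma exists_four_div_le_of_riemannZeta₁_eq_zero :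
    ∃ Q ≥ 2, ∀ (s : ℂ) (δ : ℝ), riemannZeta₁ s = 0 → 1 ≤ |s.im| → 3 / 4 < s.re →
      1 / (|s.im| + 4) ≤ δ → δ ≤ 1 / 4 → 4 / (δ + (1 - s.re)) ≤ 3 / δ + Q * log (|s.im| + 4) := by
  obtain ⟨B, hB, hre⟩ := exists_le_re_logDeriv_riemannZeta₁
  obtain ⟨C, hC, hreal⟩ := exists_norm_logDeriv_riemannZeta₁_le_of_mem_Icc
  refine ⟨3 * C + 13 + 6 * B, by linarith, fun s δ h0 ht hs hδ hδ4 ↦ ?_⟩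
  set t := s.im
  have hlog := one_le_log_of_three_le (by linarith : 3 ≤ |t| + 4)
  have hδ0 : 0 < δ := hδ.trans_lt' (by positivity)
  have hs1 : s.re < 1 := by
    by_contra! h1
    exact riemannZeta₁_ne_zero_of_one_le_re h1 h0
  have him (u : ℝ) : ((1 + δ : ℝ) + u * Complex.I).im = u := by simp
  have hσ (u : ℝ) : ((1 + δ : ℝ) + u * Complex.I).re = 1 + δ := by simp
  have h341 := re_logDeriv_riemannZeta₁_le (lt_add_of_pos_right 1 hδ0) ht
  have hbase := (abs_le.1 ((Complex.abs_re_le_norm _).trans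
    (hreal (1 + δ) ⟨by linarith, by linarith⟩))).1
  have hzero := (hre ((1 + δ : ℝ) + t * Complex.I) (by rw [him, hσ]; linarith)
    (by rw [hσ]; linarith)).2 (δ + (1 - s.re)) (by linarith) (by linarith) (by
      rw [← h0]
      congr 1
      apply Complex.ext
      · rw [Complex.sub_re, hσ, Complex.ofReal_re]
        ring
      · rw [Complex.sub_im, him, Complex.ofReal_im, sub_zero])
  have hdouble := (hre ((1 + δ : ℝ) + (2 * t : ℝ) * Complex.I) (by
    rw [him, hσ]
    have hmono : 1 / (|2 * t| + 4) ≤ 1 / (|t| + 4) := by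
      rw [abs_mul, abs_two]
      gcongr
      linarith
    linarith) (by rw [hσ]; linarith)).1
  rw [him] at hzero hdouble
  have hlog2 := mul_le_mul_of_nonneg_left (log_abs_two_mul_add_four_le t) (by linarith : 0 ≤ B)
  have hconst : 3 * C + 13 ≤ (3 * C + 13) * log (|t| + 4) :=
    le_mul_of_one_le_right (by linarith) hlog
  rw [add_sub_cancel_left] at h341
  rw [← mul_one_div 4]
  linarith

lemma lt_of_four_div_add_le {Q L w : ℝ} (hQ : 0 < Q) (hL : 0 < L) (hw : 0 < w)
    (h : 4 / (1 / (2 * Q) / L + w) ≤ 3 / (1 / (2 * Q) / L) + Q * L) :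
    1 / (2 * Q) / 8 / L < w := by
  by_contra! hle
  have hlower : 4 / (1 / (2 * Q) / L * (9 / 8)) ≤ 4 / (1 / (2 * Q) / L + w) := by
    gcongr
    calc _ ≤ 1 / (2 * Q) / L + 1 / (2 * Q) / 8 / L := by gcongr
      _ = _ := by ring
  have hmain := hlower.trans h
  have hl : 4 / (1 / (2 * Q) / L * (9 / 8)) = 64 / 9 * (Q * L) := by
    field_simp
    norm_num
  have hr : 3 / (1 / (2 * Q) / L) + Q * L = 7 * (Q * L) := by
    field_simp
    norm_num
  rw [hl, hr] at hmain
  linarith [mul_pos hQ hL]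

lemma exists_riemannZeta₁_ne_zero_of_le_abs_im :
    ∃ κ > 0, ∃ T : ℝ, ∀ s : ℂ, T ≤ |s.im| → 1 - κ / log (|s.im| + 4) ≤ s.re →
      riemannZeta₁ s ≠ 0 := by
  obtain ⟨Q, hQ, hfour⟩ := exists_four_div_le_of_riemannZeta₁_eq_zero
  set k := 1 / (2 * Q)
  have hk0 : 0 < k := by positivity
  have hk4 : k ≤ 1 / 4 := one_div_le_one_div_of_le (by norm_num) (by linarith)
  obtain ⟨T, hT⟩ := eventually_atTop.1 (isLittleO_log_id_atTop.bound hk0)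
  refine ⟨k / 8, by positivity, max T 1, fun s hTs hs h0 ↦ ?_⟩
  have ht : 1 ≤ |s.im| := (le_max_right _ _).trans hTs
  set y := |s.im| + 4
  have hlog := one_le_log_of_three_le (by linarith : 3 ≤ y)
  have hδ : 1 / y ≤ k / log y := by
    have hle := hT y (by linarith [(le_max_left _ _).trans hTs])
    rw [norm_of_nonneg (by linarith), id, norm_of_nonneg (by linarith)] at hle
    rwa [div_le_div_iff₀ (by linarith) (by linarith), one_mul]
  have hδ4 : k / log y ≤ k := div_le_self hk0.le hlog
  have hδ8 : k / 8 / log y ≤ k / 8 := div_le_self (by positivity) hlog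
  have hs1 : s.re < 1 := by
    by_contra! h1
    exact riemannZeta₁_ne_zero_of_one_le_re h1 h0
  have hlt := lt_of_four_div_add_le (by linarith) (by linarith) (sub_pos.2 hs1)
    (hfour s (k / log y) h0 ht (by linarith) hδ (by linarith))
  linarith

lemma exists_riemannZeta₁_ne_zero : ∃ κ > 0, κ ≤ 1 / 4 ∧ ∀ (T : ℝ) (s : ℂ), |s.im| ≤ T →
    1 - κ / log (T + 4) ≤ s.re → riemannZeta₁ s ≠ 0 := by
  obtain ⟨k, hk, T₀, hlarge⟩ := exists_riemannZeta₁_ne_zero_of_le_abs_im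
  have hcompact : IsCompact ((fun t : ℝ ↦ (1 : ℂ) + t * Complex.I) '' Set.Icc (-T₀) T₀) :=
    isCompact_Icc.image (by fun_prop)
  obtain ⟨ε, hε, hsub⟩ := hcompact.exists_thickening_subset_open
    (isOpen_ne_fun differentiable_riemannZeta₁.continuous continuous_const) (by
      rintro z ⟨t, _, rfl⟩
      exact riemannZeta₁_ne_zero_of_one_le_re (by simp))
  set κ := min (1 / 4) (min k (ε / 2))
  have hκ0 : 0 < κ := by positivity
  have hκk : κ ≤ k := (min_le_right _ _).trans (min_le_left _ _)
  have hκε : κ ≤ ε / 2 := (min_le_right _ _).trans (min_le_right _ _)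
  refine ⟨κ, hκ0, min_le_left _ _, fun T s hT hs ↦ ?_⟩
  have hlog := one_le_log_of_three_le (by linarith [abs_nonneg s.im] : 3 ≤ |s.im| + 4)
  have hlogT : log (|s.im| + 4) ≤ log (T + 4) := log_le_log (by positivity) (by linarith)
  obtain h1 | h1 := le_or_gt 1 s.re
  · exact riemannZeta₁_ne_zero_of_one_le_re h1
  obtain ht | ht := le_or_gt T₀ |s.im|
  · have hle : κ / log (T + 4) ≤ k / log (|s.im| + 4) := by gcongr
    exact hlarge s ht (by linarith)
  · refine hsub (Metric.mem_thickening_iff.2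
      ⟨1 + s.im * Complex.I, ⟨s.im, abs_le.1 ht.le, rfl⟩, ?_⟩)
    have hdiff : s - (1 + s.im * Complex.I) = ((s.re - 1 : ℝ) : ℂ) := by
      apply Complex.ext <;> simp
    have hle : κ / log (T + 4) ≤ κ := div_le_self hκ0.le (by linarith)
    rw [dist_eq_norm, hdiff, Complex.norm_real, norm_eq_abs, abs_of_neg (by linarith)]
    linarith

end PrimeExpSum

/-! ## Bounds for the logarithmic derivative near the line `re s = 1` -/

namespace PrimeExpSum

open Metric Real
open scoped ArithmeticFunction.vonMangoldt

lemma exists_norm_riemannZeta₁_le_exp_mul {k : ℝ} (hk : 0 < k) :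
    ∃ B > 0, ∀ y ≥ 3, ∀ a s : ℂ, 1 + k / log y ≤ a.re → a.re ≤ 2 → 1 / 4 < s.re → ‖s‖ + 1 ≤ y →
      ‖riemannZeta₁ s‖ ≤ exp (B * log y) * ‖riemannZeta₁ a‖ := by
  obtain ⟨C₁, hC₁, hup⟩ := exists_norm_riemannZeta₁_le
  obtain ⟨C₂, hC₂, hlow⟩ := exists_sq_div_le_norm_riemannZeta₁
  set A := C₁ * C₂ / k ^ 2 with hA
  refine ⟨4 + |log A|, by positivity, fun y hy a s ha ha2 hs hsy ↦ ?_⟩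
  have hL := one_le_log_of_three_le hy
  have hy0 : 0 < y := by linarith
  have hA_exp : A * y ^ 4 ≤ exp ((4 + |log A|) * log y) := by
    have : A * y ^ 4 = exp (log A + 4 * log y) := by
      rw [exp_add, exp_log (by positivity), mul_comm 4, exp_mul, exp_log hy0]
      norm_cast
    rw [this]
    gcongr
    nlinarith [le_abs_self (log A), abs_nonneg (log A)]
  have hka : k / y ≤ a.re - 1 := by
    have : k / y ≤ k / log y := by
      gcongr
      exact (log_le_sub_one_of_pos hy0).trans (by linarith)
    linarith
  have ha1 : 1 < a.re := by linarith [div_pos hk hy0]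
  calc ‖riemannZeta₁ s‖ ≤ C₁ * (‖s‖ + 1) ^ 2 := hup s hs
    _ ≤ C₁ * y ^ 2 := by gcongr
    _ = A * y ^ 4 * ((k / y) ^ 2 / C₂) := by rw [hA]; field_simp
    _ ≤ exp ((4 + |log A|) * log y) * ((a.re - 1) ^ 2 / C₂) := by gcongr
    _ ≤ exp ((4 + |log A|) * log y) * ‖riemannZeta₁ a‖ := by gcongr; exact hlow a ha1 ha2

lemma bounds_of_mem_ball {δ t T : ℝ} {w : ℂ} (hδ : δ ≤ 1 / 12) (ht : |t| ≤ T)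
    (hw : w ∈ ball (⟨1 + δ, t⟩ : ℂ) (4 * δ)) :
    1 - 3 * δ ≤ w.re ∧ |w.im| ≤ T + 1 ∧ ‖w‖ + 1 ≤ T + 5 := by
  rw [mem_ball_iff_norm] at hw
  have hre := abs_le.mp ((Complex.abs_re_le_norm _).trans hw.le)
  have him := abs_le.mp ((Complex.abs_im_le_norm _).trans hw.le)
  obtain ⟨ht1, ht2⟩ := abs_le.mp ht
  rw [Complex.sub_re] at hre
  rw [Complex.sub_im] at him
  have hw_im : |w.im| ≤ T + 1 := abs_le.mpr ⟨by linarith, by linarith⟩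
  have hw_re : |w.re| ≤ 2 := abs_le.mpr ⟨by linarith, by linarith⟩
  exact ⟨by linarith, hw_im, by linarith [Complex.norm_le_abs_re_add_abs_im w]⟩

lemma exists_norm_logDeriv_riemannZeta₁_le :
    ∃ κ > 0, κ ≤ 1 / 12 ∧ ∃ C > 0, ∀ T ≥ 0, ∀ s : ℂ, |s.im| ≤ T → |s.re - 1| ≤ κ / log (T + 5) →
      riemannZeta₁ s ≠ 0 ∧ ‖logDeriv riemannZeta₁ s‖ ≤ C * log (T + 5) ^ 2 := by
  obtain ⟨k, hk0, hk4, hzero⟩ := exists_riemannZeta₁_ne_zero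
  obtain ⟨B, hB, hgrowth⟩ := exists_norm_riemannZeta₁_le_exp_mul (k := k / 3) (by positivity)
  refine ⟨k / 3, by positivity, by linarith, 18 * B / k, by positivity, fun T hT s hsT hsr ↦ ?_⟩
  have hL := one_le_log_of_three_le (X := T + 5) (by linarith)
  set L := log (T + 5) with hL_def
  set δ := k / 3 / L with hδ
  have hδ0 : 0 < δ := by positivity
  have hδ1 : δ ≤ 1 / 12 := (div_le_self (by positivity) hL).trans (by linarith)
  obtain ⟨hs1, hs2⟩ := abs_le.mp hsr
  have hne {w : ℂ} (hi : |w.im| ≤ T + 1) (hr : 1 - 3 * δ ≤ w.re) : riemannZeta₁ w ≠ 0 := by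
    refine hzero (T + 1) w hi ?_
    have : k / L = 3 * δ := by rw [hδ]; field_simp
    rw [show T + 1 + 4 = T + 5 by ring, ← hL_def]
    linarith
  refine ⟨hne (by linarith) (by linarith), ?_⟩
  set a : ℂ := ⟨1 + δ, s.im⟩ with ha
  have hball {w : ℂ} (hw : w ∈ ball a (4 * δ)) := bounds_of_mem_ball hδ1 hsT hw
  have hsa : ‖s - a‖ ≤ 4 * δ / 2 := by
    have : s - a = ((s.re - 1 - δ : ℝ) : ℂ) := by
      apply Complex.ext <;> simp [ha]
      ring
    rw [this, Complex.norm_real, norm_eq_abs, abs_le]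
    constructor <;> linarith
  have hbound : 4 * δ * ‖logDeriv riemannZeta₁ s‖ ≤ 24 * (B * L) := by
    refine norm_mul_logDeriv_le_of_ball (by positivity) differentiable_riemannZeta₁.differentiableOn
      (fun w hw ↦ hne (hball hw).2.1 (hball hw).1) (by positivity) (fun w hw ↦ ?_) hsa
    refine hgrowth (T + 5) (by linarith) a w le_rfl ?_ ?_ (hball hw).2.2
    · simp only [ha]; linarith
    · linarith [(hball hw).1]
  have hconst : 4 * δ * (18 * B / k * L ^ 2) = 24 * (B * L) := by
    rw [hδ]; field_simp; norm_num
  rw [← hconst] at hbound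
  exact le_of_mul_le_mul_left hbound (by positivity)

lemma norm_vonMangoldtLSeries_le_re {s : ℂ} (hs : 1 < s.re) :
    ‖vonMangoldtLSeries s‖ ≤ ‖vonMangoldtLSeries s.re‖ := by
  have hs' : 1 < (s.re : ℂ).re := hs
  refine le_trans ?_ (Complex.re_le_norm _)
  refine tsum_of_norm_bounded (Complex.hasSum_re
    (ArithmeticFunction.LSeriesSummable_vonMangoldt hs').LSeriesHasSum) fun n ↦ ?_
  rcases eq_or_ne n 0 with rfl | hn
  · simp
  have hterm : (Λ n : ℂ) / (n : ℂ) ^ (s.re : ℂ) = ((Λ n / (n : ℝ) ^ s.re : ℝ) : ℂ) := by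
    push_cast
    rw [Complex.ofReal_cpow (by positivity), Complex.ofReal_natCast]
  rw [LSeries.norm_term_eq, if_neg hn, LSeries.term_of_ne_zero hn, hterm, Complex.ofReal_re,
    Complex.norm_real, norm_of_nonneg ArithmeticFunction.vonMangoldt_nonneg]

lemma norm_one_div_sub_one_le {s : ℂ} (hs : 1 < s.re) : ‖1 / (s - 1)‖ ≤ 1 / (s.re - 1) := by
  rw [norm_div, norm_one]
  apply one_div_le_one_div_of_le (by linarith)
  simpa using Complex.re_le_norm (s - 1)

lemma exists_norm_logDeriv_riemannZeta₁_le_div :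
    ∃ C > 0, ∀ s : ℂ, 1 < s.re → s.re ≤ 2 → ‖logDeriv riemannZeta₁ s‖ ≤ C / (s.re - 1) := by
  obtain ⟨C, hC, hreal⟩ := exists_norm_logDeriv_riemannZeta₁_le_of_mem_Icc
  refine ⟨2 + C, by positivity, fun s h1 h2 ↦ ?_⟩
  have hd : 0 < s.re - 1 := by linarith
  have hpole := norm_one_div_sub_one_le h1
  have hLS : ‖vonMangoldtLSeries s‖ ≤ 1 / (s.re - 1) + C := by
    refine (norm_vonMangoldtLSeries_le_re h1).trans ?_
    rw [vonMangoldtLSeries_eq_sub_logDeriv (by simpa using h1)]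
    exact norm_sub_le_of_le (norm_one_div_sub_one_le (s := s.re) h1) (hreal _ ⟨h1.le, h2⟩)
  have hsub : logDeriv riemannZeta₁ s = 1 / (s - 1) - vonMangoldtLSeries s := by
    rw [vonMangoldtLSeries_eq_sub_logDeriv h1]; ring
  calc ‖logDeriv riemannZeta₁ s‖ ≤ 1 / (s.re - 1) + (1 / (s.re - 1) + C) := by
        rw [hsub]; exact norm_sub_le_of_le hpole hLS
    _ ≤ 1 / (s.re - 1) + (1 / (s.re - 1) + C / (s.re - 1)) := by
        gcongr
        exact le_div_self hC hd (by linarith)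
    _ = (2 + C) / (s.re - 1) := by ring

end PrimeExpSum

/-! ## Perron's formula for Riesz means -/

namespace PrimeExpSum

open Set Real
open scoped ArithmeticFunction.vonMangoldt

/-- The point `σ + i y`, used to parametrise the line `re s = σ` by `y : ℝ`. -/
noncomputable def verticalLine (σ y : ℝ) : ℂ := σ + y * Complex.I

@[simp]
lemma re_verticalLine (σ y : ℝ) : (verticalLine σ y).re = σ := by simp [verticalLine]

@[simp]
lemma im_verticalLine (σ y : ℝ) : (verticalLine σ y).im = y := by simp [verticalLine]

@[fun_prop]
lemma continuous_verticalLine (σ : ℝ) : Continuous (verticalLine σ) := by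
  unfold verticalLine; fun_prop

/-- The kernel `1 / (s (s + 1))` of Perron's formula for Riesz means of order one. -/
noncomputable def rieszKernel (s : ℂ) : ℂ := 1 / (s * (s + 1))

section Kernel

variable {s : ℂ} {σ : ℝ}

lemma norm_rieszKernel_le (hs : 1 / 2 ≤ s.re) : ‖rieszKernel s‖ ≤ 4 * (1 + s.im ^ 2)⁻¹ := by
  have hnorm : ‖s‖ ^ 2 = s.re ^ 2 + s.im ^ 2 := by
    rw [Complex.sq_norm, Complex.normSq_apply]; ring
  have hle : ‖s‖ ≤ ‖s + 1‖ := by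
    refine le_of_sq_le_sq ?_ (norm_nonneg _)
    rw [hnorm, Complex.sq_norm, Complex.normSq_apply, Complex.add_re, Complex.add_im,
      Complex.one_re, Complex.one_im]
    nlinarith
  have hlow : (1 + s.im ^ 2) / 4 ≤ ‖s‖ * ‖s + 1‖ := by
    calc (1 + s.im ^ 2) / 4 ≤ ‖s‖ ^ 2 := by rw [hnorm]; nlinarith
      _ = ‖s‖ * ‖s‖ := sq _
      _ ≤ ‖s‖ * ‖s + 1‖ := by gcongr
  calc ‖rieszKernel s‖ = 1 / (‖s‖ * ‖s + 1‖) := by rw [rieszKernel, norm_div, norm_one, norm_mul]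
    _ ≤ 1 / ((1 + s.im ^ 2) / 4) := one_div_le_one_div_of_le (by positivity) hlow
    _ = 4 * (1 + s.im ^ 2)⁻¹ := by field_simp

lemma differentiableAt_rieszKernel (hs : 0 < s.re) : DifferentiableAt ℂ rieszKernel s := by
  have h0 : s ≠ 0 := by rintro rfl; simp at hs
  have h1 : s + 1 ≠ 0 := by
    intro h
    have := congrArg Complex.re h
    rw [Complex.add_re, Complex.one_re, Complex.zero_re] at this
    linarith
  unfold rieszKernel
  exact DifferentiableAt.div (by fun_prop) (by fun_prop) (mul_ne_zero h0 h1)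

lemma continuous_rieszKernel_verticalLine (hσ : 0 < σ) :
    Continuous fun y ↦ rieszKernel (verticalLine σ y) :=
  continuous_iff_continuousAt.2 fun _ ↦
    (differentiableAt_rieszKernel (by simpa using hσ)).continuousAt.comp
      (continuous_verticalLine σ).continuousAt

lemma integrable_rieszKernel_verticalLine (hσ : 1 / 2 ≤ σ) :
    Integrable fun y ↦ rieszKernel (verticalLine σ y) := by
  refine (integrable_inv_one_add_sq.const_mul 4).mono'
    (continuous_rieszKernel_verticalLine (by linarith)).aestronglyMeasurable (.of_forall fun y ↦ ?_)
  simpa using norm_rieszKernel_le (s := verticalLine σ y) (by simpa using hσ)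

lemma integrable_mul_rieszKernel (hσ : 1 / 2 ≤ σ) {f : ℝ → ℂ} (hf : Continuous f) {C : ℝ}
    (hC : ∀ y, ‖f y‖ ≤ C) : Integrable fun y ↦ f y * rieszKernel (verticalLine σ y) :=
  (integrable_rieszKernel_verticalLine hσ).bdd_mul hf.aestronglyMeasurable (.of_forall hC)

end Kernel

section Mellin

variable {σ u : ℝ}

/-- The weight `(1 - u)₊` of the Riesz mean of order one. -/
noncomputable def rieszWeight (u : ℝ) : ℂ := (max (1 - u) 0 : ℝ)

/-- The integral `∫ t in Ioi 1, (1 - t * u)₊`, in closed form. With `u = 1 / x` it is the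
contribution of the pole of `ζ` at `1`. -/
noncomputable def integratedRieszWeight (u : ℝ) : ℂ := (max (1 - u) 0 ^ 2 / (2 * u) : ℝ)

lemma hasMellin_congr {f g : ℝ → ℂ} {s m : ℂ} (h : HasMellin f s m) (hfg : EqOn f g (Ioi 0)) :
    HasMellin g s m := by
  have hcongr : EqOn (fun t : ℝ ↦ (t : ℂ) ^ (s - 1) • f t) (fun t ↦ (t : ℂ) ^ (s - 1) • g t)
      (Ioi 0) := fun t ht ↦ by simp only [hfg ht]
  exact ⟨h.1.congr_fun hcongr measurableSet_Ioi,
    (setIntegral_congr_fun measurableSet_Ioi hcongr).symm.trans h.2⟩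

lemma hasMellin_rieszWeight {s : ℂ} (hs : 0 < s.re) : HasMellin rieszWeight s (rieszKernel s) := by
  have hone := hasMellin_one_Ioc hs
  have hid := hasMellin_cpow_Ioc 1 (s := s) (by rw [Complex.one_re]; linarith)
  have hsub := hasMellin_sub hone.1 hid.1
  rw [hone.2, hid.2] at hsub
  have h0 : s ≠ 0 := by rintro rfl; simp at hs
  have h1 : s + 1 ≠ 0 := by
    intro h
    have := congrArg Complex.re h
    rw [Complex.add_re, Complex.one_re, Complex.zero_re] at this
    linarith
  have hkernel : rieszKernel s = 1 / s - 1 / (s + 1) := by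
    rw [rieszKernel]; field_simp; ring
  rw [hkernel]
  refine hasMellin_congr hsub fun u (hu : 0 < u) ↦ ?_
  by_cases h : u ≤ 1
  · simp [rieszWeight, indicator, hu, h]
  · simp [rieszWeight, h, (not_le.1 h).le]

lemma hasMellin_integratedRieszWeight {s : ℂ} (hs : 1 < s.re) :
    HasMellin integratedRieszWeight s (1 / (s - 1) * rieszKernel s) := by
  have hone := hasMellin_one_Ioc (s := s) (by linarith)
  have hinv := hasMellin_cpow_Ioc (-1) (s := s) (by
    rw [Complex.neg_re, Complex.one_re]; linarith)
  have hweight := hasMellin_rieszWeight (s := s) (by linarith)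
  have hsub := hasMellin_sub hinv.1 hone.1
  have hhalf := hasMellin_const_smul hsub.1 (1 / 2 : ℂ)
  have hhalf' := hasMellin_const_smul hweight.1 (1 / 2 : ℂ)
  have h := hasMellin_sub hhalf.1 hhalf'.1
  rw [hhalf.2, hhalf'.2, hsub.2, hone.2, hinv.2, hweight.2] at h
  have hne (a : ℝ) (ha : -1 ≤ a) : s + a ≠ 0 := by
    intro h
    have := congrArg Complex.re h
    rw [Complex.add_re, Complex.ofReal_re, Complex.zero_re] at this
    linarith
  have h0 : s ≠ 0 := by simpa using hne 0 (by norm_num)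
  have h1 : s + 1 ≠ 0 := by simpa using hne 1 (by norm_num)
  have h2 : s - 1 ≠ 0 := by simpa [sub_eq_add_neg] using hne (-1) le_rfl
  have hkernel : 1 / (s - 1) * rieszKernel s =
      (1 / 2 : ℂ) • (1 / (s + -1) - 1 / s) - (1 / 2 : ℂ) • rieszKernel s := by
    rw [rieszKernel, ← sub_eq_add_neg]; simp only [smul_eq_mul]; field_simp; ring
  rw [hkernel]
  refine hasMellin_congr h fun u (hu : 0 < u) ↦ ?_
  by_cases h : u ≤ 1
  · have hu0 : (u : ℂ) ≠ 0 := mod_cast hu.ne'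
    simp only [rieszWeight, integratedRieszWeight, indicator, mem_Ioc, hu, h, and_self, if_true,
      max_eq_left (sub_nonneg.2 h), Complex.cpow_neg_one, smul_eq_mul]
    push_cast
    field_simp
  · simp [rieszWeight, integratedRieszWeight, h, (not_le.1 h).le]

lemma inv_two_pi_smul_integral_eq {f : ℝ → ℂ} {F : ℂ → ℂ} (hu : 0 < u)
    (hF : ∀ s : ℂ, s.re = σ → HasMellin f s (F s))
    (hint : Integrable fun y ↦ F (verticalLine σ y)) (hf : ContinuousAt f u) :
    (1 / (2 * π)) • ∫ y : ℝ, (u : ℂ) ^ (-verticalLine σ y) * F (verticalLine σ y) = f u := by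
  have hmellin (y : ℝ) : mellin f (verticalLine σ y) = F (verticalLine σ y) :=
    (hF _ (re_verticalLine σ y)).2
  rw [← mellinInv_mellin_eq σ f hu (hF σ (Complex.ofReal_re σ)).1
    (hint.congr (.of_forall fun y ↦ (hmellin y).symm)) hf, mellinInv]
  simp_rw [← hmellin]
  rfl

lemma integral_cpow_mul_rieszKernel (hσ : 1 / 2 ≤ σ) (hu : 0 < u) :
    (1 / (2 * π)) • ∫ y : ℝ, (u : ℂ) ^ (-verticalLine σ y) * rieszKernel (verticalLine σ y) =
      rieszWeight u :=
  inv_two_pi_smul_integral_eq hu (fun _ hs ↦ hasMellin_rieszWeight (by linarith))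
    (integrable_rieszKernel_verticalLine hσ) (by unfold rieszWeight; fun_prop)

lemma continuous_one_div_verticalLine_sub_one (hσ : 1 < σ) :
    Continuous fun y ↦ 1 / (verticalLine σ y - 1) := by
  refine continuous_const.div (by fun_prop) fun y h ↦ ?_
  have := congrArg Complex.re h
  rw [Complex.sub_re, re_verticalLine, Complex.one_re, Complex.zero_re] at this
  linarith

lemma norm_one_div_verticalLine_sub_one_le (hσ : 1 < σ) (y : ℝ) :
    ‖1 / (verticalLine σ y - 1)‖ ≤ 1 / (σ - 1) := by
  simpa using norm_one_div_sub_one_le (s := verticalLine σ y) (by simpa using hσ)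

lemma integral_cpow_mul_one_div_mul_rieszKernel (hσ : 1 < σ) (hu : 0 < u) :
    (1 / (2 * π)) • ∫ y : ℝ, (u : ℂ) ^ (-verticalLine σ y) *
      (1 / (verticalLine σ y - 1) * rieszKernel (verticalLine σ y)) = integratedRieszWeight u := by
  refine inv_two_pi_smul_integral_eq (F := fun s ↦ 1 / (s - 1) * rieszKernel s) hu
    (fun _ hs ↦ hasMellin_integratedRieszWeight (by linarith))
    (integrable_mul_rieszKernel (by linarith) (continuous_one_div_verticalLine_sub_one hσ)
      (norm_one_div_verticalLine_sub_one_le hσ)) ?_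
  unfold integratedRieszWeight
  refine Complex.continuous_ofReal.continuousAt.comp ?_
  exact ContinuousAt.div (by fun_prop) (by fun_prop) (by positivity)

end Mellin

end PrimeExpSum

namespace PrimeExpSum

open Set Real Chebyshev
open scoped ArithmeticFunction.vonMangoldt

/-- The integrated Chebyshev function `ψ₁(x) = ∑_{n ≤ x} Λ(n) (x - n) = ∫₀ˣ ψ`. -/
noncomputable def psi₁ (x : ℝ) : ℝ := ∑ n ∈ Finset.Ioc 0 ⌊x⌋₊, Λ n * (x - n)

section Perron

variable {x σ : ℝ}

lemma hasSum_vonMangoldt_mul_rieszWeight (hx : 0 < x) :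
    HasSum (fun n : ℕ ↦ (Λ n : ℂ) * rieszWeight (n / x)) ((psi₁ x / x : ℝ) : ℂ) := by
  have hterm {n : ℕ} (hn : n ∈ Finset.Ioc 0 ⌊x⌋₊) :
      (Λ n : ℂ) * rieszWeight (n / x) = ((Λ n * (x - n) / x : ℝ) : ℂ) := by
    have hnx : (n : ℝ) / x ≤ 1 :=
      (div_le_one hx).2 ((Nat.le_floor_iff hx.le).1 (Finset.mem_Ioc.1 hn).2)
    rw [rieszWeight, max_eq_left (sub_nonneg.2 hnx), ← Complex.ofReal_mul]
    congr 1
    field_simp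
  rw [psi₁, Finset.sum_div, Complex.ofReal_sum, ← Finset.sum_congr rfl fun n hn ↦ hterm hn]
  refine hasSum_sum_of_ne_finset_zero fun n hn ↦ ?_
  rcases Nat.eq_zero_or_pos n with rfl | hn0
  · simp
  have hxn : x < n := by
    rw [Finset.mem_Ioc, not_and, not_le] at hn
    exact (Nat.floor_lt hx.le).1 (hn hn0)
  have : 1 - (n : ℝ) / x ≤ 0 := sub_nonpos.2 ((one_le_div hx).2 hxn.le)
  rw [rieszWeight, max_eq_right this, Complex.ofReal_zero, mul_zero]

lemma div_cpow_neg {n : ℝ} (hn : 0 < n) (hx : 0 < x) (s : ℂ) :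
    ((n / x : ℝ) : ℂ) ^ (-s) = (n : ℂ) ^ (-s) * (x : ℂ) ^ s := by
  have hx' : (x : ℂ) ≠ 0 := mod_cast hx.ne'
  have hn' : (n : ℂ) = ((n / x : ℝ) : ℂ) * (x : ℂ) := by push_cast; field_simp
  rw [hn', Complex.mul_cpow_ofReal_nonneg (by positivity) hx.le, mul_assoc,
    ← Complex.cpow_add _ _ hx', neg_add_cancel, Complex.cpow_zero, mul_one]

lemma continuous_cpow_verticalLine (hx : 0 < x) (σ : ℝ) :
    Continuous fun y ↦ (x : ℂ) ^ verticalLine σ y :=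
  (continuous_verticalLine σ).const_cpow (.inl (mod_cast hx.ne'))

lemma norm_cpow_verticalLine (hx : 0 < x) (σ y : ℝ) : ‖(x : ℂ) ^ verticalLine σ y‖ = x ^ σ := by
  rw [Complex.norm_cpow_eq_rpow_re_of_pos hx, re_verticalLine]

lemma integrable_cpow_neg_mul_rieszKernel (hσ : 1 / 2 ≤ σ) (hx : 0 < x) :
    Integrable fun y ↦ (x : ℂ) ^ (-verticalLine σ y) * rieszKernel (verticalLine σ y) := by
  refine integrable_mul_rieszKernel hσ
    ((continuous_verticalLine σ).neg.const_cpow (.inl (mod_cast hx.ne'))) (C := x ^ (-σ))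
    fun y ↦ ?_
  rw [Complex.norm_cpow_eq_rpow_re_of_pos hx, Complex.neg_re, re_verticalLine]

lemma hasSum_vonMangoldt_mul_rieszWeight_integral (hσ : 1 < σ) (hx : 0 < x) :
    HasSum (fun n : ℕ ↦ (Λ n : ℂ) * rieszWeight (n / x))
      ((1 / (2 * π)) • ∫ y : ℝ, (x : ℂ) ^ verticalLine σ y *
        vonMangoldtLSeries (verticalLine σ y) * rieszKernel (verticalLine σ y)) := by
  let a (y : ℝ) (n : ℕ) : ℂ := LSeries.term (fun n ↦ (Λ n : ℂ)) (verticalLine σ y) n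
  let F (n : ℕ) (y : ℝ) : ℂ :=
    a y n * ((x : ℂ) ^ verticalLine σ y * rieszKernel (verticalLine σ y))
  have hF {n : ℕ} (hn : n ≠ 0) (y : ℝ) : F n y = (Λ n : ℂ) *
      (((n / x : ℝ) : ℂ) ^ (-verticalLine σ y) * rieszKernel (verticalLine σ y)) := by
    simp only [F, a]
    rw [LSeries.term_of_ne_zero hn, div_cpow_neg (by positivity) hx, Complex.cpow_neg,
      Complex.ofReal_natCast]
    ring
  have hF_zero : F 0 = 0 := by ext; simp [F, a]
  have hint (n : ℕ) : Integrable (F n) := by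
    rcases eq_or_ne n 0 with rfl | hn
    · rw [hF_zero]; exact integrable_zero _ _ _
    · rw [funext (hF hn)]
      exact (integrable_cpow_neg_mul_rieszKernel (by linarith) (by positivity)).const_mul _
  have hnorm (n : ℕ) (y : ℝ) : ‖F n y‖ =
      ‖a 0 n‖ * ‖(x : ℂ) ^ verticalLine σ y * rieszKernel (verticalLine σ y)‖ := by
    simp only [F, a, norm_mul, LSeries.norm_term_eq, re_verticalLine]
  have hsummable : Summable fun n ↦ ∫ y, ‖F n y‖ := by
    simp_rw [hnorm, integral_const_mul]
    exact (ArithmeticFunction.LSeriesSummable_vonMangoldt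
      (s := verticalLine σ 0) (by simpa using hσ)).norm.mul_right _
  have hterm (n : ℕ) : (Λ n : ℂ) * rieszWeight (n / x) = (1 / (2 * π)) • ∫ y, F n y := by
    rcases eq_or_ne n 0 with rfl | hn
    · simp [hF_zero]
    · rw [← integral_cpow_mul_rieszKernel (by linarith : 1 / 2 ≤ σ)
          (by positivity : 0 < (n : ℝ) / x),
        funext (hF hn), integral_const_mul, mul_smul_comm]
  have hsum (y : ℝ) : (x : ℂ) ^ verticalLine σ y * vonMangoldtLSeries (verticalLine σ y) *
      rieszKernel (verticalLine σ y) = ∑' n, F n y := by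
    simp only [F, a]
    rw [tsum_mul_right, vonMangoldtLSeries, LSeries]
    ring
  simp_rw [hterm, hsum]
  exact (hasSum_integral_of_summable_integral_norm hint hsummable).const_smul _

lemma continuous_logDeriv_riemannZeta₁_verticalLine (hσ : 1 ≤ σ) :
    Continuous fun y ↦ logDeriv riemannZeta₁ (verticalLine σ y) :=
  continuousOn_logDeriv_riemannZeta₁.comp_continuous (continuous_verticalLine σ) fun y ↦ by
    simpa using hσ

/-- The integrand `xˢ (1 / (s - 1) + ζ'(s) / ζ(s)) / (s (s + 1))` of Perron's formula for
`psi₁ x / x`, with the contribution of the pole of `ζ` taken out. -/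
noncomputable def perronIntegrand (x : ℝ) (s : ℂ) : ℂ :=
  (x : ℂ) ^ s * logDeriv riemannZeta₁ s * rieszKernel s

lemma integrable_perronIntegrand (hσ : 1 < σ) (hσ2 : σ ≤ 2) (hx : 0 < x) :
    Integrable fun y ↦ perronIntegrand x (verticalLine σ y) := by
  obtain ⟨C, -, hC⟩ := exists_norm_logDeriv_riemannZeta₁_le_div
  refine integrable_mul_rieszKernel (by linarith) ((continuous_cpow_verticalLine hx σ).mul
    (continuous_logDeriv_riemannZeta₁_verticalLine hσ.le)) (C := x ^ σ * (C / (σ - 1))) fun y ↦ ?_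
  have hy := hC (verticalLine σ y) (by simpa using hσ) (by simpa using hσ2)
  rw [re_verticalLine] at hy
  rw [norm_mul, norm_cpow_verticalLine hx]
  gcongr

lemma integrable_cpow_mul_one_div_mul_rieszKernel (hσ : 1 < σ) (hx : 0 < x) :
    Integrable fun y ↦ (x : ℂ) ^ verticalLine σ y * (1 / (verticalLine σ y - 1)) *
      rieszKernel (verticalLine σ y) := by
  refine integrable_mul_rieszKernel (by linarith) ((continuous_cpow_verticalLine hx σ).mul
    (continuous_one_div_verticalLine_sub_one hσ)) (C := x ^ σ * (1 / (σ - 1))) fun y ↦ ?_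
  have := norm_one_div_verticalLine_sub_one_le hσ y
  rw [norm_mul, norm_cpow_verticalLine hx]
  gcongr

lemma integral_cpow_mul_one_div_mul_rieszKernel_eq (hσ : 1 < σ) (hx : 1 ≤ x) :
    (1 / (2 * π)) • ∫ y : ℝ, (x : ℂ) ^ verticalLine σ y * (1 / (verticalLine σ y - 1)) *
      rieszKernel (verticalLine σ y) = ((x / 2 - 1 + 1 / (2 * x) : ℝ) : ℂ) := by
  have hx0 : 0 < x := by linarith
  have hweight : integratedRieszWeight (1 / x) = ((x / 2 - 1 + 1 / (2 * x) : ℝ) : ℂ) := by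
    have : 1 / x ≤ 1 := (div_le_one hx0).2 hx
    rw [integratedRieszWeight, max_eq_left (by linarith)]
    congr 1
    field_simp
    ring
  rw [← hweight, ← integral_cpow_mul_one_div_mul_rieszKernel hσ (by positivity)]
  congr 2 with y
  rw [div_cpow_neg one_pos hx0, Complex.ofReal_one, Complex.one_cpow]
  ring

lemma psi₁_div_sub_eq (hσ : 1 < σ) (hσ2 : σ ≤ 2) (hx : 1 ≤ x) :
    ((psi₁ x / x - (x / 2 - 1 + 1 / (2 * x)) : ℝ) : ℂ) =
      -((1 / (2 * π)) • ∫ y : ℝ, perronIntegrand x (verticalLine σ y)) := by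
  have hx0 : 0 < x := by linarith
  have hsplit (y : ℝ) : (x : ℂ) ^ verticalLine σ y * vonMangoldtLSeries (verticalLine σ y) *
      rieszKernel (verticalLine σ y) =
      (x : ℂ) ^ verticalLine σ y * (1 / (verticalLine σ y - 1)) * rieszKernel (verticalLine σ y) -
        perronIntegrand x (verticalLine σ y) := by
    rw [perronIntegrand, vonMangoldtLSeries_eq_sub_logDeriv (by simpa using hσ)]
    ring
  rw [Complex.ofReal_sub, (hasSum_vonMangoldt_mul_rieszWeight hx0).unique
    (hasSum_vonMangoldt_mul_rieszWeight_integral hσ hx0),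
    ← integral_cpow_mul_one_div_mul_rieszKernel_eq hσ hx]
  simp_rw [hsplit]
  rw [integral_sub (integrable_cpow_mul_one_div_mul_rieszKernel hσ hx0)
    (integrable_perronIntegrand hσ hσ2 hx0), smul_sub]
  ring

end Perron

end PrimeExpSum

/-! ## Moving the contour -/

namespace PrimeExpSum

open Set Real

lemma pi_div_two_sub_arctan_le {T : ℝ} (hT : 0 < T) : π / 2 - arctan T ≤ 1 / T := by
  have h := le_tan (arctan_nonneg.2 (inv_nonneg.2 hT.le)) (arctan_lt_pi_div_two T⁻¹)
  rwa [tan_arctan, arctan_inv_of_pos hT, ← one_div] at h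

lemma norm_integral_le_of_norm_le_inv_one_add_sq {f : ℝ → ℂ} (hf : Integrable f) {K T : ℝ}
    (hT : 0 < T) (hK : 0 ≤ K) (hfK : ∀ y, ‖f y‖ ≤ K * (1 + y ^ 2)⁻¹) :
    ‖∫ y, f y‖ ≤ ‖∫ y in (-T)..T, f y‖ + 2 * K / T := by
  have hdom := integrable_inv_one_add_sq.const_mul K
  have htail : K * (π / 2 - arctan T) ≤ K / T := by
    rw [div_eq_mul_one_div K T]
    exact mul_le_mul_of_nonneg_left (pi_div_two_sub_arctan_le hT) hK
  have hleft : ‖∫ y in Iic (-T), f y‖ ≤ K / T := by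
    refine (norm_integral_le_of_norm_le hdom.integrableOn (.of_forall hfK)).trans ?_
    rw [integral_const_mul, integral_Iic_inv_one_add_sq, arctan_neg]
    linarith
  have hright : ‖∫ y in Ioi T, f y‖ ≤ K / T := by
    refine (norm_integral_le_of_norm_le hdom.integrableOn (.of_forall hfK)).trans ?_
    rw [integral_const_mul, integral_Ioi_inv_one_add_sq]
    linarith
  have hsplit : ∫ y, f y =
      (∫ y in (-T)..T, f y) + (∫ y in Iic (-T), f y) + ∫ y in Ioi T, f y := by
    rw [← intervalIntegral.integral_Iic_add_Ioi (b := T) hf.integrableOn hf.integrableOn,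
      ← intervalIntegral.integral_Iic_sub_Iic (a := -T) (b := T) hf.integrableOn hf.integrableOn]
    ring
  calc ‖∫ y, f y‖ ≤ ‖∫ y in (-T)..T, f y‖ + K / T + K / T := by
        rw [hsplit]
        exact norm_add_le_of_le (norm_add_le_of_le le_rfl hleft) hright
    _ = ‖∫ y in (-T)..T, f y‖ + 2 * K / T := by ring

lemma norm_integral_verticalLine_le {h : ℂ → ℂ} {a b T M M' : ℝ} (hab : a ≤ b) (hT : 0 ≤ T)
    (hd : ∀ s : ℂ, s.re ∈ Icc a b → |s.im| ≤ T → DifferentiableAt ℂ h s)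
    (hM : ∀ s : ℂ, s.re ∈ Icc a b → |s.im| = T → ‖h s‖ ≤ M)
    (hM' : ∀ s : ℂ, s.re = a → |s.im| ≤ T → ‖h s‖ ≤ M') :
    ‖∫ y in (-T)..T, h (verticalLine b y)‖ ≤ 2 * T * M' + 2 * (b - a) * M := by
  have hrect := Complex.integral_boundary_rect_eq_zero_of_differentiableOn h (verticalLine a (-T))
    (verticalLine b T) fun s hs ↦ by
      rw [Complex.mem_reProdIm, re_verticalLine, re_verticalLine, im_verticalLine, im_verticalLine,
        uIcc_of_le hab, uIcc_of_le (by linarith)] at hs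
      exact (hd s hs.1 (abs_le.2 hs.2)).differentiableWithinAt
  simp only [re_verticalLine, im_verticalLine, smul_eq_mul] at hrect
  have hhor {t : ℝ} (ht : |t| = T) : ‖∫ u : ℝ in a..b, h (u + t * Complex.I)‖ ≤ M * (b - a) := by
    rw [← abs_of_nonneg (sub_nonneg.2 hab)]
    refine intervalIntegral.norm_integral_le_of_norm_le_const fun u hu ↦ ?_
    rw [uIoc_of_le hab] at hu
    exact hM _ (by simpa using ⟨hu.1.le, hu.2⟩) (by simpa using ht)
  have hleft : ‖∫ y : ℝ in (-T)..T, h (a + y * Complex.I)‖ ≤ M' * (2 * T) := by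
    rw [show 2 * T = |T - -T| by rw [sub_neg_eq_add, abs_of_nonneg] <;> linarith]
    refine intervalIntegral.norm_integral_le_of_norm_le_const fun y hy ↦ ?_
    rw [uIoc_of_le (by linarith)] at hy
    exact hM' _ (by simp) (by simpa using abs_le.2 ⟨hy.1.le, hy.2⟩)
  have hbot := hhor (t := -T) (by rw [abs_neg, abs_of_nonneg hT])
  have htop := hhor (t := T) (abs_of_nonneg hT)
  calc ‖∫ y in (-T)..T, h (verticalLine b y)‖
      = ‖Complex.I * ∫ y : ℝ in (-T)..T, h (b + y * Complex.I)‖ := by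
        rw [norm_mul, Complex.norm_I, one_mul]; rfl
    _ = ‖Complex.I * (∫ y : ℝ in (-T)..T, h (a + y * Complex.I)) -
          (∫ u : ℝ in a..b, h (u + (-T : ℝ) * Complex.I)) +
          ∫ u : ℝ in a..b, h (u + T * Complex.I)‖ := by
        congr 1
        linear_combination hrect
    _ ≤ M' * (2 * T) + M * (b - a) + M * (b - a) := by
        refine norm_add_le_of_le (norm_sub_le_of_le ?_ hbot) htop
        rwa [norm_mul, Complex.norm_I, one_mul]
    _ = 2 * T * M' + 2 * (b - a) * M := by ring

lemma exists_norm_perronIntegrand_le :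
    ∃ κ > 0, κ ≤ 1 / 12 ∧ ∃ C > 0, ∀ x > 0, ∀ T ≥ 0, ∀ s : ℂ, |s.im| ≤ T →
      |s.re - 1| ≤ κ / log (T + 5) → DifferentiableAt ℂ (perronIntegrand x) s ∧
        ‖perronIntegrand x s‖ ≤ C * log (T + 5) ^ 2 * x ^ s.re * (1 + s.im ^ 2)⁻¹ := by
  obtain ⟨κ, hκ, hκ1, C, hC, hlog⟩ := exists_norm_logDeriv_riemannZeta₁_le
  refine ⟨κ, hκ, hκ1, 4 * C, by positivity, fun x hx T hT s hsT hs ↦ ?_⟩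
  obtain ⟨hne, hbound⟩ := hlog T hT s hsT hs
  have hre : 1 / 2 ≤ s.re := by
    have hδ : κ / log (T + 5) ≤ 1 / 12 :=
      (div_le_self hκ.le (one_le_log_of_three_le (by linarith))).trans hκ1
    linarith [(abs_le.1 hs).1]
  constructor
  · have hderiv : DifferentiableAt ℂ (deriv riemannZeta₁) s :=
      (differentiable_riemannZeta₁.differentiableOn.deriv isOpen_univ).differentiableAt
        Filter.univ_mem
    exact ((differentiableAt_id.const_cpow (.inl (mod_cast hx.ne'))).mul
      (hderiv.div (differentiable_riemannZeta₁ s) hne)).mul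
        (differentiableAt_rieszKernel (by linarith))
  · have hkernel := norm_rieszKernel_le hre
    calc ‖perronIntegrand x s‖ = x ^ s.re * ‖logDeriv riemannZeta₁ s‖ * ‖rieszKernel s‖ := by
          rw [perronIntegrand, norm_mul, norm_mul, Complex.norm_cpow_eq_rpow_re_of_pos hx]
      _ ≤ x ^ s.re * (C * log (T + 5) ^ 2) * (4 * (1 + s.im ^ 2)⁻¹) := by gcongr
      _ = 4 * C * log (T + 5) ^ 2 * x ^ s.re * (1 + s.im ^ 2)⁻¹ := by ring

lemma exists_norm_perronIntegrand_le_of_one_lt_re :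
    ∃ C > 0, ∀ x > 0, ∀ s : ℂ, 1 < s.re → s.re ≤ 2 →
      ‖perronIntegrand x s‖ ≤ C * x ^ s.re / (s.re - 1) * (1 + s.im ^ 2)⁻¹ := by
  obtain ⟨C, hC, hlog⟩ := exists_norm_logDeriv_riemannZeta₁_le_div
  refine ⟨4 * C, by positivity, fun x hx s h1 h2 ↦ ?_⟩
  have hbound := hlog s h1 h2
  have hkernel := norm_rieszKernel_le (s := s) (by linarith)
  have _hd : 0 < s.re - 1 := by linarith
  calc ‖perronIntegrand x s‖ = x ^ s.re * ‖logDeriv riemannZeta₁ s‖ * ‖rieszKernel s‖ := by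
        rw [perronIntegrand, norm_mul, norm_mul, Complex.norm_cpow_eq_rpow_re_of_pos hx]
    _ ≤ x ^ s.re * (C / (s.re - 1)) * (4 * (1 + s.im ^ 2)⁻¹) := by gcongr
    _ = 4 * C * x ^ s.re / (s.re - 1) * (1 + s.im ^ 2)⁻¹ := by ring

lemma exists_norm_integral_perronIntegrand_le :
    ∃ κ > 0, κ ≤ 1 / 12 ∧ ∃ C > 0, ∀ x T σ : ℝ, 1 ≤ x → 1 ≤ T → 1 < σ →
      σ ≤ 1 + κ / log (T + 5) → ‖∫ y in (-T)..T, perronIntegrand x (verticalLine σ y)‖ ≤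
        C * log (T + 5) ^ 2 * (x ^ (1 - κ / log (T + 5)) * T + x ^ σ / T ^ 2) := by
  obtain ⟨κ, hκ, hκ1, C, hC, hP⟩ := exists_norm_perronIntegrand_le
  refine ⟨κ, hκ, hκ1, 4 * C, by positivity, fun x T σ hx hT hσ1 hσ2 ↦ ?_⟩
  have hT0 : 0 < T := by linarith
  have hδ0 : 0 < κ / log (T + 5) := div_pos hκ (log_pos (by linarith))
  have hδ1 : κ / log (T + 5) ≤ 1 / 12 :=
    (div_le_self hκ.le (one_le_log_of_three_le (by linarith))).trans hκ1
  set δ := κ / log (T + 5)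
  set L := log (T + 5)
  have hstrip (s : ℂ) (hs : s.re ∈ Icc (1 - δ) σ) (hsT : |s.im| ≤ T) :=
    hP x (by linarith) T hT0.le s hsT (abs_le.2 ⟨by linarith [hs.1], by linarith [hs.2]⟩)
  have hint : ‖∫ y in (-T)..T, perronIntegrand x (verticalLine σ y)‖ ≤
      2 * T * (C * L ^ 2 * x ^ (1 - δ)) + 2 * (σ - (1 - δ)) * (C * L ^ 2 * x ^ σ * (T ^ 2)⁻¹) := by
    refine norm_integral_verticalLine_le (by linarith) hT0.le (fun s hs hsT ↦ (hstrip s hs hsT).1)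
      (fun s hs hsT ↦ (hstrip s hs hsT.le).2.trans ?_) fun s hs hsT ↦ ?_
    · rw [← sq_abs s.im, hsT]
      gcongr
      · exact hs.2
      · linarith
    · refine (hstrip s ⟨hs.ge, by linarith⟩ hsT).2.trans ?_
      rw [hs]
      exact mul_le_of_le_one_right (by positivity) (inv_le_one_of_one_le₀ (by nlinarith))
  have hwidth : σ - (1 - δ) ≤ 2 := by linarith
  calc _ ≤ _ := hint
    _ ≤ 2 * T * (C * L ^ 2 * x ^ (1 - δ)) + 2 * 2 * (C * L ^ 2 * x ^ σ * (T ^ 2)⁻¹) := by gcongr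
    _ ≤ 4 * T * (C * L ^ 2 * x ^ (1 - δ)) + 2 * 2 * (C * L ^ 2 * x ^ σ * (T ^ 2)⁻¹) := by
      gcongr
      norm_num
    _ = 4 * C * L ^ 2 * (x ^ (1 - δ) * T + x ^ σ / T ^ 2) := by ring

lemma sq_log_add_five_le {T : ℝ} (hT : 1 ≤ T) : log (T + 5) ^ 2 ≤ 24 * T := by
  have hle : log (T + 5) ≤ 2 * √(T + 5) := by
    have h := log_le_sub_one_of_pos (sqrt_pos.2 (by linarith : 0 < T + 5))
    rw [log_sqrt (by linarith)] at h
    linarith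
  calc log (T + 5) ^ 2 ≤ (2 * √(T + 5)) ^ 2 := by
        gcongr
        exact log_nonneg (by linarith)
    _ = 4 * (T + 5) := by rw [mul_pow, sq_sqrt (by linarith)]; ring
    _ ≤ 24 * T := by linarith

lemma rpow_one_add_one_div_log_le {x : ℝ} (hx : 1 < x) : x ^ (1 + 1 / log x) ≤ 3 * x := by
  have hx0 : 0 < x := by linarith
  rw [rpow_add hx0, rpow_one, rpow_def_of_pos hx0, mul_one_div_cancel (log_pos hx).ne', mul_comm]
  gcongr
  linarith [exp_one_lt_d9]

lemma exists_norm_integral_perronIntegrand_le_interval :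
    ∃ C > 0, ∀ x T : ℝ, 3 ≤ x → 1 ≤ T →
      ‖∫ y, perronIntegrand x (verticalLine (1 + 1 / log x) y)‖ ≤
        ‖∫ y in (-T)..T, perronIntegrand x (verticalLine (1 + 1 / log x) y)‖ +
          C * x * (log x / T) := by
  obtain ⟨C, hC, hP⟩ := exists_norm_perronIntegrand_le_of_one_lt_re
  refine ⟨6 * C, by positivity, fun x T hx hT ↦ ?_⟩
  have hx0 : 0 < x := by linarith
  have hlog := one_le_log_of_three_le hx
  have hε0 : 0 < 1 / log x := by positivity
  have hε1 : 1 / log x ≤ 1 := (div_le_one (by linarith)).2 hlog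
  have htail := norm_integral_le_of_norm_le_inv_one_add_sq
    (f := fun y ↦ perronIntegrand x (verticalLine (1 + 1 / log x) y))
    (integrable_perronIntegrand (by linarith) (by linarith) hx0) (K := C * (3 * x) * log x)
    (by linarith : 0 < T) (by positivity) fun y ↦ ?_
  · convert htail using 2
    ring
  · have h := hP x hx0 (verticalLine (1 + 1 / log x) y) (by simpa using hlog.trans_lt' one_pos)
      (by rw [re_verticalLine]; linarith)
    rw [re_verticalLine, im_verticalLine, add_sub_cancel_left, div_div_eq_mul_div, div_one] at h
    have hxσ := rpow_one_add_one_div_log_le (by linarith : 1 < x)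
    exact h.trans (by gcongr)

lemma exists_abs_psi₁_div_sub_le :
    ∃ κ > 0, ∃ C > 0, ∀ x T : ℝ, 3 ≤ x → 1 ≤ T → 1 / log x ≤ κ / log (T + 5) →
      |psi₁ x / x - (x / 2 - 1 + 1 / (2 * x))| ≤
        C * x * (log x / T + x ^ (-(κ / log (T + 5))) * T ^ 2) := by
  obtain ⟨κ, hκ, hκ1, C, hC, hcontour⟩ := exists_norm_integral_perronIntegrand_le
  obtain ⟨C', hC', htail⟩ := exists_norm_integral_perronIntegrand_le_interval
  refine ⟨κ, hκ, C' + 72 * C, by positivity, fun x T hx hT hle ↦ ?_⟩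
  have hx0 : 0 < x := by linarith
  have hlog := one_le_log_of_three_le hx
  have hε0 : 0 < 1 / log x := by positivity
  have hε1 : 1 / log x ≤ 1 := (div_le_one (by linarith)).2 hlog
  set δ := κ / log (T + 5)
  have hinner : ‖∫ y in (-T)..T, perronIntegrand x (verticalLine (1 + 1 / log x) y)‖ ≤
      72 * C * x * (log x / T + x ^ (-δ) * T ^ 2) := by
    have hxσ := rpow_one_add_one_div_log_le (by linarith : 1 < x)
    have hL := sq_log_add_five_le hT
    calc _ ≤ C * log (T + 5) ^ 2 * (x ^ (1 - δ) * T + x ^ (1 + 1 / log x) / T ^ 2) :=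
          hcontour x T _ (by linarith) hT (by linarith) (by linarith)
      _ ≤ C * (24 * T) * (x ^ (1 - δ) * T + 3 * x / T ^ 2) := by gcongr
      _ = 72 * C * x * (1 / T) + 24 * C * x * (x ^ (-δ) * T ^ 2) := by
          rw [sub_eq_add_neg, rpow_add hx0, rpow_one]
          field_simp
          ring
      _ ≤ 72 * C * x * (log x / T) + 72 * C * x * (x ^ (-δ) * T ^ 2) := by gcongr; norm_num
      _ = 72 * C * x * (log x / T + x ^ (-δ) * T ^ 2) := by ring
  calc |psi₁ x / x - (x / 2 - 1 + 1 / (2 * x))|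
      = 1 / (2 * π) * ‖∫ y, perronIntegrand x (verticalLine (1 + 1 / log x) y)‖ := by
        rw [← norm_eq_abs, ← Complex.norm_real,
          psi₁_div_sub_eq (by linarith : 1 < 1 + 1 / log x) (by linarith) (by linarith), norm_neg,
          norm_smul, norm_of_nonneg (by positivity)]
    _ ≤ ‖∫ y, perronIntegrand x (verticalLine (1 + 1 / log x) y)‖ := by
        refine mul_le_of_le_one_left (norm_nonneg _) ((div_le_one (by positivity)).2 ?_)
        linarith [pi_gt_three]
    _ ≤ 72 * C * x * (log x / T + x ^ (-δ) * T ^ 2) +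
          C' * x * (log x / T + x ^ (-δ) * T ^ 2) := by
        refine (htail x T hx hT).trans (add_le_add hinner ?_)
        gcongr
        exact le_add_of_nonneg_right (by positivity)
    _ = (C' + 72 * C) * x * (log x / T + x ^ (-δ) * T ^ 2) := by ring

end PrimeExpSum

/-! ## The prime number theorem with an error term -/

namespace PrimeExpSum

open Set Real Chebyshev Filter Asymptotics
open scoped ArithmeticFunction.vonMangoldt

lemma sq_add_one_le_mul_exp {a w : ℝ} (ha : 0 < a) (hw : 0 ≤ w) :
    w ^ 2 + 1 ≤ (2 / a ^ 2 + 1) * exp (a * w) := by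
  have hexp : (a * w) ^ 2 / 2 ≤ exp (a * w) := by
    have h := quadratic_le_exp_of_nonneg (mul_nonneg ha.le hw)
    linarith [mul_nonneg ha.le hw]
  calc w ^ 2 + 1 = 2 / a ^ 2 * ((a * w) ^ 2 / 2) + 1 := by field_simp
    _ ≤ 2 / a ^ 2 * exp (a * w) + exp (a * w) := by
        gcongr
        exact one_le_exp (by positivity)
    _ = (2 / a ^ 2 + 1) * exp (a * w) := by ring

lemma log_exp_add_five_le {u : ℝ} (hu : 2 ≤ u) : log (exp u + 5) ≤ 2 * u := by
  have h3 : 3 ≤ exp u := by linarith [add_one_le_exp u]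
  rw [log_le_iff_le_exp (by linarith), two_mul, exp_add]
  nlinarith

lemma tendsto_sqrt_log_atTop : Tendsto (fun x ↦ √(log x)) atTop atTop :=
  tendsto_sqrt_atTop.comp tendsto_log_atTop

-- `exists_abs_psi₁_div_sub_le` is used with `T = exp (μ √(log x))`, where `κ = 6 μ ^ 2`.
lemma exists_abs_psi₁_sub_le :
    ∃ μ > 0, ∃ C > 0, ∀ x ≥ 3, 2 ≤ μ * √(log x) →
      |psi₁ x - (x ^ 2 / 2 - x + 1 / 2)| ≤
        C * x ^ 2 * ((√(log x) ^ 2 + 1) * exp (-(μ * √(log x)))) := by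
  obtain ⟨κ, hκ, C, hC, hψ⟩ := exists_abs_psi₁_div_sub_le
  have hμ : 0 < √(κ / 6) := sqrt_pos.2 (by positivity)
  have hκμ : κ = 6 * √(κ / 6) ^ 2 := by rw [sq_sqrt (by positivity)]; ring
  set μ := √(κ / 6)
  refine ⟨μ, hμ, C, hC, fun x hx hμw ↦ ?_⟩
  have hx0 : 0 < x := by linarith
  have hlog : log x = √(log x) ^ 2 := (sq_sqrt (log_nonneg (by linarith))).symm
  have hw : 0 < √(log x) := sqrt_pos.2 (log_pos (by linarith))
  set w := √(log x)
  have hδ : 3 * μ / w ≤ κ / log (exp (μ * w) + 5) :=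
    calc 3 * μ / w = κ / (2 * (μ * w)) := by rw [hκμ]; field_simp; norm_num
      _ ≤ κ / log (exp (μ * w) + 5) := by
          gcongr
          · exact log_pos (by linarith [exp_pos (μ * w)])
          · exact log_exp_add_five_le hμw
  have hmain := hψ x (exp (μ * w)) hx (one_le_exp (by positivity)) <| by
    refine le_trans ?_ hδ
    rw [hlog, div_le_div_iff₀ (by positivity) hw]
    nlinarith
  have hpole : x ^ (-(κ / log (exp (μ * w) + 5))) * exp (μ * w) ^ 2 ≤ exp (-(μ * w)) :=
    calc _ ≤ x ^ (-(3 * μ / w)) * exp (μ * w) ^ 2 := by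
          gcongr
          linarith
      _ = exp (-(μ * w)) := by
          rw [rpow_def_of_pos hx0, ← exp_nat_mul, ← exp_add, hlog]
          congr 1
          field_simp
          push_cast
          ring
  calc |psi₁ x - (x ^ 2 / 2 - x + 1 / 2)|
      = x * |psi₁ x / x - (x / 2 - 1 + 1 / (2 * x))| := by
        rw [← abs_of_pos hx0, ← abs_mul, abs_of_pos hx0]
        congr 1
        field_simp
    _ ≤ x * (C * x * (w ^ 2 * exp (-(μ * w)) + exp (-(μ * w)))) := by
        rw [hlog, div_eq_mul_inv _ (exp _), ← exp_neg] at hmain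
        refine mul_le_mul_of_nonneg_left (hmain.trans ?_) hx0.le
        gcongr
    _ = C * x ^ 2 * ((w ^ 2 + 1) * exp (-(μ * w))) := by ring

lemma exists_isBigO_psi₁_sub :
    ∃ ν > 0, (fun x ↦ psi₁ x - (x ^ 2 / 2 - x + 1 / 2)) =O[atTop]
      fun x ↦ x ^ 2 * exp (-(ν * √(log x))) := by
  obtain ⟨μ, hμ, C, hC, hψ⟩ := exists_abs_psi₁_sub_le
  refine ⟨μ / 2, half_pos hμ, .of_bound (C * (2 / (μ / 2) ^ 2 + 1)) ?_⟩
  filter_upwards [eventually_ge_atTop 3,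
    (tendsto_sqrt_log_atTop.const_mul_atTop hμ).eventually_ge_atTop 2] with x hx hμw
  rw [norm_eq_abs, norm_of_nonneg (by positivity)]
  set w := √(log x)
  calc _ ≤ C * x ^ 2 * ((w ^ 2 + 1) * exp (-(μ * w))) := hψ x hx hμw
    _ ≤ C * x ^ 2 * ((2 / (μ / 2) ^ 2 + 1) * exp (μ / 2 * w) * exp (-(μ * w))) := by
        gcongr
        exact sq_add_one_le_mul_exp (half_pos hμ) (sqrt_nonneg _)
    _ = C * (2 / (μ / 2) ^ 2 + 1) * (x ^ 2 * exp (-(μ / 2 * w))) := by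
        rw [show -(μ / 2 * w) = μ / 2 * w + -(μ * w) by ring, exp_add]
        ring

lemma sum_vonMangoldt_mul_sub_le_psi₁ {x : ℝ} (hx : 0 ≤ x) (m : ℕ) :
    ∑ n ∈ Finset.Ioc 0 m, Λ n * (x - n) ≤ psi₁ x := by
  have hout : ∑ n ∈ Finset.Ioc 0 m \ Finset.Ioc 0 ⌊x⌋₊, Λ n * (x - n) ≤ 0 := by
    refine Finset.sum_nonpos fun n hn ↦
      mul_nonpos_of_nonneg_of_nonpos ArithmeticFunction.vonMangoldt_nonneg ?_
    simp only [Finset.mem_sdiff, Finset.mem_Ioc, not_and, not_le] at hn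
    linarith [(Nat.floor_lt hx).1 (hn.2 hn.1.1)]
  have hin : ∑ n ∈ Finset.Ioc 0 m ∩ Finset.Ioc 0 ⌊x⌋₊, Λ n * (x - n) ≤ psi₁ x := by
    refine Finset.sum_le_sum_of_subset_of_nonneg Finset.inter_subset_right fun n hn _ ↦
      mul_nonneg ArithmeticFunction.vonMangoldt_nonneg (sub_nonneg.2 ?_)
    exact (Nat.le_floor_iff hx).1 (Finset.mem_Ioc.1 hn).2
  rw [← Finset.sum_inter_add_sum_sdiff _ (Finset.Ioc 0 ⌊x⌋₊)]
  linarith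

-- `psi₁` is convex with subgradient `ψ`.
lemma psi₁_add_mul_psi_le_psi₁ (x : ℝ) {y : ℝ} (hy : 0 ≤ y) :
    psi₁ x + (y - x) * ψ x ≤ psi₁ y :=
  calc psi₁ x + (y - x) * ψ x = ∑ n ∈ Finset.Ioc 0 ⌊x⌋₊, Λ n * (y - n) := by
        rw [psi₁, psi, Finset.mul_sum, ← Finset.sum_add_distrib]
        exact Finset.sum_congr rfl fun n _ ↦ by ring
    _ ≤ psi₁ y := sum_vonMangoldt_mul_sub_le_psi₁ hy _

lemma abs_psi_sub_self_le {x h E : ℝ} (hh : 0 < h) (hhx : h ≤ x)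
    (hE : ∀ y ∈ Icc (x - h) (x + h), |psi₁ y - (y ^ 2 / 2 - y + 1 / 2)| ≤ E) :
    |ψ x - x| ≤ h / 2 + 1 + 2 * E / h := by
  have hright := psi₁_add_mul_psi_le_psi₁ x (by linarith : 0 ≤ x + h)
  have hleft := psi₁_add_mul_psi_le_psi₁ x (by linarith : 0 ≤ x - h)
  have hEr := abs_le.1 (hE (x + h) ⟨by linarith, le_rfl⟩)
  have hE0 := abs_le.1 (hE x ⟨by linarith, by linarith⟩)
  have hEl := abs_le.1 (hE (x - h) ⟨le_rfl, by linarith⟩)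
  have hexpand : h * (h / 2 + 1 + 2 * E / h) = h ^ 2 / 2 + h + 2 * E := by field_simp
  refine le_of_mul_le_mul_left ?_ hh
  rw [hexpand, ← abs_of_pos hh, ← abs_mul, abs_of_pos hh, abs_le]
  constructor <;> nlinarith

lemma sqrt_log_div_two_le_sqrt_log {x y : ℝ} (hx : 3 ≤ x) (hxy : x / 2 ≤ y) :
    √(log x) / 2 ≤ √(log y) := by
  have hlog := one_le_log_of_three_le hx
  refine le_sqrt_of_sq_le ?_
  rw [div_pow, sq_sqrt (by linarith)]
  have h := log_le_log (by linarith) hxy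
  rw [log_div (by linarith) two_ne_zero] at h
  linarith [log_two_lt_d9]

lemma exp_mul_sqrt_log_le {a x : ℝ} (hx : 1 ≤ x) (ha : a ≤ √(log x)) : exp (a * √(log x)) ≤ x :=
  calc exp (a * √(log x)) ≤ exp (√(log x) * √(log x)) := by gcongr
    _ = x := by rw [mul_self_sqrt (log_nonneg hx), exp_log (by linarith)]

theorem exists_isBigO_psi_sub_self :
    ∃ ν > 0, (fun x ↦ ψ x - x) =O[atTop] fun x ↦ x * exp (-(ν * √(log x))) := by
  obtain ⟨ν, hν, hO⟩ := exists_isBigO_psi₁_sub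
  obtain ⟨K, hK, hψ₁⟩ := hO.exists_pos
  obtain ⟨x₀, hx₀⟩ := eventually_atTop.1 hψ₁.bound
  refine ⟨ν / 4, by positivity, .of_bound (2 + 9 * K) ?_⟩
  filter_upwards [eventually_ge_atTop 3, eventually_ge_atTop (2 * x₀),
    tendsto_sqrt_log_atTop.eventually_ge_atTop (ν / 4)] with x hx3 hx hxν
  have _hx0 : 0 < x := by linarith
  have hG0 := exp_pos (-(ν / 4 * √(log x)))
  have hG1 : exp (-(ν / 4 * √(log x))) ≤ 1 := exp_le_one_iff.2 (neg_nonpos.2 (by positivity))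
  have hxG : 1 ≤ x * exp (-(ν / 4 * √(log x))) := by
    rw [exp_neg, ← div_eq_mul_inv, one_le_div (exp_pos _)]
    exact exp_mul_sqrt_log_le (by linarith) hxν
  have hG2 {y : ℝ} (hy : x / 2 ≤ y) :
      exp (-(ν * √(log y))) ≤ exp (-(ν / 4 * √(log x))) ^ 2 := by
    rw [← exp_nat_mul, exp_le_exp]
    have h := sqrt_log_div_two_le_sqrt_log hx3 hy
    push_cast
    nlinarith
  set G := exp (-(ν / 4 * √(log x)))
  have hE (y) (hy : y ∈ Icc (x - x / 2 * G) (x + x / 2 * G)) :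
      |psi₁ y - (y ^ 2 / 2 - y + 1 / 2)| ≤ K * ((3 / 2 * x) ^ 2 * G ^ 2) := by
    have hy1 : x / 2 ≤ y := by nlinarith [hy.1]
    have hy2 : y ≤ 3 / 2 * x := by nlinarith [hy.2]
    have hbound := hx₀ y (by linarith)
    rw [norm_eq_abs, norm_of_nonneg (by positivity)] at hbound
    refine hbound.trans ?_
    gcongr
    · linarith
    · exact hG2 hy1
  rw [norm_eq_abs, norm_of_nonneg (by positivity)]
  calc |ψ x - x| ≤ x / 2 * G / 2 + 1 + 2 * (K * ((3 / 2 * x) ^ 2 * G ^ 2)) / (x / 2 * G) :=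
        abs_psi_sub_self_le (by positivity) (by nlinarith) hE
    _ = x * G / 4 + 1 + 9 * K * (x * G) := by field_simp; ring
    _ ≤ (2 + 9 * K) * (x * G) := by linarith

lemma isBigO_sqrt_mul_log (ν : ℝ) :
    (fun x ↦ √x * log x) =O[atTop] fun x ↦ x * exp (-(ν * √(log x))) := by
  refine .of_bound 2 ?_
  filter_upwards [eventually_ge_atTop 1,
    tendsto_sqrt_log_atTop.eventually_ge_atTop (2 * (ν + 1))] with x hx hν
  have hlog := log_nonneg hx
  rw [norm_of_nonneg (by positivity), norm_of_nonneg (by positivity)]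
  have hlogexp : log x ≤ 2 * exp √(log x) := by
    have h := quadratic_le_exp_of_nonneg (sqrt_nonneg (log x))
    rw [sq_sqrt hlog] at h
    linarith [sqrt_nonneg (log x)]
  have hsqrt : exp ((ν + 1) * √(log x)) ≤ √x := by
    refine le_sqrt_of_sq_le ?_
    rw [← exp_nat_mul, ← mul_assoc]
    exact exp_mul_sqrt_log_le hx hν
  calc √x * log x ≤ √x * (2 * exp √(log x)) := by gcongr
    _ = 2 * (√x * exp ((ν + 1) * √(log x)) * exp (-(ν * √(log x)))) := by
        rw [mul_assoc √x, ← exp_add, ← sub_eq_add_neg, ← sub_mul, add_sub_cancel_left, one_mul]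
        ring
    _ ≤ 2 * (√x * √x * exp (-(ν * √(log x)))) := by gcongr
    _ = 2 * (x * exp (-(ν * √(log x)))) := by rw [mul_self_sqrt (by linarith)]

theorem exists_isBigO_theta_sub_self :
    ∃ ν > 0, (fun x ↦ θ x - x) =O[atTop] fun x ↦ x * exp (-(ν * √(log x))) := by
  obtain ⟨ν, hν, hψ⟩ := exists_isBigO_psi_sub_self
  have hψθ : (fun x ↦ ψ x - θ x) =O[atTop] fun x ↦ √x * log x := by
    refine .of_bound 2 ?_
    filter_upwards [eventually_ge_atTop 1] with x hx
    rw [norm_of_nonneg (sub_nonneg.2 (theta_le_psi x)),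
      norm_of_nonneg (mul_nonneg (sqrt_nonneg x) (log_nonneg hx)), ← mul_assoc]
    exact psi_sub_theta_le hx
  refine ⟨ν, hν, (hψ.sub (hψθ.trans (isBigO_sqrt_mul_log ν))).congr_left fun x ↦ ?_⟩
  ring

end PrimeExpSum

/-! ## The sum over primes and the integral -/

namespace PrimeExpSum

open Set Real Chebyshev Filter Asymptotics
open scoped ArithmeticFunction.vonMangoldt

section PartialSummation

variable {f f' : ℝ → ℂ} {a b : ℝ}

lemma sum_log_mul_eq_sub_integral_theta (ha : 0 ≤ a) (hab : a ≤ b)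
    (hf : ∀ t ∈ Icc a b, HasDerivAt f (f' t) t) (hf' : ContinuousOn f' (Icc a b)) :
    ∑ p ∈ Finset.Ioc ⌊a⌋₊ ⌊b⌋₊ with p.Prime, (log p : ℂ) * f p =
      f b * θ b - f a * θ a - ∫ t in a..b, f' t * θ t := by
  have hθ (t : ℝ) :
      ∑ k ∈ Finset.Icc 0 ⌊t⌋₊, (if k.Prime then (log k : ℂ) else 0) = θ t := by
    rw [theta_eq_sum_Icc, ← Finset.sum_filter]
    push_cast
    rfl
  have habel := sum_mul_eq_sub_sub_integral_mul (f := f)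
    (fun k ↦ if k.Prime then (log k : ℂ) else 0) ha hab (fun t ht ↦ (hf t ht).differentiableAt)
    (hf'.integrableOn_Icc.congr_fun (fun t ht ↦ (hf t ht).deriv.symm) measurableSet_Icc)
  simp only [hθ] at habel
  calc ∑ p ∈ Finset.Ioc ⌊a⌋₊ ⌊b⌋₊ with p.Prime, (log p : ℂ) * f p
      = ∑ k ∈ Finset.Ioc ⌊a⌋₊ ⌊b⌋₊, f k * if k.Prime then (log k : ℂ) else 0 := by
        rw [Finset.sum_filter]
        exact Finset.sum_congr rfl fun k _ ↦ by split_ifs <;> ring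
    _ = f b * θ b - f a * θ a - ∫ t in a..b, f' t * θ t := by
        rw [habel, intervalIntegral.integral_of_le hab]
        congr 1
        exact setIntegral_congr_fun measurableSet_Ioc fun t ht ↦ by
          rw [(hf t (Ioc_subset_Icc_self ht)).deriv]

lemma sum_log_mul_sub_integral_eq (ha : 0 ≤ a) (hab : a ≤ b)
    (hf : ∀ t ∈ Icc a b, HasDerivAt f (f' t) t) (hf' : ContinuousOn f' (Icc a b)) :
    ∑ p ∈ Finset.Ioc ⌊a⌋₊ ⌊b⌋₊ with p.Prime, (log p : ℂ) * f p - ∫ t in a..b, f t =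
      f b * (θ b - b : ℝ) - f a * (θ a - a : ℝ) - ∫ t in a..b, f' t * (θ t - t : ℝ) := by
  have hθ : IntervalIntegrable (fun t ↦ (θ t : ℂ)) volume a b :=
    ⟨theta_mono.intervalIntegrable.1.ofReal, theta_mono.intervalIntegrable.2.ofReal⟩
  rw [← uIcc_of_le hab] at hf hf'
  have hparts := intervalIntegral.integral_mul_deriv_eq_deriv_mul hf
    (fun t _ ↦ Complex.ofRealCLM.hasDerivAt) hf'.intervalIntegrable
    (continuous_const.intervalIntegrable a b)
  have hsub : ∫ t in a..b, f' t * (θ t - t : ℝ) =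
      (∫ t in a..b, f' t * θ t) - ∫ t in a..b, f' t * t := by
    simp only [Complex.ofReal_sub, mul_sub]
    exact intervalIntegral.integral_sub (hθ.continuousOn_mul hf')
      (hf'.mul Complex.continuous_ofReal.continuousOn).intervalIntegrable
  simp only [Complex.ofRealCLM_apply, Complex.ofReal_one, mul_one] at hparts
  rw [uIcc_of_le hab] at hf hf'
  rw [sum_log_mul_eq_sub_integral_theta ha hab hf hf', hsub, hparts]
  push_cast
  ring

lemma norm_sum_log_mul_sub_integral_le {D B : ℝ} (ha : 0 ≤ a) (hab : a ≤ b)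
    (hf : ∀ t ∈ Icc a b, HasDerivAt f (f' t) t) (hf' : ContinuousOn f' (Icc a b))
    (hf1 : ∀ t ∈ Icc a b, ‖f t‖ ≤ 1) (hB : ∀ t ∈ Icc a b, ‖f' t‖ ≤ B)
    (hD : ∀ t ∈ Icc a b, |θ t - t| ≤ D) :
    ‖∑ p ∈ Finset.Ioc ⌊a⌋₊ ⌊b⌋₊ with p.Prime, (log p : ℂ) * f p - ∫ t in a..b, f t‖ ≤
      D * (2 + B * (b - a)) := by
  have hend {t : ℝ} (ht : t ∈ Icc a b) : ‖f t * (θ t - t : ℝ)‖ ≤ D := by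
    rw [norm_mul, Complex.norm_real]
    exact (mul_le_of_le_one_left (norm_nonneg _) (hf1 t ht)).trans (hD t ht)
  have hint : ‖∫ t in a..b, f' t * (θ t - t : ℝ)‖ ≤ B * D * (b - a) := by
    rw [← abs_of_nonneg (sub_nonneg.2 hab)]
    refine intervalIntegral.norm_integral_le_of_norm_le_const fun t ht ↦ ?_
    rw [uIoc_of_le hab] at ht
    have ht' := Ioc_subset_Icc_self ht
    rw [norm_mul, Complex.norm_real]
    exact mul_le_mul (hB t ht') (hD t ht') (norm_nonneg _) ((norm_nonneg _).trans (hB t ht'))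
  rw [sum_log_mul_sub_integral_eq ha hab hf hf']
  have hends := norm_sub_le_of_le (hend (right_mem_Icc.2 hab)) (hend (left_mem_Icc.2 hab))
  calc _ ≤ D + D + B * D * (b - a) := norm_sub_le_of_le hends hint
    _ = D * (2 + B * (b - a)) := by ring

end PartialSummation

/-- The derivative of `t ↦ e (t ^ c * x)`. -/
noncomputable def phaseDeriv (c x t : ℝ) : ℂ :=
  2 * π * Complex.I * x * c * (t ^ (c - 1) : ℝ) * e (t ^ c * x)

lemma hasDerivAt_e_rpow_mul {c x t : ℝ} (ht : 0 < t) :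
    HasDerivAt (fun t ↦ e (t ^ c * x)) (phaseDeriv c x t) t := by
  have hpow := ((hasDerivAt_rpow_const (p := c) (.inl ht.ne')).mul_const x).ofReal_comp
  convert! (hpow.const_mul (2 * π * Complex.I)).cexp using 1
  rw [phaseDeriv, e]
  push_cast
  ring

lemma continuousOn_phaseDeriv (c x : ℝ) : ContinuousOn (phaseDeriv c x) (Ioi 0) := by
  refine (continuousOn_const.mul (Complex.continuous_ofReal.comp_continuousOn ?_)).mul fun t ht ↦
    (hasDerivAt_e_rpow_mul ht).continuousAt.continuousWithinAt
  exact continuousOn_id.rpow_const fun t ht ↦ .inl (ne_of_gt ht)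

lemma norm_two_pi_I_mul {c : ℝ} (hc : 0 ≤ c) (x : ℝ) :
    ‖(2 * π * Complex.I * x * c : ℂ)‖ = 2 * π * |x| * c := by
  simp [abs_of_nonneg pi_pos.le, abs_of_nonneg hc]

lemma norm_phaseDeriv {c t : ℝ} (hc : 0 ≤ c) (x : ℝ) (ht : 0 ≤ t) :
    ‖phaseDeriv c x t‖ = 2 * π * |x| * c * t ^ (c - 1) := by
  rw [phaseDeriv, norm_mul, norm_mul, norm_e, norm_two_pi_I_mul hc, Complex.norm_real,
    norm_of_nonneg (rpow_nonneg ht _), mul_one]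

lemma Icc_half_subset_Ioi {X : ℝ} (hX : 0 < X) : Icc (X / 2) X ⊆ Ioi 0 :=
  fun _ ht ↦ (half_pos hX).trans_le ht.1

lemma S_eq_sum_Ioc {X : ℝ} (hX : 0 ≤ X) (c x : ℝ) :
    S X c x = ∑ p ∈ Finset.Ioc ⌊X / 2⌋₊ ⌊X⌋₊ with p.Prime, (log p : ℂ) * e ((p : ℝ) ^ c * x) := by
  refine Finset.sum_congr (Finset.ext fun p ↦ ?_) fun _ _ ↦ rfl
  simp only [Finset.mem_filter, Finset.mem_range, Finset.mem_Ioc, Nat.le_floor_iff hX,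
    Nat.floor_lt (div_nonneg hX zero_le_two)]
  have hlt (hp : (p : ℝ) ≤ X) : p < ⌈X⌉₊ + 1 :=
    Nat.lt_succ_iff.2 (Nat.cast_le.1 (hp.trans (Nat.le_ceil X)))
  tauto

lemma norm_S_sub_I_le {c X D : ℝ} (hc : 1 < c) (hX : 0 < X) (x : ℝ)
    (hD : ∀ t ∈ Icc (X / 2) X, |θ t - t| ≤ D) :
    ‖S X c x - I X c x‖ ≤ D * (2 + π * c * (|x| * X ^ c)) := by
  have hpos := Icc_half_subset_Ioi hX
  rw [S_eq_sum_Ioc hX.le, I]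
  calc _ ≤ D * (2 + 2 * π * |x| * c * X ^ (c - 1) * (X - X / 2)) := by
        refine norm_sum_log_mul_sub_integral_le (f := fun t ↦ e (t ^ c * x)) (by positivity)
          (by linarith) (fun t ht ↦ hasDerivAt_e_rpow_mul (hpos ht))
          ((continuousOn_phaseDeriv c x).mono hpos) (fun t _ ↦ (norm_e _).le) (fun t ht ↦ ?_) hD
        have ht0 := mem_Ioi.1 (hpos ht)
        rw [norm_phaseDeriv (by linarith) x ht0.le]
        gcongr
        exact ht.2
    _ = D * (2 + π * c * (|x| * X ^ c)) := by
        rw [rpow_sub_one hX.ne']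
        field_simp
        ring

lemma exists_norm_S_sub_I_le {c : ℝ} (hc : 1 < c) :
    ∃ ν > 0, ∃ C > 0, ∀ᶠ X in atTop, ∀ x,
      ‖S X c x - I X c x‖ ≤ C * X * (exp (-(ν * √(log X))) * (1 + |x| * X ^ c)) := by
  obtain ⟨ν, hν, hO⟩ := exists_isBigO_theta_sub_self
  obtain ⟨K, hK, hθ⟩ := hO.exists_pos
  obtain ⟨x₀, hx₀⟩ := eventually_atTop.1 hθ.bound
  refine ⟨ν / 2, half_pos hν, K * (2 + π * c), by positivity, ?_⟩
  filter_upwards [eventually_ge_atTop 3, eventually_ge_atTop (2 * x₀)] with X hX3 hX x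
  have hX0 : 0 < X := by linarith
  have hD (t) (ht : t ∈ Icc (X / 2) X) : |θ t - t| ≤ K * (X * exp (-(ν / 2 * √(log X)))) := by
    have hbound := hx₀ t (by linarith [ht.1])
    have ht0 := mem_Ioi.1 (Icc_half_subset_Ioi hX0 ht)
    rw [norm_eq_abs, norm_of_nonneg (by positivity)] at hbound
    have hsqrt := mul_le_mul_of_nonneg_left (sqrt_log_div_two_le_sqrt_log hX3 ht.1) hν.le
    have hexp : exp (-(ν * √(log t))) ≤ exp (-(ν / 2 * √(log X))) := exp_le_exp.2 (by linarith)
    exact hbound.trans (by gcongr; exact ht.2)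
  have hT : 0 ≤ |x| * X ^ c := by positivity
  calc _ ≤ K * (X * exp (-(ν / 2 * √(log X)))) * (2 + π * c * (|x| * X ^ c)) :=
        norm_S_sub_I_le hc hX0 x hD
    _ ≤ K * (X * exp (-(ν / 2 * √(log X)))) * ((2 + π * c) * (1 + |x| * X ^ c)) := by
        gcongr
        nlinarith [mul_pos pi_pos (by linarith : 0 < c)]
    _ = _ := by ring

lemma two_pi_I_mul_I_eq {c X : ℝ} (hX : 0 < X) (x : ℝ) :
    2 * π * Complex.I * x * c * I X c x =
      (X ^ (1 - c) : ℝ) * e (X ^ c * x) - ((X / 2) ^ (1 - c) : ℝ) * e ((X / 2) ^ c * x) -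
        ∫ t in (X / 2)..X, ((1 - c) * t ^ (-c) : ℝ) * e (t ^ c * x) := by
  have hIcc : uIcc (X / 2) X = Icc (X / 2) X := uIcc_of_le (by linarith)
  have hpos : uIcc (X / 2) X ⊆ Ioi 0 := hIcc ▸ Icc_half_subset_Ioi hX
  have hparts := intervalIntegral.integral_mul_deriv_eq_deriv_mul
    (u := fun t : ℝ ↦ ((t ^ (1 - c) : ℝ) : ℂ)) (u' := fun t ↦ (((1 - c) * t ^ (-c) : ℝ) : ℂ))
    (fun t ht ↦ by
      simpa [sub_sub_cancel_left] using
        (hasDerivAt_rpow_const (p := 1 - c) (.inl (ne_of_gt (hpos ht)))).ofReal_comp)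
    (fun t ht ↦ hasDerivAt_e_rpow_mul (c := c) (x := x) (hpos ht))
    (ContinuousOn.intervalIntegrable <| Complex.continuous_ofReal.comp_continuousOn <|
      continuousOn_const.mul <| continuousOn_id.rpow_const fun t ht ↦ .inl (ne_of_gt (hpos ht)))
    ((continuousOn_phaseDeriv c x).mono hpos).intervalIntegrable
  rw [← hparts, I, ← intervalIntegral.integral_const_mul]
  refine intervalIntegral.integral_congr fun t ht ↦ ?_
  have hcancel : ((t ^ (1 - c) : ℝ) : ℂ) * (t ^ (c - 1) : ℝ) = 1 := by
    rw [← Complex.ofReal_mul, ← rpow_add (hpos ht)]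
    simp
  simp only [phaseDeriv]
  linear_combination -(2 * π * Complex.I * x * c) * e (t ^ c * x) * hcancel

lemma norm_two_pi_I_mul_I_le {c X : ℝ} (hc : 1 < c) (hX : 0 < X) (x : ℝ) :
    ‖2 * π * Complex.I * x * c * I X c x‖ ≤ (c + 1) * (X / 2) ^ (1 - c) := by
  have hnorm {r t : ℝ} (hr : 0 ≤ r) : ‖(r : ℂ) * e t‖ = r := by
    rw [norm_mul, norm_e, mul_one, Complex.norm_real, norm_of_nonneg hr]
  have hint : ‖∫ t in (X / 2)..X, ((1 - c) * t ^ (-c) : ℝ) * e (t ^ c * x)‖ ≤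
      (c - 1) * (X / 2) ^ (-c) * |X - X / 2| := by
    refine intervalIntegral.norm_integral_le_of_norm_le_const fun t ht ↦ ?_
    rw [uIoc_of_le (by linarith)] at ht
    have ht0 : 0 < t := by linarith [ht.1]
    rw [norm_mul, norm_e, mul_one, Complex.norm_real, norm_mul, norm_of_nonpos (by linarith),
      norm_of_nonneg (by positivity), neg_sub]
    exact mul_le_mul_of_nonneg_left
      (rpow_le_rpow_of_nonpos (by linarith) ht.1.le (by linarith)) (by linarith)
  rw [two_pi_I_mul_I_eq hX]
  calc _ ≤ (X / 2) ^ (1 - c) + (X / 2) ^ (1 - c) + (c - 1) * (X / 2) ^ (-c) * |X - X / 2| := by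
        refine norm_sub_le_of_le (norm_sub_le_of_le ?_ (hnorm (by positivity)).le) hint
        rw [hnorm (by positivity)]
        exact rpow_le_rpow_of_nonpos (by linarith) (by linarith) (by linarith)
    _ = (c + 1) * (X / 2) ^ (1 - c) := by
        rw [sub_half, abs_of_pos (by linarith), sub_eq_add_neg 1 c, rpow_add (by linarith),
          rpow_one]
        ring

lemma exists_norm_I_le {c : ℝ} (hc : 1 < c) :
    ∃ C > 0, ∀ X x, 0 < X → x ≠ 0 → ‖I X c x‖ ≤ C * (X / (|x| * X ^ c)) := by
  refine ⟨(c + 1) * 2 ^ (c - 1), by positivity, fun X x hX hx ↦ ?_⟩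
  have hx0 := abs_pos.2 hx
  have _hXc : 0 < X ^ c := by positivity
  have hfactor : |x| ≤ ‖(2 * π * Complex.I * x * c : ℂ)‖ := by
    rw [norm_two_pi_I_mul (by linarith)]
    nlinarith [pi_gt_three, mul_lt_mul_of_pos_left hc hx0]
  have hpow : (X / 2) ^ (1 - c) = 2 ^ (c - 1) * (X / X ^ c) := by
    rw [div_rpow hX.le zero_le_two, rpow_sub hX, rpow_one, ← neg_sub c 1, rpow_neg zero_le_two,
      div_inv_eq_mul, mul_comm]
  have hmain : |x| * ‖I X c x‖ ≤ (c + 1) * (2 ^ (c - 1) * (X / X ^ c)) :=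
    calc |x| * ‖I X c x‖ ≤ ‖(2 * π * Complex.I * x * c : ℂ)‖ * ‖I X c x‖ := by gcongr
      _ ≤ (c + 1) * (2 ^ (c - 1) * (X / X ^ c)) := by
          rw [← norm_mul, ← hpow]
          exact norm_two_pi_I_mul_I_le hc hX x
  calc ‖I X c x‖ = |x| * ‖I X c x‖ / |x| := by field_simp
    _ ≤ (c + 1) * (2 ^ (c - 1) * (X / X ^ c)) / |x| := by gcongr
    _ = (c + 1) * 2 ^ (c - 1) * (X / (|x| * X ^ c)) := by field_simp

lemma cofactors_one (X : ℝ) : cofactors X 1 = Finset.Ioc ⌊X / 2⌋₊ ⌊X⌋₊ := by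
  ext n
  simp [cofactors]

lemma norm_sum_vonMangoldt_phase_sub_S_le {X : ℝ} (hX : 1 ≤ X) (c x : ℝ) :
    ‖∑ n ∈ cofactors X 1, (Λ n : ℂ) * phase c x n - S X c x‖ ≤ 2 * √X * log X := by
  have hprime : S X c x =
      ∑ n ∈ Finset.Ioc ⌊X / 2⌋₊ ⌊X⌋₊ with n.Prime, (Λ n : ℂ) * phase c x n := by
    rw [S_eq_sum_Ioc (by linarith)]
    refine Finset.sum_congr rfl fun p hp ↦ ?_
    rw [ArithmeticFunction.vonMangoldt_apply_prime (Finset.mem_filter.1 hp).2, phase, mul_comm x]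
  rw [hprime, cofactors_one, ← Finset.sum_filter_add_sum_filter_not _ Nat.Prime,
    add_sub_cancel_left]
  calc _ ≤ ∑ n ∈ Finset.Ioc ⌊X / 2⌋₊ ⌊X⌋₊ with ¬n.Prime, Λ n :=
        norm_sum_le_of_le _ fun n _ ↦ by
          rw [norm_mul, norm_phase, mul_one, Complex.norm_real,
            norm_of_nonneg ArithmeticFunction.vonMangoldt_nonneg]
    _ ≤ ∑ n ∈ Finset.Ioc 0 ⌊X⌋₊ with ¬n.Prime, Λ n :=
        Finset.sum_le_sum_of_subset_of_nonneg
          (Finset.filter_subset_filter _ (Finset.Ioc_subset_Ioc_left (Nat.zero_le _)))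
          fun _ _ _ ↦ ArithmeticFunction.vonMangoldt_nonneg
    _ = ψ X - θ X := (psi_sub_theta_eq_sum_not_prime X).symm
    _ ≤ 2 * √X * log X := psi_sub_theta_le hX

end PrimeExpSum

/-! ## The two ranges of `|x| * X ^ c` -/

namespace PrimeExpSum

open Set Real Filter Asymptotics
open scoped ArithmeticFunction.vonMangoldt

section LargePhase

variable {X T η : ℝ}

lemma sq_rpow_neg_div_eight (hX : 0 ≤ X) (η : ℝ) : (X ^ (-(η / 8))) ^ 2 = X ^ (-(η / 4)) := by
  rw [← rpow_mul_natCast hX]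
  congr 1
  push_cast
  ring

lemma sq_rpow_neg_one_fourth (hT : 0 ≤ T) : (T ^ (-(1 / 4) : ℝ)) ^ 2 = 1 / √T := by
  rw [← rpow_mul_natCast hT, sqrt_eq_rpow, one_div (T ^ (1 / 2 : ℝ)), ← rpow_neg hT]
  congr 1
  norm_num

lemma sqrt_one_div_add_div_add_one_div_le (hX : 1 ≤ X) (hT : 1 ≤ T) (hTX : T ≤ X ^ (1 - η)) :
    √(1 / X ^ (η / 4) + √T / X ^ (1 / 2 - η / 4) + 1 / √T) ≤
      2 * (X ^ (-(η / 8)) + T ^ (-(1 / 4) : ℝ)) := by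
  have hX0 : 0 < X := by linarith
  have hT0 : 0 < T := by linarith
  have hu : 1 / X ^ (η / 4) = X ^ (-(η / 4)) := by rw [rpow_neg hX0.le, one_div]
  have hv : √T / X ^ (1 / 2 - η / 4) ≤ X ^ (-(η / 4)) :=
    calc √T / X ^ (1 / 2 - η / 4) ≤ √(X ^ (1 - η)) / X ^ (1 / 2 - η / 4) := by gcongr
      _ = X ^ (-(η / 4)) := by
          rw [sqrt_eq_rpow, ← rpow_mul hX0.le, ← rpow_sub hX0]
          ring_nf
  apply sqrt_le_iff.2 ⟨by positivity, ?_⟩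
  rw [hu, ← sq_rpow_neg_one_fourth hT0.le]
  rw [← sq_rpow_neg_div_eight hX0.le] at hv ⊢
  have _hq : 0 < X ^ (-(η / 8)) := by positivity
  have _ht : 0 < T ^ (-(1 / 4) : ℝ) := by positivity
  nlinarith [mul_pos _hq _ht]

lemma sqrt_mul_sqrt_add_div_sqrt_add_le (hX : 1 ≤ X) (hη : 0 ≤ η) (hT : 1 ≤ T)
    (hTX : T ≤ X ^ (1 - η)) :
    √X * √T + X / √T + X * √(1 / X ^ (η / 4) + √T / X ^ (1 / 2 - η / 4) + 1 / √T) ≤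
      3 * X * (X ^ (-(η / 8)) + T ^ (-(1 / 4) : ℝ)) := by
  have hX0 : 0 < X := by linarith
  have hfst : √X * √T ≤ X * X ^ (-(η / 8)) :=
    calc √X * √T ≤ √X * √(X ^ (1 - η)) := by gcongr
      _ = X ^ (1 - η / 2) := by
          rw [← sqrt_mul hX0.le, mul_comm, ← rpow_add_one hX0.ne', sqrt_eq_rpow, ← rpow_mul hX0.le]
          ring_nf
      _ ≤ X ^ (1 + -(η / 8)) := rpow_le_rpow_of_exponent_le hX (by linarith)
      _ = X * X ^ (-(η / 8)) := by rw [rpow_add hX0, rpow_one]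
  have hsnd : X / √T ≤ X * T ^ (-(1 / 4) : ℝ) := by
    rw [← mul_one_div, ← sq_rpow_neg_one_fourth (by linarith)]
    gcongr
    exact pow_le_of_le_one (by positivity) (rpow_le_one_of_one_le_of_nonpos hT (by norm_num))
      two_ne_zero
  have hthd := mul_le_mul_of_nonneg_left
    (sqrt_one_div_add_div_add_one_div_le hX hT hTX) hX0.le
  linarith

lemma le_one_of_one_le_rpow_one_sub (hX : 1 < X) (h : 1 ≤ X ^ (1 - η)) : η ≤ 1 := by
  by_contra! hη
  exact (rpow_lt_one_of_one_lt_of_neg hX (by linarith)).not_ge h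

lemma exists_norm_sum_vonMangoldt_phase_le_of_le_rpow {c : ℝ} (hc : 1 < c) :
    ∃ C > 0, ∀ X x η : ℝ, 256 ≤ X → 0 ≤ η → 1 ≤ |x| * X ^ c → |x| * X ^ c ≤ X ^ (1 - η) →
      ‖∑ n ∈ cofactors X 1, (Λ n : ℂ) * phase c x n‖ ≤
        C * X * (log X ^ 2 * (X ^ (-(η / 8)) + (|x| * X ^ c) ^ (-(1 / 4) : ℝ))) := by
  obtain ⟨C, hC, hsum⟩ := exists_norm_sum_vonMangoldt_phase_le hc
  refine ⟨3 * C, by positivity, fun X x η hX hη hT hTX ↦ ?_⟩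
  have hX0 : 0 < X := by linarith
  have hη1 : η ≤ 1 := le_one_of_one_le_rpow_one_sub (by linarith) (hT.trans hTX)
  have hx : x ≠ 0 := by
    rintro rfl
    norm_num at hT
  have huv : X ^ (η / 4) * X ^ (1 / 2 - η / 4) = √X := by
    rw [← rpow_add hX0, add_sub_cancel, ← sqrt_eq_rpow]
  have hv : 4 ≤ X ^ (1 / 2 - η / 4) :=
    calc (4 : ℝ) = 256 ^ (1 / 4 : ℝ) := by
          rw [show (256 : ℝ) = 4 ^ 4 by norm_num, one_div]
          exact (pow_rpow_inv_natCast zero_le_four four_ne_zero).symm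
      _ ≤ X ^ (1 / 4 : ℝ) := by gcongr
      _ ≤ X ^ (1 / 2 - η / 4) := rpow_le_rpow_of_exponent_le (by linarith) (by linarith)
  have huvX : 2 * (X ^ (η / 4) * X ^ (1 / 2 - η / 4)) ≤ X := by
    rw [huv]
    nlinarith [mul_self_sqrt hX0.le, (le_sqrt' two_pos).2 (by linarith : (2 : ℝ) ^ 2 ≤ X)]
  calc ‖∑ n ∈ cofactors X 1, (Λ n : ℂ) * phase c x n‖
      ≤ C * log X ^ 2 * _ := hsum X x _ _ (by linarith) hx
        (one_le_rpow (by linarith) (by linarith)) hv huvX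
    _ ≤ C * log X ^ 2 *
          (3 * X * (X ^ (-(η / 8)) + (|x| * X ^ c) ^ (-(1 / 4) : ℝ))) := by
        rw [huv]
        gcongr
        exact sqrt_mul_sqrt_add_div_sqrt_add_le (by linarith) hη hT hTX
    _ = _ := by ring

lemma exists_norm_S_sub_I_le_of_le_rpow {c : ℝ} (hc : 1 < c) :
    ∃ C > 0, ∀ X x η : ℝ, 256 ≤ X → 0 ≤ η → 1 ≤ |x| * X ^ c → |x| * X ^ c ≤ X ^ (1 - η) →
      ‖S X c x - I X c x‖ ≤
        C * X * (log X ^ 2 * (X ^ (-(η / 8)) + (|x| * X ^ c) ^ (-(1 / 4) : ℝ))) := by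
  obtain ⟨C, hC, hsum⟩ := exists_norm_sum_vonMangoldt_phase_le_of_le_rpow hc
  obtain ⟨K, hK, hI⟩ := exists_norm_I_le hc
  refine ⟨C + 2 + K, by positivity, fun X x η hX hη hT hTX ↦ ?_⟩
  have hX0 : 0 < X := by linarith
  have hη1 : η ≤ 1 := le_one_of_one_le_rpow_one_sub (by linarith) (hT.trans hTX)
  have hx : x ≠ 0 := by
    rintro rfl
    norm_num at hT
  have hlog : 1 ≤ log X := one_le_log_of_three_le (by linarith)
  have hpowers : 2 * √X * log X ≤ 2 * X * (log X ^ 2 * X ^ (-(η / 8))) :=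
    calc 2 * √X * log X ≤ 2 * X ^ (1 + -(η / 8)) * log X ^ 2 := by
          rw [sqrt_eq_rpow]
          gcongr 2 * ?_ * ?_
          · exact rpow_le_rpow_of_exponent_le (by linarith) (by linarith)
          · exact le_self_pow₀ hlog two_ne_zero
      _ = 2 * X * (log X ^ 2 * X ^ (-(η / 8))) := by
          rw [rpow_add hX0, rpow_one]
          ring
  have hint : K * (X / (|x| * X ^ c)) ≤ K * X * (log X ^ 2 * (|x| * X ^ c) ^ (-(1 / 4) : ℝ)) := by
    rw [mul_assoc, div_eq_mul_inv, ← rpow_neg_one]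
    gcongr
    rw [← one_mul ((|x| * X ^ c) ^ (-1 : ℝ))]
    gcongr
    · exact one_le_pow₀ hlog
    · norm_num
  set q := X ^ (-(η / 8))
  set t := (|x| * X ^ c) ^ (-(1 / 4) : ℝ)
  have hq : 0 ≤ X * (log X ^ 2 * q) := by positivity
  have ht : 0 ≤ X * (log X ^ 2 * t) := by positivity
  calc ‖S X c x - I X c x‖
      = ‖∑ n ∈ cofactors X 1, (Λ n : ℂ) * phase c x n
          - (∑ n ∈ cofactors X 1, (Λ n : ℂ) * phase c x n - S X c x) - I X c x‖ := by
        rw [sub_sub_cancel]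
    _ ≤ C * X * (log X ^ 2 * (q + t)) + 2 * √X * log X + K * (X / (|x| * X ^ c)) :=
        (norm_sub_le_of_le (norm_sub_le_of_le (hsum X x η hX hη hT hTX)
          (norm_sum_vonMangoldt_phase_sub_S_le (by linarith) c x)) (hI X x hX0 hx))
    _ ≤ (C + 2 + K) * X * (log X ^ 2 * (q + t)) := by
        nlinarith [mul_nonneg hK.le hq]

end LargePhase

section Comparison

lemma eventually_rpow_le_const_mul_rpow {a b ε : ℝ} (hab : a < b) (hε : 0 < ε) :
    ∀ᶠ y : ℝ in atTop, y ^ a ≤ ε * y ^ b := by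
  filter_upwards [(tendsto_rpow_atTop (sub_pos.2 hab)).eventually_ge_atTop ε⁻¹,
    eventually_gt_atTop 0] with y hy hy0
  calc y ^ a = ε * (ε⁻¹ * y ^ a) := by field_simp
    _ ≤ ε * (y ^ (b - a) * y ^ a) := by gcongr
    _ = ε * y ^ b := by rw [← rpow_add hy0, sub_add_cancel]

lemma eventually_exp_neg_mul_sqrt_mul_le {ν : ℝ} (hν : 0 < ν) :
    ∀ᶠ y : ℝ in atTop,
      exp (-(ν * √y)) * (1 + exp (y ^ (1 / 4 : ℝ))) ≤ 2 * exp (-y ^ (1 / 5 : ℝ)) := by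
  filter_upwards [eventually_rpow_le_const_mul_rpow (a := 1 / 4) (b := 1 / 2)
      (by norm_num) (half_pos hν),
    eventually_rpow_le_const_mul_rpow (a := 1 / 5) (b := 1 / 2) (by norm_num) (half_pos hν),
    eventually_ge_atTop 0] with y h4 h5 hy
  rw [← sqrt_eq_rpow] at h4 h5
  have hfst : exp (-(ν * √y)) ≤ exp (-y ^ (1 / 5 : ℝ)) :=
    exp_le_exp.2 (by linarith [mul_nonneg hν.le (sqrt_nonneg y)])
  have hsnd : exp (-(ν * √y)) * exp (y ^ (1 / 4 : ℝ)) ≤ exp (-y ^ (1 / 5 : ℝ)) := by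
    rw [← exp_add]
    exact exp_le_exp.2 (by linarith)
  linarith

lemma eventually_sq_le_exp_mul_rpow {a ε : ℝ} (ha : 0 < a) (hε : 0 < ε) :
    ∀ᶠ y : ℝ in atTop, y ^ 2 ≤ exp (ε * y ^ a) := by
  filter_upwards [(isLittleO_log_rpow_atTop ha).bound (half_pos hε), eventually_ge_atTop 1]
    with y hlog hy
  rw [norm_of_nonneg (log_nonneg hy), norm_of_nonneg (by positivity)] at hlog
  rw [← log_le_iff_le_exp (by positivity), log_pow]
  push_cast
  linarith

lemma eventually_sq_mul_exp_neg_add_exp_neg_le {η : ℝ} (hη : 0 < η) :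
    ∀ᶠ y : ℝ in atTop,
      y ^ 2 * (exp (-(η / 8 * y)) + exp (-(y ^ (1 / 4 : ℝ) / 4))) ≤
        2 * exp (-y ^ (1 / 5 : ℝ)) := by
  filter_upwards [eventually_sq_le_exp_mul_rpow (a := 1 / 4) (ε := 1 / 8)
      (by norm_num) (by norm_num),
    eventually_rpow_le_const_mul_rpow (a := 1 / 5) (b := 1 / 4) (ε := 1 / 8)
      (by norm_num) (by norm_num),
    eventually_rpow_le_const_mul_rpow (a := 1 / 4) (b := 1) (ε := η / 2)
      (by norm_num) (by positivity)] with y hsq h5 h4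
  rw [rpow_one] at h4
  calc y ^ 2 * (exp (-(η / 8 * y)) + exp (-(y ^ (1 / 4 : ℝ) / 4)))
      ≤ exp (1 / 8 * y ^ (1 / 4 : ℝ)) *
          (exp (-(y ^ (1 / 4 : ℝ) / 4)) + exp (-(y ^ (1 / 4 : ℝ) / 4))) := by
        gcongr
        linarith
    _ = 2 * exp (1 / 8 * y ^ (1 / 4 : ℝ) + -(y ^ (1 / 4 : ℝ) / 4)) := by
        rw [exp_add]
        ring
    _ ≤ 2 * exp (-y ^ (1 / 5 : ℝ)) := by
        gcongr
        linarith

end Comparison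

lemma exists_eventually_norm_S_sub_I_le_of_le_exp {c : ℝ} (hc : 1 < c) :
    ∃ C > 0, ∀ᶠ X in atTop, ∀ x, |x| * X ^ c ≤ exp (log X ^ (1 / 4 : ℝ)) →
      ‖S X c x - I X c x‖ ≤ C * X * exp (-log X ^ (1 / 5 : ℝ)) := by
  obtain ⟨ν, hν, C, hC, hbound⟩ := exists_norm_S_sub_I_le hc
  refine ⟨C * 2, by positivity, ?_⟩
  filter_upwards [hbound, tendsto_log_atTop.eventually (eventually_exp_neg_mul_sqrt_mul_le hν),
    eventually_ge_atTop 0] with X hX hcomp hX0 x hx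
  calc ‖S X c x - I X c x‖
      ≤ C * X * (exp (-(ν * √(log X))) * (1 + |x| * X ^ c)) := hX x
    _ ≤ C * X * (exp (-(ν * √(log X))) * (1 + exp (log X ^ (1 / 4 : ℝ)))) := by gcongr
    _ ≤ C * X * (2 * exp (-log X ^ (1 / 5 : ℝ))) := by gcongr
    _ = C * 2 * X * exp (-log X ^ (1 / 5 : ℝ)) := by ring

lemma exists_eventually_norm_S_sub_I_le_of_exp_le {c η : ℝ} (hc : 1 < c) (hη : 0 < η) :
    ∃ C > 0, ∀ᶠ X in atTop, ∀ x, exp (log X ^ (1 / 4 : ℝ)) ≤ |x| * X ^ c →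
      |x| * X ^ c ≤ X ^ (1 - η) →
        ‖S X c x - I X c x‖ ≤ C * X * exp (-log X ^ (1 / 5 : ℝ)) := by
  obtain ⟨C, hC, hbound⟩ := exists_norm_S_sub_I_le_of_le_rpow hc
  refine ⟨C * 2, by positivity, ?_⟩
  filter_upwards [eventually_ge_atTop 256,
    tendsto_log_atTop.eventually (eventually_sq_mul_exp_neg_add_exp_neg_le hη)]
    with X hX hcomp x hx hxX
  have hX0 : 0 < X := by linarith
  have hT : 1 ≤ |x| * X ^ c :=
    (one_le_exp (rpow_nonneg (log_nonneg (by linarith)) _)).trans hx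
  have hq : X ^ (-(η / 8)) = exp (-(η / 8 * log X)) := by
    rw [rpow_def_of_pos hX0]
    ring_nf
  have ht : (|x| * X ^ c) ^ (-(1 / 4) : ℝ) ≤ exp (-(log X ^ (1 / 4 : ℝ) / 4)) :=
    calc (|x| * X ^ c) ^ (-(1 / 4) : ℝ) ≤ exp (log X ^ (1 / 4 : ℝ)) ^ (-(1 / 4) : ℝ) :=
          rpow_le_rpow_of_nonpos (exp_pos _) hx (by norm_num)
      _ = exp (-(log X ^ (1 / 4 : ℝ) / 4)) := by
          rw [← exp_mul]
          ring_nf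
  calc ‖S X c x - I X c x‖
      ≤ C * X * (log X ^ 2 * (X ^ (-(η / 8)) + (|x| * X ^ c) ^ (-(1 / 4) : ℝ))) :=
        hbound X x η hX hη.le hT hxX
    _ ≤ C * X * (log X ^ 2 * (exp (-(η / 8 * log X)) + exp (-(log X ^ (1 / 4 : ℝ) / 4)))) := by
        rw [hq]
        gcongr
    _ ≤ C * X * (2 * exp (-log X ^ (1 / 5 : ℝ))) := by gcongr
    _ = C * 2 * X * exp (-log X ^ (1 / 5 : ℝ)) := by ring

end PrimeExpSum

open PrimeExpSum Filter in
theorem stmt10_general {c η : ℝ} (hc : 1 < c) (hη : 0 < η) :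
    ∃ C > 0, ∃ X₀ : ℝ, ∀ X ≥ X₀, ∀ x : ℝ, |x| ≤ X ^ (1 - c - η) →
      ‖S X c x - I X c x‖ ≤ C * X * Real.exp (-(Real.log X) ^ ((1 : ℝ) / 5)) := by
  obtain ⟨C, hC, hsmall⟩ := exists_eventually_norm_S_sub_I_le_of_le_exp hc
  obtain ⟨K, -, hlarge⟩ := exists_eventually_norm_S_sub_I_le_of_exp_le hc hη
  refine ⟨max C K, lt_max_of_lt_left hC, eventually_atTop.1 ?_⟩
  filter_upwards [hsmall, hlarge, eventually_gt_atTop 0] with X hsmall hlarge hX x hx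
  have hxX : |x| * X ^ c ≤ X ^ (1 - η) :=
    calc |x| * X ^ c ≤ X ^ (1 - c - η) * X ^ c := by gcongr
      _ = X ^ (1 - η) := by
          rw [← Real.rpow_add hX]
          ring_nf
  obtain hT | hT := le_total (|x| * X ^ c) (Real.exp (Real.log X ^ (1 / 4 : ℝ)))
  · exact (hsmall x hT).trans (by gcongr; exact le_max_left C K)
  · exact (hlarge x hT hxX).trans (by gcongr; exact le_max_right C K)

/-- Lemma 2.8: for `1 < c < 37/18`, `c ≠ 2`, sufficiently small `η > 0`
and sufficiently large `X`, with `τ = X^{1−c−η}`, for every `|x| ≤ τ` one has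
`S(x) = I(x) + O_{c,η}(X exp(−(log X)^{1/5}))`. -/
theorem stmt10 (c : ℝ) (hc1 : 1 < c) (hc2 : c < 37 / 18) (hc3 : c ≠ 2) :
    ∃ η₀ > 0, ∀ η : ℝ, 0 < η → η < η₀ →
    ∃ C > 0, ∃ X₀ : ℝ, ∀ X ≥ X₀, ∀ τ : ℝ, τ = X ^ (1 - c - η) →
      ∀ x : ℝ, |x| ≤ τ →
        ‖S X c x - I X c x‖ ≤ C * X * Real.exp (-(Real.log X) ^ ((1 : ℝ) / 5)) := by
  refine ⟨1, one_pos, fun η hη _ ↦ ?_⟩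
  obtain ⟨C, hC, X₀, h⟩ := stmt10_general hc1 hη
  exact ⟨C, hC, X₀, fun X hX τ hτ x hx ↦ h X hX x (hx.trans_eq hτ)⟩
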